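/- arXiv:1807.09653 — 3 statements merged into one kernel-verified Lean document; each statement's English description precedes it below -/
import Mathlib

section
/- Assume the matrices I + Δ_r(x)/2 and I − Δ_r(x)/2 are invertible for every x ∈ (a,b). Then the set S of balanced solutions of the homogeneous equation u' = ru on (a,b) (i.e., g = 0) is a complex vector space and, for any fixed x0 ∈ (a,b), the evaluation map S → ℂⁿ, u ↦ u(x0), is a linear bijection; in particular S is an n-dimensional vector space. -/
/-!
For a balanced function the one-sided limits can be eliminated. If `f = M u`, the integral equation
forces `u⁺(x) - u⁻(x) = ν({x}) f(x)`, so `u⁻ = u - ν({x}) f(x) / 2`, and the equation over `[c, d)`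
becomes the *symmetric* integral equation

`u(d) - u(c) = (1 / 2) (∫_{[c, d)} f dν + ∫_{(c, d]} f dν)`.

Conversely every solution of the symmetric equation is balanced and of locally bounded variation, so
that the two notions coincide (`isBalancedSolution_iff`). The symmetric equation is clearly
linear, and invariant under the reflection `t ↦ -t` with `M` replaced by `-M(-t)`, which exchanges
`1 + Δ/2` and `1 - Δ/2`. It therefore suffices to solve it uniquely to the right of `x₀`.

There, separating the half-atoms at the two endpoints gives
`(1 - Δ(d)/2) u(d) = (1 + Δ(x₀)/2) u(x₀) + ∫_{(x₀, d)} M u dν`,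
and inverting `1 - Δ(d)/2` gives a fixed point equation `u = resolv p + volterra u`. The inverses are
bounded on compact intervals, because all but finitely many jumps are small. The operator `volterra`
halves a suitable weighted sup-norm (`enorm_volterra_le`), where the exponential weight of the
classical argument is replaced by a factorial of the mass of `(x₀, t)`; this is needed as the
measure may have large atoms (`lintegral_weight_le`). Hence the Neumann series converges
(`exists_fixed`) and homogeneous solutions vanish (`eq_zero_of_volterra_fixed`). The argument is
carried out over a finite-dimensional real normed space, to which `ℂⁿ` is specialised at the end.
-/

open MeasureTheory Filter Function

/-- A function `u : (a,b) → ℂⁿ` is *balanced* if at every point of `(a,b)` it has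
one-sided limits from the left and from the right and its value is their average. -/
def IsBalancedOn {n : ℕ} (u : ℝ → Fin n → ℂ) (a b : ℝ) : Prop :=
  ∀ x ∈ Set.Ioo a b,
    Tendsto u (nhdsWithin x (Set.Iio x)) (nhds (leftLim u x)) ∧
    Tendsto u (nhdsWithin x (Set.Ioi x)) (nhds (rightLim u x)) ∧
    u x = (leftLim u x + rightLim u x) / 2

/-- A *balanced solution* of `u' = r u + g dν` on `(a,b)` (with `r = M dν`). -/
def IsBalancedSolution {n : ℕ} (a b : ℝ) (ν : Measure ℝ)
    (M : ℝ → Matrix (Fin n) (Fin n) ℂ) (g : ℝ → Fin n → ℂ) (u : ℝ → Fin n → ℂ) : Prop :=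
  LocallyBoundedVariationOn u (Set.Ioo a b) ∧ IsBalancedOn u a b ∧
    ∀ c d : ℝ, a < c → c ≤ d → d < b →
      leftLim u d - leftLim u c = ∫ t in Set.Ico c d, ((M t).mulVec (u t) + g t) ∂ν

namespace BalancedODE

/-! ### A factorial weight -/

/-- If `[t, d)` has mass at most `c` for every `t ∈ S`, then so has `S`: either `S` contains its
infimum, or it is covered by the intervals `[t, d)` for a sequence of points `t` of `S` decreasing
to the infimum. -/
lemma measure_le_of_Ico_le (μ : Measure ℝ) (x₀ d : ℝ) (S : Set ℝ) (hS : S ⊆ Set.Ioo x₀ d)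
    (c : ENNReal) (h : ∀ t ∈ S, μ (Set.Ico t d) ≤ c) : μ S ≤ c := by
  rcases S.eq_empty_or_nonempty with rfl | hne
  · simp
  have hbd : BddBelow S := ⟨x₀, fun s hs => (hS hs).1.le⟩
  by_cases hb : sInf S ∈ S
  · exact (measure_mono (show S ⊆ Set.Ico (sInf S) d from fun s hs' =>
      ⟨csInf_le hbd hs', (hS hs').2⟩)).trans (h _ hb)
  · obtain ⟨v, hv, hlim, hvS⟩ := exists_seq_tendsto_sInf hne hbd
    have hsub : S ⊆ ⋃ n, Set.Ico (v n) d := fun s hs => by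
      have : sInf S < s := lt_of_le_of_ne (csInf_le hbd hs) fun e => hb (e ▸ hs)
      obtain ⟨n, hn⟩ := (hlim.eventually (gt_mem_nhds this)).exists
      exact Set.mem_iUnion.2 ⟨n, hn.le, (hS hs).2⟩
    have hmono : Monotone fun n => Set.Ico (v n) d := fun i j hij =>
      Set.Ico_subset_Ico_left (hv hij)
    refine (measure_mono hsub).trans ?_
    rw [hmono.measure_iUnion]
    exact iSup_le fun n => h _ (hvS n)

/-- The weight `(⌊4 μ(x₀, t)⌋ + 1)!`. It plays the role of `exp (C μ(x₀, t))` in the usual weighted-norm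
proof of the Picard-Lindelöf theorem, but grows fast enough to cope with atoms of `μ`. Only used
where `μ(x₀, t)` is finite, so that `toReal` loses nothing. -/
noncomputable def weight (μ : Measure ℝ) (x₀ t : ℝ) : ENNReal :=
  ((⌊4 * (μ (Set.Ioo x₀ t)).toReal⌋₊ + 1).factorial : ℕ)

lemma one_le_weight (μ : Measure ℝ) (x₀ t : ℝ) : 1 ≤ weight μ x₀ t := by
  unfold weight
  exact_mod_cast Nat.one_le_iff_ne_zero.2 (Nat.factorial_ne_zero _)

lemma weight_ne_top (μ : Measure ℝ) (x₀ t : ℝ) : weight μ x₀ t ≠ ⊤ :=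
  ENNReal.natCast_ne_top _

/-- Integrating the weight against `μ = h dν` over `(x₀, d)` costs a factor `1 / 2`. With
`k = ⌊4 μ(x₀, d)⌋`, the points `t` at which the floor has already reached `k` have mass at most
`1 / 4` and carry the weight `(k + 1)!`; the others have weight at most `k!` and total mass at most
`(k + 1) / 4`. Each part contributes at most `(k + 1)! / 4`. -/
lemma lintegral_weight_le (ν : Measure ℝ) (h : ℝ → ENNReal) (x₀ d : ℝ)
    (hfin : ∫⁻ t in Set.Ioo x₀ d, h t ∂ν ≠ ⊤) :
    ∫⁻ t in Set.Ioo x₀ d, h t * weight (ν.withDensity h) x₀ t ∂ν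
      ≤ weight (ν.withDensity h) x₀ d / 2 := by
  set μ := ν.withDensity h with hμ
  have hμI : ∀ s, MeasurableSet s → μ s = ∫⁻ t in s, h t ∂ν := fun s hs => withDensity_apply _ hs
  have hd : μ (Set.Ioo x₀ d) ≠ ⊤ := by rwa [hμI _ measurableSet_Ioo]
  have hmono : ∀ s t, s ≤ t → t ≤ d → (μ (Set.Ioo x₀ s)).toReal ≤ (μ (Set.Ioo x₀ t)).toReal :=
    fun s t hst htd => ENNReal.toReal_mono
      (ne_top_of_le_ne_top hd (measure_mono (Set.Ioo_subset_Ioo_right htd)))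
      (measure_mono (Set.Ioo_subset_Ioo_right hst))
  set k : ℝ → ℕ := fun t => ⌊4 * (μ (Set.Ioo x₀ t)).toReal⌋₊ with hk
  have hkmono : ∀ s t, s ≤ t → t ≤ d → k s ≤ k t := fun s t hst htd =>
    Nat.floor_mono (by linarith [hmono s t hst htd])
  have hw : ∀ t, weight μ x₀ t = ((k t + 1).factorial : ℕ) := fun t => rfl
  -- The top level of the floor; off this set the factorial drops by the factor `k d + 1`.
  set S : Set ℝ := {t | t ∈ Set.Ioo x₀ d ∧ k d ≤ k t} with hS
  have hSsub : S ⊆ Set.Ioo x₀ d := fun t ht => ht.1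
  have hSm : MeasurableSet S := by
    refine Set.OrdConnected.measurableSet ⟨fun s hs t ht z hz => ⟨⟨hs.1.1.trans_le hz.1,
      hz.2.trans_lt ht.1.2⟩, hs.2.trans (hkmono _ _ hz.1 (hz.2.trans ht.1.2.le))⟩⟩
  have hSmass : μ S ≤ 1 / 4 := by
    refine measure_le_of_Ico_le μ x₀ d S hSsub _ fun t ht => ?_
    have hU : Set.Ioo x₀ d = Set.Ioo x₀ t ∪ Set.Ico t d :=
      (Set.Ioo_union_Ico_eq_Ioo ht.1.1 ht.1.2.le).symm
    have hadd : μ (Set.Ioo x₀ d) = μ (Set.Ioo x₀ t) + μ (Set.Ico t d) := by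
      rw [hU, measure_union _ measurableSet_Ico]
      exact Set.disjoint_left.2 fun z hz hz' => absurd hz.2 (not_lt.2 hz'.1)
    have h1 : μ (Set.Ioo x₀ t) ≠ ⊤ := by
      intro e; rw [e, top_add] at hadd; exact hd hadd
    have h2 : μ (Set.Ico t d) ≠ ⊤ := by
      intro e; rw [e, add_top] at hadd; exact hd hadd
    have hreal := congrArg ENNReal.toReal hadd
    rw [ENNReal.toReal_add h1 h2] at hreal
    have hf1 : (k d : ℝ) ≤ 4 * (μ (Set.Ioo x₀ t)).toReal :=
      (Nat.cast_le.2 ht.2).trans (Nat.floor_le (by positivity))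
    have hf2 : 4 * (μ (Set.Ioo x₀ d)).toReal < k d + 1 := Nat.lt_floor_add_one _
    rw [← ENNReal.ofReal_toReal h2]
    have : (1 / 4 : ENNReal) = ENNReal.ofReal (1 / 4) := by
      rw [ENNReal.ofReal_div_of_pos (by norm_num)]; simp
    rw [this]
    exact ENNReal.ofReal_le_ofReal (by linarith)
  have hdmass : μ (Set.Ioo x₀ d) ≤ (k d + 1 : ℕ) / 4 := by
    have hf2 : 4 * (μ (Set.Ioo x₀ d)).toReal < k d + 1 := Nat.lt_floor_add_one _
    rw [← ENNReal.ofReal_toReal hd]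
    have : ((k d + 1 : ℕ) / 4 : ENNReal) = ENNReal.ofReal ((k d + 1 : ℕ) / 4) := by
      rw [ENNReal.ofReal_div_of_pos (by norm_num), ENNReal.ofReal_natCast]; simp
    rw [this]
    exact ENNReal.ofReal_le_ofReal (by push_cast; linarith)
  have hpart1 : ∫⁻ t in S, h t * weight μ x₀ t ∂ν ≤ ((k d + 1).factorial : ℕ) * (1 / 4) := by
    calc ∫⁻ t in S, h t * weight μ x₀ t ∂ν
        ≤ ∫⁻ t in S, ((k d + 1).factorial : ℕ) * h t ∂ν := by
          refine setLIntegral_mono' hSm fun t ht => ?_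
          rw [mul_comm, hw]
          gcongr
          exact hkmono t d ht.1.2.le le_rfl
      _ = ((k d + 1).factorial : ℕ) * μ S := by
          rw [lintegral_const_mul' _ _ (ENNReal.natCast_ne_top _), hμI _ hSm]
      _ ≤ _ := by gcongr
  have hpart2 : ∫⁻ t in Set.Ioo x₀ d \ S, h t * weight μ x₀ t ∂ν
      ≤ ((k d).factorial : ℕ) * ((k d + 1 : ℕ) / 4) := by
    have hm : MeasurableSet (Set.Ioo x₀ d \ S) := measurableSet_Ioo.diff hSm
    calc ∫⁻ t in Set.Ioo x₀ d \ S, h t * weight μ x₀ t ∂ν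
        ≤ ∫⁻ t in Set.Ioo x₀ d \ S, ((k d).factorial : ℕ) * h t ∂ν := by
          refine setLIntegral_mono' hm fun t ht => ?_
          have : k t < k d := by
            by_contra hcon
            exact ht.2 ⟨ht.1, not_lt.1 hcon⟩
          rw [mul_comm, hw]
          gcongr
          exact this
      _ = ((k d).factorial : ℕ) * μ (Set.Ioo x₀ d \ S) := by
          rw [lintegral_const_mul' _ _ (ENNReal.natCast_ne_top _), hμI _ hm]
      _ ≤ _ := by
          gcongr
          exact (measure_mono Set.sdiff_subset).trans hdmass
  have hfact : ((k d).factorial : ENNReal) * ((k d + 1 : ℕ) / 4)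
      = ((k d + 1).factorial : ℕ) * (1 / 4) := by
    rw [Nat.factorial_succ]
    push_cast
    simp only [div_eq_mul_inv]
    ring
  calc ∫⁻ t in Set.Ioo x₀ d, h t * weight μ x₀ t ∂ν
      = ∫⁻ t in S ∪ (Set.Ioo x₀ d \ S), h t * weight μ x₀ t ∂ν := by
        rw [Set.union_sdiff_cancel hSsub]
    _ ≤ _ := (lintegral_union_le _ _ _).trans (add_le_add hpart1 (hpart2.trans hfact.le))
    _ = weight μ x₀ d / 2 := by
        rw [hw, ← mul_add, div_eq_mul_inv]
        congr 1
        rw [one_mul, ← two_mul, show (4 : ENNReal) = 2 * 2 by norm_num,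
          ENNReal.mul_inv (Or.inl (by simp)) (Or.inl (by simp)), ← mul_assoc,
          ENNReal.mul_inv_cancel (by simp) (by simp), one_mul]

/-! ### The Volterra operator is a contraction -/

section
variable {E : Type*} [NormedAddCommGroup E] [NormedSpace ℝ E]

/-- Half of the jump of the matrix measure `A dν` at `t`, that is `ν({t}) A(t) / 2`. -/
noncomputable def halfJump (ν : Measure ℝ) (A : ℝ → E →L[ℝ] E) (t : ℝ) : E →L[ℝ] E :=
  ((ν {t}).toReal / 2) • A t

/-- The inverse of `1 - halfJump ν A t`, with the value `0` where that operator is not invertible. -/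
noncomputable def resolv (ν : Measure ℝ) (A : ℝ → E →L[ℝ] E) (t : ℝ) : E →L[ℝ] E :=
  Ring.inverse (1 - halfJump ν A t)

/-- The density with respect to `ν` of the measure that controls the integral operator
`volterra`. -/
noncomputable def density (ν : Measure ℝ) (A : ℝ → E →L[ℝ] E) (t : ℝ) : ENNReal :=
  ‖A t‖ₑ * ‖resolv ν A t‖ₑ

/-- The pointwise majorant with respect to which `volterra` is a contraction: the weight of the
measure `density dν`, multiplied by the norm of the resolvent. -/
noncomputable def majorant (ν : Measure ℝ) (A : ℝ → E →L[ℝ] E) (x₀ t : ℝ) : ENNReal :=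
  ‖resolv ν A t‖ₑ * weight (ν.withDensity (density ν A)) x₀ t

/-- The integral operator `z ↦ (1 - halfJump)⁻¹ ∫_{(x₀, ·)} A z dν`. Only the open interval `(x₀, d)`
enters at `d`, the contribution of the atom at `d` being absorbed in the inverse. -/
noncomputable def volterra (ν : Measure ℝ) (A : ℝ → E →L[ℝ] E) (x₀ : ℝ) (z : ℝ → E) (d : ℝ) : E :=
  resolv ν A d (∫ t in Set.Ioo x₀ d, A t (z t) ∂ν)

lemma majorant_ne_top (ν : Measure ℝ) (A : ℝ → E →L[ℝ] E) (x₀ t : ℝ) :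
    majorant ν A x₀ t ≠ ⊤ := ENNReal.mul_ne_top enorm_ne_top (weight_ne_top _ _ _)

/-- A function dominated by `majorant` has an integrable image under `A`, with an explicit bound. -/
lemma lintegral_le_of_majorant {ν : Measure ℝ} {A : ℝ → E →L[ℝ] E} {x₀ d : ℝ}
    (hfin : ∫⁻ t in Set.Ioo x₀ d, density ν A t ∂ν ≠ ⊤) {z : ℝ → E} {c : ENNReal} (hc : c ≠ ⊤)
    (hz : ∀ t ∈ Set.Ioo x₀ d, ‖z t‖ₑ ≤ c * majorant ν A x₀ t) :
    ∫⁻ t in Set.Ioo x₀ d, ‖A t (z t)‖ₑ ∂ν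
      ≤ c * (weight (ν.withDensity (density ν A)) x₀ d / 2) := by
  calc ∫⁻ t in Set.Ioo x₀ d, ‖A t (z t)‖ₑ ∂ν
      ≤ ∫⁻ t in Set.Ioo x₀ d, c *
          (density ν A t * weight (ν.withDensity (density ν A)) x₀ t) ∂ν := by
        refine setLIntegral_mono' measurableSet_Ioo fun t ht => ?_
        refine ((A t).le_opENorm (z t)).trans ?_
        calc ‖A t‖ₑ * ‖z t‖ₑ ≤ ‖A t‖ₑ * (c * majorant ν A x₀ t) := by gcongr; exact hz t ht
          _ = _ := by unfold majorant density; ring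
    _ = c * ∫⁻ t in Set.Ioo x₀ d,
          (density ν A t * weight (ν.withDensity (density ν A)) x₀ t) ∂ν :=
        lintegral_const_mul' _ _ hc
    _ ≤ _ := by gcongr; exact lintegral_weight_le ν _ x₀ d hfin

/-- `volterra` halves the norm weighted by `majorant`. -/
lemma enorm_volterra_le {ν : Measure ℝ} {A : ℝ → E →L[ℝ] E} {x₀ d : ℝ}
    (hfin : ∫⁻ t in Set.Ioo x₀ d, density ν A t ∂ν ≠ ⊤) {z : ℝ → E} {c : ENNReal} (hc : c ≠ ⊤)
    (hz : ∀ t ∈ Set.Ioo x₀ d, ‖z t‖ₑ ≤ c * majorant ν A x₀ t) :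
    ‖volterra ν A x₀ z d‖ₑ ≤ c / 2 * majorant ν A x₀ d := by
  refine ((resolv ν A d).le_opENorm _).trans ?_
  calc _ ≤ ‖resolv ν A d‖ₑ * (c * (weight (ν.withDensity (density ν A)) x₀ d / 2)) := by
        gcongr
        exact (enorm_integral_le_lintegral_enorm _).trans (lintegral_le_of_majorant hfin hc hz)
    _ = _ := by unfold majorant; simp only [div_eq_mul_inv]; ring

/-- A solution of the homogeneous fixed point equation vanishes: it is bounded by a multiple of
`majorant`, and each use of `enorm_volterra_le` halves that multiple. -/
lemma eq_zero_of_volterra_fixed {ν : Measure ℝ} {A : ℝ → E →L[ℝ] E} {x₀ d : ℝ}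
    (hfin : ∫⁻ t in Set.Ioo x₀ d, density ν A t ∂ν ≠ ⊤) {z : ℝ → E}
    (hz : ∀ t ∈ Set.Ioc x₀ d, z t = volterra ν A x₀ z t)
    (hint : IntegrableOn (fun t => A t (z t)) (Set.Ioo x₀ d) ν) :
    ∀ t ∈ Set.Ioc x₀ d, z t = 0 := by
  set c := ∫⁻ t in Set.Ioo x₀ d, ‖A t (z t)‖ₑ ∂ν with hc
  have hcfin : c ≠ ⊤ := hint.2.ne
  have key : ∀ k : ℕ, ∀ t ∈ Set.Ioc x₀ d, ‖z t‖ₑ ≤ c * (1 / 2) ^ k * majorant ν A x₀ t := by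
    intro k
    induction k with
    | zero =>
      intro t ht
      rw [hz t ht]
      refine ((resolv ν A t).le_opENorm _).trans ?_
      have h1 : ‖∫ s in Set.Ioo x₀ t, A s (z s) ∂ν‖ₑ ≤ c :=
        (enorm_integral_le_lintegral_enorm _).trans
          (lintegral_mono_set (Set.Ioo_subset_Ioo_right ht.2))
      calc _ ≤ ‖resolv ν A t‖ₑ * c * 1 := by rw [mul_one]; gcongr
        _ ≤ ‖resolv ν A t‖ₑ * c * weight (ν.withDensity (density ν A)) x₀ t := by
          gcongr; exact one_le_weight _ _ _
        _ = _ := by unfold majorant; ring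
    | succ k ih =>
      intro t ht
      rw [hz t ht]
      have hfin' : ∫⁻ s in Set.Ioo x₀ t, density ν A s ∂ν ≠ ⊤ :=
        ne_top_of_le_ne_top hfin (lintegral_mono_set (Set.Ioo_subset_Ioo_right ht.2))
      refine (enorm_volterra_le hfin' (c := c * (1 / 2) ^ k) ?_ fun s hs =>
        ih s ⟨hs.1, hs.2.le.trans ht.2⟩).trans (le_of_eq ?_)
      · exact ENNReal.mul_ne_top hcfin (ENNReal.pow_ne_top (by simp))
      · simp only [div_eq_mul_inv]; ring
  intro t ht
  have hlim : Tendsto (fun k : ℕ => c * (1 / 2) ^ k * majorant ν A x₀ t) atTop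
      (nhds (c * 0 * majorant ν A x₀ t)) := by
    refine ENNReal.Tendsto.mul_const (ENNReal.Tendsto.const_mul ?_ (Or.inr hcfin))
      (Or.inr (majorant_ne_top _ _ _ _))
    exact ENNReal.tendsto_pow_atTop_nhds_zero_of_lt_one (by simp)
  have := ge_of_tendsto' hlim fun k => key k t ht
  simpa using this

end

/-! ### Neumann series -/

section
variable {E : Type*} [NormedAddCommGroup E] [NormedSpace ℝ E]

lemma norm_inverse_one_sub_le {J : E →L[ℝ] E} (hJ : ‖J‖ ≤ 1 / 2) :
    ‖Ring.inverse (1 - J)‖ ≤ 2 := by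
  by_cases h : IsUnit (1 - J)
  · have h1 : Ring.inverse (1 - J) = 1 + J * Ring.inverse (1 - J) := by
      have := Ring.mul_inverse_cancel _ h
      rw [sub_mul, one_mul] at this
      exact sub_eq_iff_eq_add.1 this
    have h2 : ‖Ring.inverse (1 - J)‖ ≤ 1 + 1 / 2 * ‖Ring.inverse (1 - J)‖ := by
      calc ‖Ring.inverse (1 - J)‖ = ‖1 + J * Ring.inverse (1 - J)‖ := by rw [← h1]
        _ ≤ ‖(1 : E →L[ℝ] E)‖ + ‖J * Ring.inverse (1 - J)‖ := norm_add_le _ _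
        _ ≤ 1 + 1 / 2 * ‖Ring.inverse (1 - J)‖ := by
          gcongr
          · exact ContinuousLinearMap.norm_id_le
          · exact (norm_mul_le _ _).trans (by gcongr)
    linarith
  · rw [Ring.inverse_non_unit _ h]; simp

/-- The resolvent is bounded on compact intervals: only finitely many atoms satisfy
`1 / 2 < ‖halfJump ν A t‖`, and elsewhere the bound is `2`. -/
lemma exists_enorm_resolv_le {ν : Measure ℝ} {A : ℝ → E →L[ℝ] E} {c d : ℝ}
    (hν : ν (Set.Icc c d) < ⊤) (hA : IntegrableOn A (Set.Icc c d) ν) :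
    ∃ K : ENNReal, K ≠ ⊤ ∧ ∀ t ∈ Set.Icc c d, ‖resolv ν A t‖ₑ ≤ K := by
  -- The finite measure `‖A‖ dν`; points with a large half-jump are its atoms of mass at least `1`.
  set μ := (ν.restrict (Set.Icc c d)).withDensity fun t => ‖A t‖ₑ with hμ
  have hμfin : μ Set.univ ≠ ⊤ := by
    rw [hμ, withDensity_apply _ MeasurableSet.univ, Measure.restrict_univ]
    exact hA.2.ne
  have hT : {t : ℝ | 1 ≤ μ {t}}.Finite := by
    refine Measure.finite_const_le_meas_of_disjoint_iUnion μ one_pos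
      (fun t => measurableSet_singleton t) ?_ (ne_top_of_le_ne_top hμfin (measure_mono
        (Set.subset_univ _)))
    intro s t hst
    simpa using hst
  refine ⟨2 + ∑ t ∈ hT.toFinset, ‖resolv ν A t‖ₑ, ?_, fun t ht => ?_⟩
  · exact ENNReal.add_ne_top.2 ⟨by simp, ENNReal.sum_ne_top.2 fun t _ => enorm_ne_top⟩
  by_cases hJ : ‖halfJump ν A t‖ ≤ 1 / 2
  · refine le_trans ?_ le_self_add
    rw [← ofReal_norm]
    refine (ENNReal.ofReal_le_ofReal (norm_inverse_one_sub_le hJ)).trans (by simp)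
  · refine le_trans ?_ le_add_self
    refine Finset.single_le_sum (f := fun t => ‖resolv ν A t‖ₑ) (fun _ _ => zero_le) ?_
    rw [Set.Finite.mem_toFinset, Set.mem_ofPred_eq, hμ,
      withDensity_apply _ (measurableSet_singleton t), lintegral_singleton,
      Measure.restrict_apply (measurableSet_singleton t),
      Set.inter_eq_left.2 (Set.singleton_subset_iff.2 ht)]
    have hfin : ν {t} ≠ ⊤ :=
      ((measure_mono (Set.singleton_subset_iff.2 ht)).trans_lt hν).ne
    rw [halfJump, norm_smul, not_le, Real.norm_of_nonneg (by positivity)] at hJ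
    rw [← ENNReal.ofReal_toReal hfin, ← ofReal_norm, ← ENNReal.ofReal_mul (norm_nonneg _),
      ← ENNReal.ofReal_one]
    exact ENNReal.ofReal_le_ofReal (by linarith)

lemma lintegral_density_ne_top {ν : Measure ℝ} {A : ℝ → E →L[ℝ] E} {c d : ℝ}
    (hν : ν (Set.Icc c d) < ⊤) (hA : IntegrableOn A (Set.Icc c d) ν) :
    ∫⁻ t in Set.Ioo c d, density ν A t ∂ν ≠ ⊤ := by
  obtain ⟨K, hK, hb⟩ := exists_enorm_resolv_le hν hA
  refine ne_top_of_le_ne_top (b := K * ∫⁻ t in Set.Icc c d, ‖A t‖ₑ ∂ν)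
    (ENNReal.mul_ne_top hK hA.2.ne) ?_
  rw [← lintegral_const_mul' _ _ hK]
  refine (lintegral_mono_set Set.Ioo_subset_Icc_self).trans
    (setLIntegral_mono' measurableSet_Icc fun t ht => ?_)
  rw [density, mul_comm]
  gcongr
  exact hb t ht

/-- The resolvent equals `1` off the countable set of atoms of `ν`, hence is measurable. -/
lemma aestronglyMeasurable_resolv [FiniteDimensional ℝ E] {ν : Measure ℝ} {A : ℝ → E →L[ℝ] E}
    {c d : ℝ} (hν : ν (Set.Icc c d) < ⊤) :
    AEStronglyMeasurable (resolv ν A) (ν.restrict (Set.Icc c d)) := by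
  classical
  have : IsFiniteMeasure (ν.restrict (Set.Icc c d)) := ⟨by simpa using hν⟩
  borelize (E →L[ℝ] E)
  have : ProperSpace (E →L[ℝ] E) := FiniteDimensional.proper ℝ _
  set R : ℝ → E →L[ℝ] E := fun t => if t ∈ Set.Icc c d then resolv ν A t else 1 with hR
  have hm : Measurable R := by
    refine (measurable_const (a := (1 : E →L[ℝ] E))).measurable_of_countable_ne ?_
    refine (Measure.countable_meas_pos_of_disjoint_iUnion (μ := ν.restrict (Set.Icc c d))
      (As := fun t : ℝ => {t}) (fun t => measurableSet_singleton t)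
      (fun s t hst => by simpa using hst)).mono fun t ht => ?_
    simp only [hR, Set.mem_ofPred_eq, ne_eq] at ht
    by_cases hmem : t ∈ Set.Icc c d
    · rw [if_pos hmem] at ht
      simp only [Set.mem_ofPred_eq]
      rw [Measure.restrict_apply (measurableSet_singleton t),
        Set.inter_eq_left.2 (Set.singleton_subset_iff.2 hmem)]
      refine pos_iff_ne_zero.2 fun h0 => ht ?_
      simp [resolv, halfJump, h0]
    · simp [hmem] at ht
  refine hm.stronglyMeasurable.aestronglyMeasurable.congr ?_
  refine (ae_restrict_iff' measurableSet_Icc).2 (ae_of_all _ fun t ht => ?_)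
  simp only [hR, if_pos ht]

/-- An indefinite integral is measurable in its endpoint, as a partial integral of the measurable
function `(d, t) ↦ 1_{t < d} g(t)`. -/
lemma aestronglyMeasurable_integral_Ioo {ν : Measure ℝ} {x₀ e : ℝ}
    (hν : ν (Set.Ioo x₀ e) < ⊤) {f : ℝ → E} (hf : IntegrableOn f (Set.Ioo x₀ e) ν) :
    AEStronglyMeasurable (fun d => ∫ t in Set.Ioo x₀ d, f t ∂ν) (ν.restrict (Set.Ioo x₀ e)) := by
  have : IsFiniteMeasure (ν.restrict (Set.Ioo x₀ e)) := ⟨by simpa using hν⟩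
  obtain ⟨g, hg, hfg⟩ := hf.1
  have hm : StronglyMeasurable (fun d : ℝ => ∫ t, (Set.Iio d).indicator g t
      ∂(ν.restrict (Set.Ioo x₀ e))) := by
    refine StronglyMeasurable.integral_prod_right
      (f := fun d t : ℝ => (Set.Iio d).indicator g t) ?_
    have : (uncurry fun d t : ℝ => (Set.Iio d).indicator g t)
        = {p : ℝ × ℝ | p.2 < p.1}.indicator (fun p => g p.2) := by
      ext ⟨d, t⟩; simp [Set.indicator, uncurry]
    rw [this]
    exact (hg.comp_measurable measurable_snd).indicator
      (measurableSet_lt measurable_snd measurable_fst)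
  refine hm.aestronglyMeasurable.congr ?_
  refine (ae_restrict_iff' measurableSet_Ioo).2 (ae_of_all _ fun d hd => ?_)
  simp only
  rw [integral_indicator measurableSet_Iio, Measure.restrict_restrict measurableSet_Iio]
  have hset : Set.Iio d ∩ Set.Ioo x₀ e = Set.Ioo x₀ d := by
    ext t; simp only [Set.mem_inter_iff, Set.mem_Iio, Set.mem_Ioo]
    constructor
    · rintro ⟨h1, h2, -⟩; exact ⟨h2, h1⟩
    · rintro ⟨h1, h2⟩; exact ⟨h2, h1, h2.trans hd.2⟩
  rw [hset]
  exact integral_congr_ae (EventuallyEq.symm (ae_restrict_of_ae_restrict_of_subset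
    (Set.Ioo_subset_Ioo_right hd.2.le) hfg))

/-- The terms of the Neumann series of the equation `u = resolv p + volterra u`: the `k`-th one is
`volterra` applied `k` times to `d ↦ resolv ν A d p`. -/
noncomputable def picard (ν : Measure ℝ) (A : ℝ → E →L[ℝ] E) (x₀ : ℝ) (p : E) : ℕ → ℝ → E
  | 0 => fun d => resolv ν A d p
  | k + 1 => volterra ν A x₀ (picard ν A x₀ p k)

lemma enorm_picard_le {ν : Measure ℝ} {A : ℝ → E →L[ℝ] E} {x₀ e : ℝ}
    (hfin : ∫⁻ t in Set.Ioo x₀ e, density ν A t ∂ν ≠ ⊤) (p : E) (k : ℕ) :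
    ∀ t ∈ Set.Ioc x₀ e, ‖picard ν A x₀ p k t‖ₑ ≤ ‖p‖ₑ * (1 / 2) ^ k * majorant ν A x₀ t := by
  induction k with
  | zero =>
    intro t _
    refine ((resolv ν A t).le_opENorm _).trans ?_
    calc ‖resolv ν A t‖ₑ * ‖p‖ₑ = ‖resolv ν A t‖ₑ * ‖p‖ₑ * 1 := (mul_one _).symm
      _ ≤ ‖resolv ν A t‖ₑ * ‖p‖ₑ * weight (ν.withDensity (density ν A)) x₀ t := by
        gcongr; exact one_le_weight _ _ _
      _ = _ := by unfold majorant; ring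
  | succ k ih =>
    intro t ht
    have hfin' : ∫⁻ s in Set.Ioo x₀ t, density ν A s ∂ν ≠ ⊤ :=
      ne_top_of_le_ne_top hfin (lintegral_mono_set (Set.Ioo_subset_Ioo_right ht.2))
    refine (enorm_volterra_le hfin' (c := ‖p‖ₑ * (1 / 2) ^ k) ?_ fun s hs =>
      ih s ⟨hs.1, hs.2.le.trans ht.2⟩).trans (le_of_eq ?_)
    · exact ENNReal.mul_ne_top enorm_ne_top (ENNReal.pow_ne_top (by simp))
    · simp only [div_eq_mul_inv]; ring

lemma integrableOn_of_majorant {ν : Measure ℝ} {A : ℝ → E →L[ℝ] E} {x₀ e : ℝ}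
    (hν : ν (Set.Icc x₀ e) < ⊤) (hA : IntegrableOn A (Set.Icc x₀ e) ν) {z : ℝ → E}
    (hm : AEStronglyMeasurable z (ν.restrict (Set.Ioo x₀ e))) {c : ENNReal} (hc : c ≠ ⊤)
    (hz : ∀ t ∈ Set.Ioo x₀ e, ‖z t‖ₑ ≤ c * majorant ν A x₀ t) :
    IntegrableOn (fun t => A t (z t)) (Set.Ioo x₀ e) ν := by
  refine ⟨(ContinuousLinearMap.id ℝ (E →L[ℝ] E)).aestronglyMeasurable_comp₂
    (hA.1.mono_measure (Measure.restrict_mono Set.Ioo_subset_Icc_self le_rfl)) hm, ?_⟩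
  refine (lintegral_le_of_majorant (lintegral_density_ne_top hν hA) hc hz).trans_lt ?_
  exact (ENNReal.mul_ne_top hc (ENNReal.div_ne_top (weight_ne_top _ _ _) (by simp))).lt_top

omit [NormedSpace ℝ E] in
lemma picard_const_ne_top (p : E) (k : ℕ) : ‖p‖ₑ * (1 / 2) ^ k ≠ ⊤ :=
  ENNReal.mul_ne_top enorm_ne_top (ENNReal.pow_ne_top (by simp))

lemma aestronglyMeasurable_picard [FiniteDimensional ℝ E] {ν : Measure ℝ} {A : ℝ → E →L[ℝ] E}
    {x₀ e : ℝ} (hν : ν (Set.Icc x₀ e) < ⊤) (hA : IntegrableOn A (Set.Icc x₀ e) ν) (p : E) (k : ℕ) :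
    AEStronglyMeasurable (picard ν A x₀ p k) (ν.restrict (Set.Ioo x₀ e)) := by
  have hR : AEStronglyMeasurable (resolv ν A) (ν.restrict (Set.Ioo x₀ e)) :=
    (aestronglyMeasurable_resolv hν).mono_measure
      (Measure.restrict_mono Set.Ioo_subset_Icc_self le_rfl)
  induction k with
  | zero => exact hR.apply_continuousLinearMap p
  | succ k ih =>
    have hI := integrableOn_of_majorant hν hA ih (picard_const_ne_top p k) fun t ht =>
      enorm_picard_le (lintegral_density_ne_top hν hA) p k t ⟨ht.1, ht.2.le⟩
    exact (ContinuousLinearMap.id ℝ (E →L[ℝ] E)).aestronglyMeasurable_comp₂ hR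
      (aestronglyMeasurable_integral_Ioo ((measure_mono Set.Ioo_subset_Icc_self).trans_lt hν) hI)

omit [NormedSpace ℝ E] in
lemma tsum_picard_const (p : E) (c : ENNReal) :
    ∑' k : ℕ, ‖p‖ₑ * (1 / 2) ^ k * c = ‖p‖ₑ * 2 * c := by
  rw [ENNReal.tsum_mul_right, ENNReal.tsum_mul_left, ENNReal.tsum_geometric]
  simp

omit [NormedSpace ℝ E] in
lemma summable_of_tsum_enorm_ne_top [CompleteSpace E] {f : ℕ → E} (h : ∑' k, ‖f k‖ₑ ≠ ⊤) :
    Summable f := by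
  refine Summable.of_norm ?_
  have := ENNReal.summable_toReal h
  simpa using this

/-- The equation `u = resolv p + volterra u` has a solution on `(x₀, b)`, the sum of the series
`picard`, which is dominated termwise by a geometric series times `majorant`. -/
lemma exists_fixed [FiniteDimensional ℝ E] [CompleteSpace E] {ν : Measure ℝ} {A : ℝ → E →L[ℝ] E}
    {x₀ b : ℝ} (hν : ∀ e < b, ν (Set.Icc x₀ e) < ⊤)
    (hA : ∀ e < b, IntegrableOn A (Set.Icc x₀ e) ν) (p : E) :
    ∃ u : ℝ → E, ∀ e, x₀ < e → e < b → IntegrableOn (fun t => A t (u t)) (Set.Ioo x₀ e) ν ∧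
      u e = resolv ν A e p + volterra ν A x₀ u e := by
  have hsum : ∀ t, x₀ < t → t < b → ∑' k, ‖picard ν A x₀ p k t‖ₑ ≤ ‖p‖ₑ * 2 * majorant ν A x₀ t :=
    fun t h1 h2 => (ENNReal.tsum_le_tsum fun k => enorm_picard_le
      (lintegral_density_ne_top (hν t h2) (hA t h2)) p k t ⟨h1, le_rfl⟩).trans
      (tsum_picard_const p _).le
  have h2p : ‖p‖ₑ * 2 ≠ ⊤ := ENNReal.mul_ne_top enorm_ne_top (by simp)
  have hsummable : ∀ t, x₀ < t → t < b → Summable fun k => picard ν A x₀ p k t :=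
    fun t h1 h2 => summable_of_tsum_enorm_ne_top (ne_top_of_le_ne_top
      (ENNReal.mul_ne_top h2p (majorant_ne_top _ _ _ _)) (hsum t h1 h2))
  refine ⟨fun t => ∑' k, picard ν A x₀ p k t, fun e he heb => ?_⟩
  have hfin := lintegral_density_ne_top (hν e heb) (hA e heb)
  have hm := fun k => aestronglyMeasurable_picard (hν e heb) (hA e heb) p k
  have hmu : AEStronglyMeasurable (fun t => ∑' k, picard ν A x₀ p k t)
      (ν.restrict (Set.Ioo x₀ e)) := by
    refine aestronglyMeasurable_of_tendsto_ae atTop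
      (f := fun n t => ∑ k ∈ Finset.range n, picard ν A x₀ p k t) (fun n => ?_) ?_
    · exact Finset.aestronglyMeasurable_fun_sum _ fun k _ => hm k
    · refine (ae_restrict_iff' measurableSet_Ioo).2 (ae_of_all _ fun t ht => ?_)
      exact (hsummable t ht.1 (ht.2.trans heb)).hasSum.tendsto_sum_nat
  have hu : ∀ t ∈ Set.Ioo x₀ e, ‖∑' k, picard ν A x₀ p k t‖ₑ ≤ ‖p‖ₑ * 2 * majorant ν A x₀ t :=
    fun t ht => enorm_tsum_le_tsum_enorm.trans (hsum t ht.1 (ht.2.trans heb))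
  refine ⟨integrableOn_of_majorant (hν e heb) (hA e heb) hmu h2p hu, ?_⟩
  have hI : ∀ k, IntegrableOn (fun t => A t (picard ν A x₀ p k t)) (Set.Ioo x₀ e) ν := fun k =>
    integrableOn_of_majorant (hν e heb) (hA e heb) (hm k) (picard_const_ne_top p k) fun t ht =>
      enorm_picard_le hfin p k t ⟨ht.1, ht.2.le⟩
  have htot : ∑' k, ∫⁻ t in Set.Ioo x₀ e, ‖A t (picard ν A x₀ p k t)‖ₑ ∂ν ≠ ⊤ := by
    refine ne_top_of_le_ne_top ?_ (ENNReal.tsum_le_tsum fun k => lintegral_le_of_majorant hfin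
      (picard_const_ne_top p k) fun t ht => enorm_picard_le hfin p k t ⟨ht.1, ht.2.le⟩)
    rw [tsum_picard_const]
    exact ENNReal.mul_ne_top h2p (ENNReal.div_ne_top (weight_ne_top _ _ _) (by simp))
  have hswap : ∫ t in Set.Ioo x₀ e, A t (∑' k, picard ν A x₀ p k t) ∂ν
      = ∑' k, ∫ t in Set.Ioo x₀ e, A t (picard ν A x₀ p k t) ∂ν := by
    rw [← integral_tsum (fun k => (hI k).1) htot]
    refine setIntegral_congr_fun measurableSet_Ioo fun t ht => ?_
    exact (A t).map_tsum (hsummable t ht.1 (ht.2.trans heb))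
  have hsumI : Summable fun k => ∫ t in Set.Ioo x₀ e, A t (picard ν A x₀ p k t) ∂ν :=
    summable_of_tsum_enorm_ne_top (ne_top_of_le_ne_top htot
      (ENNReal.tsum_le_tsum fun k => enorm_integral_le_lintegral_enorm _))
  simp only
  rw [(hsummable e he heb).tsum_eq_zero_add, volterra, hswap, (resolv ν A e).map_tsum hsumI]
  rfl

end

/-! ### The symmetric integral equation -/

section
variable {E : Type*} [NormedAddCommGroup E] [NormedSpace ℝ E]

/-- The integral of `f dν` from `c` to `d` in which each endpoint counts with half of its mass, as the
average of the integrals over `[c, d)` and `(c, d]`. It is additive over adjacent intervals. -/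
noncomputable def symInt (ν : Measure ℝ) (f : ℝ → E) (c d : ℝ) : E :=
  (1 / 2 : ℝ) • (∫ t in Set.Ico c d, f t ∂ν + ∫ t in Set.Ioc c d, f t ∂ν)

lemma setIntegral_Ico_add {ν : Measure ℝ} {f : ℝ → E} {c d e : ℝ} (hcd : c ≤ d) (hde : d ≤ e)
    (hf : IntegrableOn f (Set.Icc c e) ν) :
    ∫ t in Set.Ico c e, f t ∂ν = ∫ t in Set.Ico c d, f t ∂ν + ∫ t in Set.Ico d e, f t ∂ν := by
  rw [← Set.Ico_union_Ico_eq_Ico hcd hde]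
  refine setIntegral_union (Set.Ico_disjoint_Ico_same) measurableSet_Ico
    (hf.mono_set fun t ht => ⟨ht.1, ht.2.le.trans hde⟩)
    (hf.mono_set fun t ht => ⟨hcd.trans ht.1, ht.2.le⟩)

lemma setIntegral_Ioc_add {ν : Measure ℝ} {f : ℝ → E} {c d e : ℝ} (hcd : c ≤ d) (hde : d ≤ e)
    (hf : IntegrableOn f (Set.Icc c e) ν) :
    ∫ t in Set.Ioc c e, f t ∂ν = ∫ t in Set.Ioc c d, f t ∂ν + ∫ t in Set.Ioc d e, f t ∂ν := by
  rw [← Set.Ioc_union_Ioc_eq_Ioc hcd hde]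
  refine setIntegral_union (Set.Ioc_disjoint_Ioc_of_le le_rfl) measurableSet_Ioc
    (hf.mono_set fun t ht => ⟨ht.1.le, ht.2.trans hde⟩)
    (hf.mono_set fun t ht => ⟨hcd.trans ht.1.le, ht.2⟩)

lemma symInt_add {ν : Measure ℝ} {f : ℝ → E} {c d e : ℝ} (hcd : c ≤ d) (hde : d ≤ e)
    (hf : IntegrableOn f (Set.Icc c e) ν) :
    symInt ν f c e = symInt ν f c d + symInt ν f d e := by
  unfold symInt
  rw [setIntegral_Ico_add hcd hde hf, setIntegral_Ioc_add hcd hde hf]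
  module

@[simp] lemma symInt_self (ν : Measure ℝ) (f : ℝ → E) (c : ℝ) : symInt ν f c c = 0 := by
  simp [symInt]

variable [CompleteSpace E]

lemma setIntegral_Ico_eq {ν : Measure ℝ} {f : ℝ → E} {c d : ℝ} (hcd : c < d)
    (hf : IntegrableOn f (Set.Icc c d) ν) :
    ∫ t in Set.Ico c d, f t ∂ν = ∫ t in Set.Ioo c d, f t ∂ν + (ν {c}).toReal • f c := by
  rw [← Set.Ioo_union_left hcd, setIntegral_union (by simp) (measurableSet_singleton c)
    (hf.mono_set Set.Ioo_subset_Icc_self) (hf.mono_set (by simpa using hcd.le)),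
    integral_singleton, measureReal_def]

lemma setIntegral_Ioc_eq {ν : Measure ℝ} {f : ℝ → E} {c d : ℝ} (hcd : c < d)
    (hf : IntegrableOn f (Set.Icc c d) ν) :
    ∫ t in Set.Ioc c d, f t ∂ν = ∫ t in Set.Ioo c d, f t ∂ν + (ν {d}).toReal • f d := by
  rw [← Set.Ioo_union_right hcd, setIntegral_union (by simp) (measurableSet_singleton d)
    (hf.mono_set Set.Ioo_subset_Icc_self) (hf.mono_set (by simpa using hcd.le)),
    integral_singleton, measureReal_def]

lemma symInt_eq_Ioo {ν : Measure ℝ} {f : ℝ → E} {c d : ℝ} (hcd : c < d)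
    (hf : IntegrableOn f (Set.Icc c d) ν) :
    symInt ν f c d = ∫ t in Set.Ioo c d, f t ∂ν + ((ν {c}).toReal / 2) • f c
      + ((ν {d}).toReal / 2) • f d := by
  unfold symInt
  rw [setIntegral_Ico_eq hcd hf, setIntegral_Ioc_eq hcd hf]
  module

/-- Solvability of the symmetric integral equation to the right of the initial point. Isolating the
half-atoms at both ends turns the equation into `u = resolv p + volterra u` on `(x₀, b)`, with
`p = y + halfJump ν A x₀ y`. -/
lemma exists_forward [FiniteDimensional ℝ E] {ν : Measure ℝ} {A : ℝ → E →L[ℝ] E} {x₀ b : ℝ}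
    (hν : ∀ e < b, ν (Set.Icc x₀ e) < ⊤) (hA : ∀ e < b, IntegrableOn A (Set.Icc x₀ e) ν)
    (hU : ∀ t, x₀ < t → t < b → IsUnit (1 - halfJump ν A t)) (y : E) :
    ∃ u : ℝ → E, u x₀ = y ∧ ∀ d, x₀ ≤ d → d < b →
      IntegrableOn (fun t => A t (u t)) (Set.Icc x₀ d) ν ∧
      u d - u x₀ = symInt ν (fun t => A t (u t)) x₀ d := by
  obtain ⟨v, hv⟩ := exists_fixed hν hA (y + halfJump ν A x₀ y)
  -- The fixed point equation says nothing about the value at `x₀`, which is therefore prescribed.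
  refine ⟨update v x₀ y, update_self _ _ _, fun d hd hdb => ?_⟩
  have hatom : ∀ t ∈ Set.Icc x₀ d, ν {t} < ⊤ := fun t ht =>
    (measure_mono (Set.singleton_subset_iff.2 ht)).trans_lt (hν d hdb)
  rcases hd.eq_or_lt with rfl | hlt
  · have := hatom x₀ ⟨le_rfl, le_rfl⟩
    simp [integrableOn_singleton_iff, this]
  have hIoo : Set.EqOn (fun t => A t (update v x₀ y t)) (fun t => A t (v t)) (Set.Ioo x₀ d) :=
    fun t ht => by simp [update_of_ne ht.1.ne']
  obtain ⟨hint, hfix⟩ := hv d hlt hdb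
  have hI : IntegrableOn (fun t => A t (update v x₀ y t)) (Set.Icc x₀ d) ν := by
    rw [← Set.Ioo_union_both hlt.le, integrableOn_union, ← Set.singleton_union, integrableOn_union]
    refine ⟨hint.congr_fun hIoo.symm measurableSet_Ioo, ?_, ?_⟩
    · exact (integrableOn_singleton_iff (by simp)).2 (Or.inr (hatom _ ⟨le_rfl, hlt.le⟩))
    · exact (integrableOn_singleton_iff (by simp)).2 (Or.inr (hatom _ ⟨hlt.le, le_rfl⟩))
  refine ⟨hI, ?_⟩
  rw [symInt_eq_Ioo hlt hI, setIntegral_congr_fun measurableSet_Ioo hIoo, update_self,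
    update_of_ne hlt.ne']
  have h1 : (1 - halfJump ν A d) (v d)
      = y + halfJump ν A x₀ y + ∫ t in Set.Ioo x₀ d, A t (v t) ∂ν := by
    have := congrArg (fun T : E →L[ℝ] E =>
      T (y + halfJump ν A x₀ y + ∫ t in Set.Ioo x₀ d, A t (v t) ∂ν))
      (Ring.mul_inverse_cancel _ (hU d hlt hdb))
    rw [hfix, volterra, ← map_add]
    exact this
  have h2 : v d - halfJump ν A d (v d)
      = y + halfJump ν A x₀ y + ∫ t in Set.Ioo x₀ d, A t (v t) ∂ν := h1
  have h4 := sub_eq_iff_eq_add.1 h2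
  simp only [halfJump, smul_apply] at h4
  rw [sub_eq_iff_eq_add]
  refine h4.trans ?_
  module

/-- Uniqueness for the symmetric integral equation to the right of the initial point. -/
lemma eq_zero_forward {ν : Measure ℝ} {A : ℝ → E →L[ℝ] E} {x₀ b : ℝ}
    (hν : ∀ e < b, ν (Set.Icc x₀ e) < ⊤) (hA : ∀ e < b, IntegrableOn A (Set.Icc x₀ e) ν)
    (hU : ∀ t, x₀ < t → t < b → IsUnit (1 - halfJump ν A t)) {z : ℝ → E} (h0 : z x₀ = 0)
    (hz : ∀ d, x₀ ≤ d → d < b → IntegrableOn (fun t => A t (z t)) (Set.Icc x₀ d) ν ∧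
      z d - z x₀ = symInt ν (fun t => A t (z t)) x₀ d) :
    ∀ d, x₀ ≤ d → d < b → z d = 0 := by
  intro d hd hdb
  rcases hd.eq_or_lt with rfl | hlt
  · exact h0
  refine eq_zero_of_volterra_fixed (lintegral_density_ne_top (hν d hdb) (hA d hdb)) ?_
    ((hz d hd hdb).1.mono_set Set.Ioo_subset_Icc_self) d ⟨hlt, le_rfl⟩
  intro t ht
  have htb := ht.2.trans_lt hdb
  obtain ⟨hI, heq⟩ := hz t ht.1.le htb
  rw [symInt_eq_Ioo ht.1 hI, h0, map_zero, smul_zero, add_zero, sub_zero] at heq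
  have h1 : (1 - halfJump ν A t) (z t) = ∫ s in Set.Ioo x₀ t, A s (z s) ∂ν :=
    sub_eq_iff_eq_add.2 heq
  have h2 := congrArg (fun T : E →L[ℝ] E => T (z t)) (Ring.inverse_mul_cancel _ (hU t ht.1 htb))
  rw [volterra, ← h1]
  exact h2.symm

/-- `u` solves on `(a, b)` the symmetric integral equation `u(d) - u(c) = ∫ A u dν`, the integral from
`c` to `d` counting the atoms at both endpoints with half of their mass. Integrability of `A u` on compact subintervals is
part of the definition, so that the integrals are meaningful. -/
structure IsSymSol (a b : ℝ) (ν : Measure ℝ) (A : ℝ → E →L[ℝ] E) (u : ℝ → E) : Prop where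
  integrable : ∀ c d, a < c → d < b → IntegrableOn (fun t => A t (u t)) (Set.Icc c d) ν
  eq : ∀ c d, a < c → c ≤ d → d < b → u d - u c = symInt ν (fun t => A t (u t)) c d

omit [CompleteSpace E] in
/-- Reflection `t ↦ -t` turns the symmetric integral of `f dν` into that of the reflected data up to
sign; this is the symmetry that the equation over `[c, d)` lacks. -/
lemma symInt_neg (ν : Measure ℝ) (f : ℝ → E) (c d : ℝ) :
    symInt (ν.map Neg.neg) (fun t => -f (-t)) c d = -symInt ν f (-d) (-c) := by
  have hm : MeasurableEmbedding (Neg.neg : ℝ → ℝ) := (MeasurableEquiv.neg ℝ).measurableEmbedding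
  unfold symInt
  rw [hm.setIntegral_map, hm.setIntegral_map]
  simp only [neg_neg, Set.neg_preimage, Set.neg_Ico, Set.neg_Ioc, integral_neg]
  module

omit [CompleteSpace E] in
lemma integrableOn_reflect {ν : Measure ℝ} {F : Type*} [NormedAddCommGroup F] {f : ℝ → F} {c d : ℝ}
    (hf : IntegrableOn f (Set.Icc (-d) (-c)) ν) :
    IntegrableOn (fun t => -f (-t)) (Set.Icc c d) (ν.map Neg.neg) := by
  have hm : MeasurableEmbedding (Neg.neg : ℝ → ℝ) := (MeasurableEquiv.neg ℝ).measurableEmbedding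
  rw [hm.integrableOn_map_iff, Set.neg_preimage, Set.neg_Icc]
  simpa [Function.comp_def] using hf.neg

lemma map_neg_Icc (ν : Measure ℝ) (c d : ℝ) :
    (ν.map Neg.neg) (Set.Icc c d) = ν (Set.Icc (-d) (-c)) := by
  have hm : MeasurableEmbedding (Neg.neg : ℝ → ℝ) := (MeasurableEquiv.neg ℝ).measurableEmbedding
  rw [hm.map_apply]; simp

omit [CompleteSpace E] in
lemma halfJump_reflect (ν : Measure ℝ) (A : ℝ → E →L[ℝ] E) (t : ℝ) :
    halfJump (ν.map Neg.neg) (fun s => -A (-s)) t = -halfJump ν A (-t) := by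
  have := map_neg_Icc ν t t
  simp only [Set.Icc_self] at this
  simp [halfJump, this]

omit [CompleteSpace E] in
lemma IsSymSol.sub {a b : ℝ} {ν : Measure ℝ} {A : ℝ → E →L[ℝ] E} {u v : ℝ → E}
    (hu : IsSymSol a b ν A u) (hv : IsSymSol a b ν A v) : IsSymSol a b ν A (u - v) where
  integrable c d hc hd := by
    simpa using! (hu.integrable c d hc hd).sub (hv.integrable c d hc hd)
  eq c d hc hcd hd := by
    have e1 := hu.eq c d hc hcd hd
    have e2 := hv.eq c d hc hcd hd
    have i1 := hu.integrable c d hc hd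
    have i2 := hv.integrable c d hc hd
    have : (u - v) d - (u - v) c = (u d - u c) - (v d - v c) := by
      simp only [Pi.sub_apply]; abel
    rw [this, e1, e2]
    simp only [symInt, Pi.sub_apply, map_sub]
    rw [integral_sub (i1.mono_set Set.Ico_subset_Icc_self) (i2.mono_set Set.Ico_subset_Icc_self),
      integral_sub (i1.mono_set Set.Ioc_subset_Icc_self) (i2.mono_set Set.Ioc_subset_Icc_self)]
    module

omit [CompleteSpace E] in
/-- Reflection maps solutions to solutions of the equation with coefficient `-A(-t)` and the reflected
measure. It exchanges the operators `1 + halfJump` and `1 - halfJump`. -/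
lemma IsSymSol.reflect {a b : ℝ} {ν : Measure ℝ} {A : ℝ → E →L[ℝ] E} {u : ℝ → E}
    (hu : IsSymSol a b ν A u) :
    IsSymSol (-b) (-a) (ν.map Neg.neg) (fun t => -A (-t)) (fun t => u (-t)) where
  integrable c d hc hd := by
    simpa using integrableOn_reflect (hu.integrable (-d) (-c) (by linarith) (by linarith))
  eq c d hc hcd hd := by
    have := hu.eq (-d) (-c) (by linarith) (by linarith) (by linarith)
    simp only [neg_apply]
    rw [symInt_neg ν (fun t => A t (u t)), ← this]
    abel

/-- A solution of the symmetric integral equation that vanishes at one point vanishes on `(a, b)`. -/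
theorem IsSymSol.eqOn_zero {a b : ℝ} {ν : Measure ℝ} {A : ℝ → E →L[ℝ] E}
    (hν : ∀ c d, a < c → d < b → ν (Set.Icc c d) < ⊤)
    (hA : ∀ c d, a < c → d < b → IntegrableOn A (Set.Icc c d) ν)
    (hU : ∀ t ∈ Set.Ioo a b, IsUnit (1 + halfJump ν A t) ∧ IsUnit (1 - halfJump ν A t))
    {x₀ : ℝ} (hx₀ : x₀ ∈ Set.Ioo a b) {z : ℝ → E} (hz : IsSymSol a b ν A z) (h0 : z x₀ = 0) :
    ∀ t ∈ Set.Ioo a b, z t = 0 := by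
  intro t ht
  rcases le_total x₀ t with h | h
  · exact eq_zero_forward (fun e he => hν _ _ hx₀.1 he) (fun e he => hA _ _ hx₀.1 he)
      (fun s hs hsb => (hU s ⟨hx₀.1.trans hs, hsb⟩).2) h0
      (fun d hd hdb => ⟨hz.integrable _ _ hx₀.1 hdb, hz.eq _ _ hx₀.1 hd hdb⟩) t h ht.2
  · have hr := hz.reflect
    have := eq_zero_forward (x₀ := -x₀) (b := -a) (ν := ν.map Neg.neg)
      (A := fun t => -A (-t)) (z := fun t => z (-t))
      (fun e he => by
        rw [map_neg_Icc, neg_neg]; exact hν _ _ (by linarith) hx₀.2)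
      (fun e he => integrableOn_reflect (by
        rw [neg_neg]; exact hA _ _ (by linarith) hx₀.2))
      (fun s hs hsb => by
        rw [halfJump_reflect, sub_neg_eq_add]
        exact (hU (-s) ⟨by linarith, by linarith [hx₀.2]⟩).1) (by simpa using h0)
      (fun d hd hdb => ⟨hr.integrable _ _ (by linarith [hx₀.2]) hdb,
        hr.eq _ _ (by linarith [hx₀.2]) hd hdb⟩) (-t) (by linarith) (by linarith [ht.1])
    simpa using this

/-- The initial value problem for the symmetric integral equation is solvable on `(a, b)`: a solution
to the right of `x₀` is glued with a reflected solution to the left. -/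
theorem exists_isSymSol [FiniteDimensional ℝ E] {a b : ℝ} {ν : Measure ℝ} {A : ℝ → E →L[ℝ] E}
    (hν : ∀ c d, a < c → d < b → ν (Set.Icc c d) < ⊤)
    (hA : ∀ c d, a < c → d < b → IntegrableOn A (Set.Icc c d) ν)
    (hU : ∀ t ∈ Set.Ioo a b, IsUnit (1 + halfJump ν A t) ∧ IsUnit (1 - halfJump ν A t))
    {x₀ : ℝ} (hx₀ : x₀ ∈ Set.Ioo a b) (y : E) : ∃ u, IsSymSol a b ν A u ∧ u x₀ = y := by
  obtain ⟨v, hv0, hv⟩ := exists_forward (fun e he => hν _ _ hx₀.1 he)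
    (fun e he => hA x₀ e hx₀.1 he) (fun s hs hsb => (hU s ⟨hx₀.1.trans hs, hsb⟩).2) y
  obtain ⟨w, hw0, hw⟩ := exists_forward (x₀ := -x₀) (b := -a) (ν := ν.map Neg.neg)
      (A := fun t => -A (-t))
      (fun e he => by
        rw [map_neg_Icc, neg_neg]; exact hν _ _ (by linarith) hx₀.2)
      (fun e he => integrableOn_reflect (by
        rw [neg_neg]; exact hA _ _ (by linarith) hx₀.2))
      (fun s hs hsb => by
        rw [halfJump_reflect, sub_neg_eq_add]
        exact (hU (-s) ⟨by linarith, by linarith [hx₀.2]⟩).1) y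
  set u : ℝ → E := fun t => if x₀ ≤ t then v t else w (-t) with hu
  have hur : ∀ t, x₀ ≤ t → u t = v t := fun t ht => if_pos ht
  have hul : ∀ t, t ≤ x₀ → u t = w (-t) := fun t ht => by
    rcases ht.eq_or_lt with rfl | h
    · rw [hur _ le_rfl, hv0, hw0]
    · exact if_neg (not_le.2 h)
  have symInt_congr : ∀ {f g : ℝ → E} {c d : ℝ}, Set.EqOn f g (Set.Icc c d) →
      symInt ν f c d = symInt ν g c d := fun {f g c d} h => by
    unfold symInt
    rw [setIntegral_congr_fun measurableSet_Ico (h.mono Set.Ico_subset_Icc_self),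
      setIntegral_congr_fun measurableSet_Ioc (h.mono Set.Ioc_subset_Icc_self)]
  have hright : ∀ d, x₀ ≤ d → d < b → IntegrableOn (fun t => A t (u t)) (Set.Icc x₀ d) ν ∧
      u d - u x₀ = symInt ν (fun t => A t (u t)) x₀ d := fun d hd hdb => by
    have hE : Set.EqOn (fun t => A t (u t)) (fun t => A t (v t)) (Set.Icc x₀ d) :=
      fun t ht => by simp only [hur t ht.1]
    refine ⟨(hv d hd hdb).1.congr_fun hE.symm measurableSet_Icc, ?_⟩
    rw [symInt_congr hE, hur d hd, hur x₀ le_rfl]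
    exact (hv d hd hdb).2
  have hleft : ∀ c, a < c → c ≤ x₀ → IntegrableOn (fun t => A t (u t)) (Set.Icc c x₀) ν ∧
      u x₀ - u c = symInt ν (fun t => A t (u t)) c x₀ := fun c hc hcx => by
    have hE : Set.EqOn (fun t => A t (u t)) (fun t => A t (w (-t))) (Set.Icc c x₀) :=
      fun t ht => by simp only [hul t ht.2]
    obtain ⟨h1, h2⟩ := hw (-c) (by linarith) (by linarith)
    have hm : MeasurableEmbedding (Neg.neg : ℝ → ℝ) := (MeasurableEquiv.neg ℝ).measurableEmbedding
    rw [hm.integrableOn_map_iff, Set.neg_preimage, Set.neg_Icc, neg_neg, neg_neg] at h1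
    refine ⟨IntegrableOn.congr_fun h1.neg (fun t ht => ?_) measurableSet_Icc, ?_⟩
    · simpa using (hE ht).symm
    · have h3 := symInt_neg ν (fun t => A t (w (-t))) (-x₀) (-c)
      simp only [neg_neg] at h3
      simp only [neg_apply] at h2
      rw [h3] at h2
      rw [symInt_congr hE, hul x₀ le_rfl, hul c hcx, ← neg_inj, ← h2]
      abel
  have hint : ∀ c d, a < c → d < b → IntegrableOn (fun t => A t (u t)) (Set.Icc c d) ν := by
    intro c d hc hd
    refine IntegrableOn.mono_set (t := Set.Icc (min c x₀) x₀ ∪ Set.Icc x₀ (max d x₀)) ?_ ?_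
    · exact (hleft _ (lt_min hc hx₀.1) (min_le_right _ _)).1.union
        (hright _ (le_max_right _ _) (max_lt hd hx₀.2)).1
    · intro t ht
      rcases le_total t x₀ with h | h
      · exact Or.inl ⟨(min_le_left _ _).trans ht.1, h⟩
      · exact Or.inr ⟨h, ht.2.trans (le_max_left _ _)⟩
  refine ⟨u, ⟨hint, fun c d hc hcd hd => ?_⟩, (hur x₀ le_rfl).trans hv0⟩
  rcases le_total d x₀ with h | h
  · have e1 := (hleft c hc (hcd.trans h)).2
    have e2 := (hleft d (hc.trans_le hcd) h).2
    rw [symInt_add hcd h (hint c x₀ hc hx₀.2), ← e2] at e1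
    rw [← add_right_cancel_iff (a := u x₀ - u d), ← e1]; abel
  rcases le_total x₀ c with h' | h'
  · have e1 := (hright c h' (hcd.trans_lt hd)).2
    have e2 := (hright d h hd).2
    rw [symInt_add h' hcd (hint x₀ d hx₀.1 hd), ← e1] at e2
    rw [← add_left_cancel_iff (a := u c - u x₀), ← e2]; abel
  · rw [symInt_add h' h (hint c d hc hd), ← (hleft c hc h').2, ← (hright d h hd).2]
    abel

end

/-! ### One-sided limits and variation of solutions -/

section
variable {E : Type*} [NormedAddCommGroup E] [NormedSpace ℝ E]

/-- If the indicators of the sets `s t ⊆ K` converge pointwise to that of `S`, then so do the integrals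
of a function integrable on `K`. -/
lemma tendsto_setIntegral_of_eventually_mem_iff {ν : Measure ℝ} {f : ℝ → E} {K : Set ℝ}
    (hf : IntegrableOn f K ν) {l : Filter ℝ} [l.IsCountablyGenerated]
    {s : ℝ → Set ℝ} {S : Set ℝ} (hs : ∀ t, MeasurableSet (s t)) (hS : MeasurableSet S)
    (hSK : S ⊆ K) (hsK : ∀ᶠ t in l, s t ⊆ K) (hlim : ∀ y, ∀ᶠ t in l, (y ∈ s t ↔ y ∈ S)) :
    Tendsto (fun t => ∫ y in s t, f y ∂ν) l (nhds (∫ y in S, f y ∂ν)) := by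
  have key : Tendsto (fun t => ∫ y in K, (s t).indicator f y ∂ν) l
      (nhds (∫ y in K, S.indicator f y ∂ν)) := by
    refine tendsto_integral_filter_of_dominated_convergence (fun y => ‖f y‖)
      (Eventually.of_forall fun t => hf.1.indicator (hs t))
      (Eventually.of_forall fun t => ae_of_all _ fun y => norm_indicator_le_norm_self _ _)
      hf.norm (ae_of_all _ fun y => ?_)
    refine tendsto_nhds_of_eventually_eq ?_
    filter_upwards [hlim y] with t ht
    by_cases h : y ∈ S <;> simp [h, ht]
  have hrw : ∀ T, MeasurableSet T → T ⊆ K →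
      ∫ y in K, T.indicator f y ∂ν = ∫ y in T, f y ∂ν := fun T hT hTK => by
    rw [integral_indicator hT, Measure.restrict_restrict hT, Set.inter_eq_left.2 hTK]
  rw [hrw S hS hSK] at key
  refine key.congr' ?_
  filter_upwards [hsK] with t ht using hrw _ (hs t) ht

section limits
variable {ν : Measure ℝ} {f : ℝ → E} {c x d : ℝ}

lemma tendsto_setIntegral_Ico_left (hcx : c < x) (hf : IntegrableOn f (Set.Icc c x) ν) :
    Tendsto (fun t => ∫ y in Set.Ico t x, f y ∂ν) (nhdsWithin x (Set.Iio x)) (nhds 0) := by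
  have := tendsto_setIntegral_of_eventually_mem_iff (l := nhdsWithin x (Set.Iio x))
    (s := fun t => Set.Ico t x) (S := ∅) hf (fun t => measurableSet_Ico)
    MeasurableSet.empty (Set.empty_subset _) ?_ ?_
  · simpa using this
  · filter_upwards [Ioo_mem_nhdsLT hcx] with t ht y hy using ⟨ht.1.le.trans hy.1, hy.2.le⟩
  · intro y
    rcases lt_or_ge y x with h | h
    · filter_upwards [Ioo_mem_nhdsLT h] with t ht
      simp [ht.1]
    · exact Eventually.of_forall fun t => by simp [h]

lemma tendsto_setIntegral_Ioc_right (hxd : x < d) (hf : IntegrableOn f (Set.Icc x d) ν) :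
    Tendsto (fun t => ∫ y in Set.Ioc x t, f y ∂ν) (nhdsWithin x (Set.Ioi x)) (nhds 0) := by
  have := tendsto_setIntegral_of_eventually_mem_iff (l := nhdsWithin x (Set.Ioi x))
    (s := fun t => Set.Ioc x t) (S := ∅) hf (fun t => measurableSet_Ioc)
    MeasurableSet.empty (Set.empty_subset _) ?_ ?_
  · simpa using this
  · filter_upwards [Ioo_mem_nhdsGT hxd] with t ht y hy using ⟨hy.1.le, hy.2.trans ht.2.le⟩
  · intro y
    rcases lt_or_ge x y with h | h
    · filter_upwards [Ioo_mem_nhdsGT h] with t ht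
      simp [ht.2]
    · exact Eventually.of_forall fun t => by simp [h]

variable [CompleteSpace E]

lemma tendsto_setIntegral_Ioc_left (hcx : c < x) (hf : IntegrableOn f (Set.Icc c x) ν) :
    Tendsto (fun t => ∫ y in Set.Ioc t x, f y ∂ν) (nhdsWithin x (Set.Iio x))
      (nhds ((ν {x}).toReal • f x)) := by
  have := tendsto_setIntegral_of_eventually_mem_iff (l := nhdsWithin x (Set.Iio x))
    (s := fun t => Set.Ioc t x) (S := {x}) hf (fun t => measurableSet_Ioc)
    (measurableSet_singleton x) (by simpa using hcx.le) ?_ ?_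
  · simpa [integral_singleton, measureReal_def] using this
  · filter_upwards [Ioo_mem_nhdsLT hcx] with t ht y hy using ⟨ht.1.le.trans hy.1.le, hy.2⟩
  · intro y
    rcases lt_trichotomy y x with h | rfl | h
    · filter_upwards [Ioo_mem_nhdsLT h] with t ht
      simp [ht.1.le, h.ne]
    · filter_upwards [self_mem_nhdsWithin] with t ht
      simpa using ht
    · exact Eventually.of_forall fun t => by simp [h, h.ne']

lemma tendsto_setIntegral_Ico_right (hxd : x < d) (hf : IntegrableOn f (Set.Icc x d) ν) :
    Tendsto (fun t => ∫ y in Set.Ico x t, f y ∂ν) (nhdsWithin x (Set.Ioi x))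
      (nhds ((ν {x}).toReal • f x)) := by
  have := tendsto_setIntegral_of_eventually_mem_iff (l := nhdsWithin x (Set.Ioi x))
    (s := fun t => Set.Ico x t) (S := {x}) hf (fun t => measurableSet_Ico)
    (measurableSet_singleton x) (by simpa using hxd.le) ?_ ?_
  · simpa [integral_singleton, measureReal_def] using this
  · filter_upwards [Ioo_mem_nhdsGT hxd] with t ht y hy using ⟨hy.1, hy.2.le.trans ht.2.le⟩
  · intro y
    rcases lt_trichotomy y x with h | rfl | h
    · exact Eventually.of_forall fun t => by simp [h, h.ne]
    · filter_upwards [self_mem_nhdsWithin] with t ht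
      simpa using ht
    · filter_upwards [Ioo_mem_nhdsGT h] with t ht
      simp [ht.2.le, h.ne']

end limits

section fromSym
variable {a b : ℝ} {ν : Measure ℝ} {A : ℝ → E →L[ℝ] E} {u : ℝ → E}

lemma IsSymSol.tendsto_left [CompleteSpace E] (hu : IsSymSol a b ν A u) {x : ℝ}
    (hx : x ∈ Set.Ioo a b) :
    Tendsto u (nhdsWithin x (Set.Iio x)) (nhds (u x - halfJump ν A x (u x))) := by
  obtain ⟨c, hac, hcx⟩ := exists_between hx.1
  have hf := hu.integrable c x hac hx.2
  have h1 := ((tendsto_setIntegral_Ico_left hcx hf).add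
    (tendsto_setIntegral_Ioc_left hcx hf)).const_smul (1 / 2 : ℝ)
  have h2 := h1.const_sub (u x)
  have e : u x - (1 / 2 : ℝ) • (0 + (ν {x}).toReal • A x (u x)) = u x - halfJump ν A x (u x) := by
    simp only [halfJump, smul_apply]; module
  rw [e] at h2
  refine h2.congr' ?_
  filter_upwards [Ioo_mem_nhdsLT hcx] with t ht
  have := hu.eq t x (hac.trans ht.1) ht.2.le hx.2
  rw [symInt] at this
  rw [← this]; abel

lemma IsSymSol.tendsto_right [CompleteSpace E] (hu : IsSymSol a b ν A u) {x : ℝ}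
    (hx : x ∈ Set.Ioo a b) :
    Tendsto u (nhdsWithin x (Set.Ioi x)) (nhds (u x + halfJump ν A x (u x))) := by
  obtain ⟨d, hxd, hdb⟩ := exists_between hx.2
  have hf := hu.integrable x d hx.1 hdb
  have h1 := ((tendsto_setIntegral_Ico_right hxd hf).add
    (tendsto_setIntegral_Ioc_right hxd hf)).const_smul (1 / 2 : ℝ)
  have h2 := h1.const_add (u x)
  have e : u x + (1 / 2 : ℝ) • ((ν {x}).toReal • A x (u x) + 0) = u x + halfJump ν A x (u x) := by
    simp only [halfJump, smul_apply]; module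
  rw [e] at h2
  refine h2.congr' ?_
  filter_upwards [Ioo_mem_nhdsGT hxd] with t ht
  have := hu.eq x t hx.1 ht.1.le (ht.2.trans hdb)
  rw [symInt] at this
  rw [← this]; abel

/-- The left limits of a solution of the symmetric equation satisfy the equation over `[c, d)`. -/
lemma IsSymSol.setIntegral_Ico [CompleteSpace E] (hu : IsSymSol a b ν A u) {c d : ℝ}
    (hac : a < c) (hcd : c ≤ d) (hdb : d < b) :
    (u d - halfJump ν A d (u d)) - (u c - halfJump ν A c (u c))
      = ∫ t in Set.Ico c d, A t (u t) ∂ν := by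
  rcases hcd.eq_or_lt with rfl | hlt
  · simp
  have hf := hu.integrable c d hac hdb
  have h := hu.eq c d hac hcd hdb
  rw [symInt_eq_Ioo hlt hf, sub_eq_iff_eq_add] at h
  rw [setIntegral_Ico_eq hlt hf]
  simp only [halfJump, smul_apply]
  have h' : u d - ((ν {d}).toReal / 2) • A d (u d) = ∫ t in Set.Ioo c d, A t (u t) ∂ν
      + ((ν {c}).toReal / 2) • A c (u c) + u c := by
    rw [sub_eq_iff_eq_add]; refine h.trans ?_; abel
  rw [h']
  module

omit [NormedSpace ℝ E] in
lemma symInt_norm_nonneg (ν : Measure ℝ) (f : ℝ → E) (c d : ℝ) :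
    0 ≤ symInt ν (fun t => ‖f t‖) c d := by
  unfold symInt
  have h1 : 0 ≤ ∫ t in Set.Ico c d, ‖f t‖ ∂ν := integral_nonneg fun _ => norm_nonneg _
  have h2 : 0 ≤ ∫ t in Set.Ioc c d, ‖f t‖ ∂ν := integral_nonneg fun _ => norm_nonneg _
  simp only [smul_eq_mul]; positivity

lemma norm_symInt_le (ν : Measure ℝ) (f : ℝ → E) (c d : ℝ) :
    ‖symInt ν f c d‖ ≤ symInt ν (fun t => ‖f t‖) c d := by
  unfold symInt
  rw [norm_smul, smul_eq_mul, Real.norm_of_nonneg (by norm_num)]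
  gcongr
  exact (norm_add_le _ _).trans (add_le_add (norm_integral_le_integral_norm _)
    (norm_integral_le_integral_norm _))

/-- The increments of a solution are bounded by those of the increasing function
`t ↦ ∫_c^t ‖A u‖ dν`. -/
lemma IsSymSol.locallyBoundedVariationOn (hu : IsSymSol a b ν A u) :
    LocallyBoundedVariationOn u (Set.Ioo a b) := by
  intro c d hc hd
  set g : ℝ → ℝ := fun t => symInt ν (fun t => ‖A t (u t)‖) c t with hg
  have hstep : ∀ s t, c ≤ s → s ≤ t → t ≤ d →
      g t = g s + symInt ν (fun t => ‖A t (u t)‖) s t := fun s t hcs hst htd =>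
    symInt_add hcs hst (hu.integrable c t hc.1 (htd.trans_lt hd.2)).norm
  have hmono : MonotoneOn g (Set.Icc c d) := fun s hs t ht hst => by
    rw [hstep s t hs.1 hst ht.2]
    linarith [symInt_norm_nonneg ν (fun t => A t (u t)) s t]
  rcases lt_or_ge d c with hdc | hcd
  · have : Set.Ioo a b ∩ Set.Icc c d = ∅ := by simp [Set.Icc_eq_empty_of_lt hdc]
    rw [this, BoundedVariationOn, eVariationOn.subsingleton u Set.subsingleton_empty]
    simp
  have hgv := hmono.locallyBoundedVariationOn c d ⟨le_rfl, hcd⟩ ⟨hcd, le_rfl⟩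
  rw [Set.inter_self] at hgv
  refine ne_top_of_le_ne_top hgv (iSup_le ?_)
  rintro ⟨k, p, hp, hps⟩
  refine (Finset.sum_le_sum fun i _ => ?_).trans (eVariationOn.sum_le hp fun i => (hps i).2)
  have hi : p i ≤ p (i + 1) := hp (Nat.le_succ i)
  have h1 := (hps i).2
  have h2 := (hps (i + 1)).2
  have hgi := hstep _ _ h1.1 hi h2.2
  rw [edist_dist, edist_dist]
  refine ENNReal.ofReal_le_ofReal ?_
  rw [dist_eq_norm, Real.dist_eq, hu.eq _ _ (hps i).1.1 hi (hps (i + 1)).1.2, hgi,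
    add_sub_cancel_left, abs_of_nonneg (symInt_norm_nonneg ν (fun t => A t (u t)) _ _)]
  exact norm_symInt_le _ _ _ _

end fromSym

section toSym
variable {a b : ℝ} {ν : Measure ℝ} {A : ℝ → E →L[ℝ] E} {u : ℝ → E}

omit [NormedSpace ℝ E] in
/-- The left limits `l t` of `u` tend to the right limit of `u` at `x` as `t` decreases to `x`. -/
lemma tendsto_leftLim_right {x : ℝ} (hx : x < b) {l r : ℝ → E}
    (hl : ∀ t, x < t → t < b → Tendsto u (nhdsWithin t (Set.Iio t)) (nhds (l t)))
    (hr : Tendsto u (nhdsWithin x (Set.Ioi x)) (nhds (r x))) :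
    Tendsto l (nhdsWithin x (Set.Ioi x)) (nhds (r x)) := by
  refine ((closed_nhds_basis (r x)).tendsto_right_iff).2 fun V hV => ?_
  obtain ⟨e, he, heV⟩ := (mem_nhdsGT_iff_exists_Ioo_subset).1 (hr hV.1)
  filter_upwards [Ioo_mem_nhdsGT (lt_min he hx)] with t ht
  refine hV.2.mem_of_tendsto (hl t ht.1 (ht.2.trans_le (min_le_right _ _))) ?_
  filter_upwards [Ioo_mem_nhdsLT ht.1] with s hs
  exact heV ⟨hs.1, hs.2.trans (ht.2.trans_le (min_le_left _ _))⟩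

/-- Each coordinate of a function of locally bounded variation is a difference of monotone
functions. -/
lemma aestronglyMeasurable_of_boundedVariation [FiniteDimensional ℝ E] {s : Set ℝ}
    (hs : MeasurableSet s) (hu : LocallyBoundedVariationOn u s) :
    AEStronglyMeasurable u (ν.restrict s) := by
  have e : E ≃L[ℝ] (Fin (Module.finrank ℝ E) → ℝ) := (Module.finBasis ℝ E).equivFunL
  have he : LocallyBoundedVariationOn (fun t => e (u t)) s :=
    LipschitzWith.comp_locallyBoundedVariationOn e.toContinuousLinearMap.lipschitz hu
  have hm : AEMeasurable (fun t => e (u t)) (ν.restrict s) := by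
    refine aemeasurable_pi_iff.2 fun i => ?_
    have hi : LocallyBoundedVariationOn (fun t => e (u t) i) s :=
      LipschitzWith.comp_locallyBoundedVariationOn
        (f := fun x : Fin (Module.finrank ℝ E) → ℝ => x i) (LipschitzWith.eval i) he
    obtain ⟨p, q, hp, hq, hpq⟩ := hi.exists_monotoneOn_sub_monotoneOn
    rw [hpq]
    exact (aemeasurable_restrict_of_monotoneOn hs hp).sub
      (aemeasurable_restrict_of_monotoneOn hs hq)
  simpa using e.symm.continuous.comp_aestronglyMeasurable hm.aestronglyMeasurable

lemma integrableOn_apply_of_boundedVariation [FiniteDimensional ℝ E]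
    (hA : ∀ c d, a < c → d < b → IntegrableOn A (Set.Icc c d) ν)
    (hu : LocallyBoundedVariationOn u (Set.Ioo a b)) {c d : ℝ} (hc : a < c) (hd : d < b) :
    IntegrableOn (fun t => A t (u t)) (Set.Icc c d) ν := by
  rcases lt_or_ge d c with h | hcd
  · simp [Set.Icc_eq_empty_of_lt h]
  have hsub : Set.Icc c d ⊆ Set.Ioo a b := fun t ht => ⟨hc.trans_le ht.1, ht.2.trans_lt hd⟩
  have hm : AEStronglyMeasurable u (ν.restrict (Set.Icc c d)) :=
    aestronglyMeasurable_of_boundedVariation measurableSet_Icc fun p q hp hq =>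
      (hu p q (hsub hp) (hsub hq)).mono (Set.inter_subset_inter_left _ hsub)
  have hbv := hu c d (hsub ⟨le_rfl, hcd⟩) (hsub ⟨hcd, le_rfl⟩)
  rw [Set.inter_eq_right.2 hsub] at hbv
  set C := (eVariationOn u (Set.Icc c d)).toReal + ‖u c‖
  have hb : ∀ t ∈ Set.Icc c d, ‖u t‖ ≤ C := fun t ht => by
    have h1 := hbv.dist_le ht ⟨le_rfl, hcd⟩
    rw [dist_eq_norm] at h1
    calc ‖u t‖ = ‖(u t - u c) + u c‖ := by rw [sub_add_cancel]
      _ ≤ _ := (norm_add_le _ _).trans (add_le_add h1 le_rfl)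
  refine Integrable.mono' ((hA c d hc hd).norm.mul_const C)
    ((ContinuousLinearMap.id ℝ (E →L[ℝ] E)).aestronglyMeasurable_comp₂ (hA c d hc hd).1 hm) ?_
  refine (ae_restrict_iff' measurableSet_Icc).2 (ae_of_all _ fun t ht => ?_)
  exact ((A t).le_opNorm _).trans (by gcongr; exact hb t ht)

/-- Converse passage, from the equation for the left limits `l` over `[c, d)` to the symmetric one.
Letting `d` decrease to `c` gives `r - l = ν({c}) A(c) u(c)`, so that the balancing condition yields
`l = u - halfJump u`. -/
lemma isSymSol_of_leftLim [CompleteSpace E] {l r : ℝ → E}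
    (hI : ∀ c d, a < c → d < b → IntegrableOn (fun t => A t (u t)) (Set.Icc c d) ν)
    (hl : ∀ t ∈ Set.Ioo a b, Tendsto u (nhdsWithin t (Set.Iio t)) (nhds (l t)))
    (hr : ∀ t ∈ Set.Ioo a b, Tendsto u (nhdsWithin t (Set.Ioi t)) (nhds (r t)))
    (hbal : ∀ t ∈ Set.Ioo a b, u t = (1 / 2 : ℝ) • (l t + r t))
    (heq : ∀ c d, a < c → c ≤ d → d < b → l d - l c = ∫ t in Set.Ico c d, A t (u t) ∂ν) :
    IsSymSol a b ν A u := by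
  have hlu : ∀ x ∈ Set.Ioo a b, l x = u x - ((ν {x}).toReal / 2) • A x (u x) := by
    intro x hx
    obtain ⟨d, hxd, hdb⟩ := exists_between hx.2
    have h1 := tendsto_leftLim_right (l := l) (r := r) hx.2
      (fun t ht htb => hl t ⟨hx.1.trans ht, htb⟩) (hr x hx)
    have h2 := (tendsto_setIntegral_Ico_right hxd (hI x d hx.1 hdb)).const_add (l x)
    have h3 : r x = l x + (ν {x}).toReal • A x (u x) := by
      refine tendsto_nhds_unique h1 (h2.congr' ?_)
      filter_upwards [Ioo_mem_nhdsGT hxd] with t ht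
      rw [← heq x t hx.1 ht.1.le (ht.2.trans hdb)]; abel
    have h4 := hbal x hx
    rw [h3] at h4
    rw [eq_sub_iff_add_eq]
    refine Eq.trans ?_ h4.symm
    module
  refine ⟨hI, fun c d hc hcd hd => ?_⟩
  rcases hcd.eq_or_lt with rfl | hlt
  · simp
  have h := heq c d hc hcd hd
  rw [hlu d ⟨hc.trans hlt, hd⟩, hlu c ⟨hc, hlt.trans hd⟩,
    setIntegral_Ico_eq hlt (hI c d hc hd)] at h
  rw [symInt_eq_Ioo hlt (hI c d hc hd)]
  rw [sub_eq_iff_eq_add, sub_eq_iff_eq_add] at h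
  rw [sub_eq_iff_eq_add]
  refine h.trans ?_
  module

end toSym

lemma isSymSol_zero (a b : ℝ) (ν : Measure ℝ) (A : ℝ → E →L[ℝ] E) : IsSymSol a b ν A 0 :=
  ⟨fun c d _ _ => by simp, fun c d _ _ _ => by simp [symInt]⟩

/-- Real-linear maps commuting with the coefficient, such as multiplication by a complex scalar,
preserve solutions. -/
lemma IsSymSol.map [CompleteSpace E] {a b : ℝ} {ν : Measure ℝ} {A : ℝ → E →L[ℝ] E} {u : ℝ → E}
    (hu : IsSymSol a b ν A u) (L : E →L[ℝ] E) (hL : ∀ t x, A t (L x) = L (A t x)) :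
    IsSymSol a b ν A (fun t => L (u t)) := by
  refine ⟨fun c d hc hd => ?_, fun c d hc hcd hd => ?_⟩
  · simpa only [hL] using! L.integrable_comp (hu.integrable c d hc hd)
  · have hf := hu.integrable c d hc hd
    simp only [hL]
    rw [← map_sub, hu.eq c d hc hcd hd, symInt, symInt,
      L.integral_comp_comm (hf.mono_set Set.Ico_subset_Icc_self),
      L.integral_comp_comm (hf.mono_set Set.Ioc_subset_Icc_self), map_smul, map_add]

end

/-! ### Balanced solutions and the symmetric equation -/

section bridge
variable {n : ℕ}

/-- The action of a complex matrix on `ℂⁿ`, as a real-linear map of matrices into real-linear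
operators. -/
noncomputable def matOp (n : ℕ) :
    Matrix (Fin n) (Fin n) ℂ →ₗ[ℝ] (Fin n → ℂ) →L[ℝ] (Fin n → ℂ) where
  toFun B := LinearMap.toContinuousLinearMap (B.mulVecLin.restrictScalars ℝ)
  map_add' B C := by ext x : 1; simp
  map_smul' c B := by ext x : 1; simp

@[simp] lemma matOp_apply (B : Matrix (Fin n) (Fin n) ℂ) (x : Fin n → ℂ) :
    matOp n B x = B.mulVec x := rfl

lemma matOp_one : matOp n 1 = 1 := by ext x : 1; simp

lemma matOp_mul (B C : Matrix (Fin n) (Fin n) ℂ) : matOp n (B * C) = matOp n B * matOp n C := by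
  ext x : 1; simp

lemma isUnit_matOp {B : Matrix (Fin n) (Fin n) ℂ} (hB : IsUnit B) : IsUnit (matOp n B) :=
  hB.map (⟨⟨matOp n, matOp_one⟩, matOp_mul⟩ : Matrix (Fin n) (Fin n) ℂ →* _)

lemma integrableOn_sum_smul {ν : Measure ℝ} {s : Set ℝ} {F ι : Type*} [NormedAddCommGroup F]
    [NormedSpace ℝ F] [Fintype ι] {f : ι → ℝ → ℝ} (hf : ∀ i, IntegrableOn (f i) s ν) (T : ι → F) :
    IntegrableOn (fun t => ∑ i, f i t • T i) s ν :=
  integrable_finsetSum _ fun i _ => (hf i).smul_const (T i)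

/-- Integrability of the entries gives integrability in operator norm, since `M` is a real-linear
combination of fixed matrix units with the real and imaginary parts of its entries as
coefficients. -/
lemma integrableOn_matOp {ν : Measure ℝ} {M : ℝ → Matrix (Fin n) (Fin n) ℂ} {s : Set ℝ}
    (hM : ∀ i j, IntegrableOn (fun t => M t i j) s ν) :
    IntegrableOn (fun t => matOp n (M t)) s ν := by
  have h : ∀ t, matOp n (M t)
      = ∑ p : Fin n × Fin n, (M t p.1 p.2).re • matOp n (Matrix.single p.1 p.2 1)
        + ∑ p : Fin n × Fin n, (M t p.1 p.2).im • matOp n (Matrix.single p.1 p.2 Complex.I) := by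
    intro t
    conv_lhs => rw [Matrix.matrix_eq_sum_single (M t)]
    simp only [map_sum]
    rw [← Finset.sum_add_distrib, Fintype.sum_prod_type]
    refine Finset.sum_congr rfl fun i _ => Finset.sum_congr rfl fun j _ => ?_
    rw [← map_smul, ← map_smul, ← map_add, Matrix.smul_single, Matrix.smul_single,
      ← Matrix.single_add]
    congr 2
    apply Complex.ext <;> simp
  simp only [h]
  have hre : ∀ p : Fin n × Fin n, IntegrableOn (fun t => (M t p.1 p.2).re) s ν :=
    fun p => (hM p.1 p.2).re
  have him : ∀ p : Fin n × Fin n, IntegrableOn (fun t => (M t p.1 p.2).im) s ν :=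
    fun p => (hM p.1 p.2).im
  exact (integrableOn_sum_smul hre fun p => matOp n (Matrix.single p.1 p.2 1)).add
    (integrableOn_sum_smul him fun p => matOp n (Matrix.single p.1 p.2 Complex.I))

lemma half_add_eq (x y : Fin n → ℂ) : (x + y) / 2 = (1 / 2 : ℝ) • (x + y) := by
  funext i
  simp [div_eq_inv_mul, mul_add]

/-- Balanced solutions are exactly the solutions of the symmetric integral equation, in which only
the values of `u`, and no one-sided limits, appear. -/
lemma isBalancedSolution_iff {a b : ℝ} {ν : Measure ℝ} {M : ℝ → Matrix (Fin n) (Fin n) ℂ}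
    (hM : ∀ (i j : Fin n) (c d : ℝ), a < c → d < b →
      IntegrableOn (fun t => M t i j) (Set.Icc c d) ν) {u : ℝ → Fin n → ℂ} :
    IsBalancedSolution a b ν M (fun _ => 0) u ↔ IsSymSol a b ν (fun t => matOp n (M t)) u := by
  constructor
  · rintro ⟨hbv, hbal, heq⟩
    refine isSymSol_of_leftLim (l := leftLim u) (r := rightLim u)
      (fun c d hc hd => integrableOn_apply_of_boundedVariation
        (fun c d hc hd => integrableOn_matOp fun i j => hM i j c d hc hd) hbv hc hd)
      (fun t ht => (hbal t ht).1) (fun t ht => (hbal t ht).2.1)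
      (fun t ht => (hbal t ht).2.2.trans (half_add_eq _ _)) fun c d hc hcd hd => ?_
    simpa using heq c d hc hcd hd
  · intro hu
    have hl : ∀ x ∈ Set.Ioo a b,
        leftLim u x = u x - halfJump ν (fun t => matOp n (M t)) x (u x) :=
      fun x hx => leftLim_eq_of_tendsto (hu.tendsto_left hx)
    have hr : ∀ x ∈ Set.Ioo a b,
        rightLim u x = u x + halfJump ν (fun t => matOp n (M t)) x (u x) :=
      fun x hx => rightLim_eq_of_tendsto (hu.tendsto_right hx)
    refine ⟨hu.locallyBoundedVariationOn, fun x hx => ⟨?_, ?_, ?_⟩, fun c d hc hcd hd => ?_⟩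
    · rw [hl x hx]; exact hu.tendsto_left hx
    · rw [hr x hx]; exact hu.tendsto_right hx
    · rw [half_add_eq, hl x hx, hr x hx]; module
    · rw [hl d ⟨hc.trans_le hcd, hd⟩, hl c ⟨hc, hcd.trans_lt hd⟩, hu.setIntegral_Ico hc hcd hd]
      simp

end bridge

end BalancedODE

open BalancedODE

/-- **The balanced solutions of the homogeneous equation form an `n`-dimensional space.**
If `I ± Δ_r(x)/2` are invertible for all `x ∈ (a,b)`, then the set `S` of balanced
solutions of `u' = ru` on `(a,b)` is a complex vector space (it contains `0` and is closed
under addition and scalar multiplication) and, for any fixed `x0 ∈ (a,b)`, the evaluation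
map `S → ℂⁿ`, `u ↦ u(x0)`, is a (linear) bijection: it is surjective onto `ℂⁿ`, and
injective in the sense that two solutions with the same value at `x0` agree on `(a,b)`.
In particular `S` is an `n`-dimensional vector space. -/
theorem stmt_3 (a b : ℝ) (n : ℕ) (ν : Measure ℝ)
    (hν : ∀ c d : ℝ, a < c → d < b → ν (Set.Icc c d) < ⊤)
    (M : ℝ → Matrix (Fin n) (Fin n) ℂ)
    (hM : ∀ (i j : Fin n) (c d : ℝ), a < c → d < b →
      IntegrableOn (fun t => M t i j) (Set.Icc c d) ν)
    (hjump : ∀ x ∈ Set.Ioo a b,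
      IsUnit ((1 : Matrix (Fin n) (Fin n) ℂ) + ((ν {x}).toReal / 2) • M x) ∧
      IsUnit ((1 : Matrix (Fin n) (Fin n) ℂ) - ((ν {x}).toReal / 2) • M x))
    (x0 : ℝ) (hx0 : x0 ∈ Set.Ioo a b) :
    IsBalancedSolution a b ν M (fun _ => 0) (fun _ => 0) ∧
    (∀ u v : ℝ → Fin n → ℂ, IsBalancedSolution a b ν M (fun _ => 0) u →
      IsBalancedSolution a b ν M (fun _ => 0) v →
      IsBalancedSolution a b ν M (fun _ => 0) (u + v)) ∧
    (∀ (z : ℂ) (u : ℝ → Fin n → ℂ), IsBalancedSolution a b ν M (fun _ => 0) u →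
      IsBalancedSolution a b ν M (fun _ => 0) (z • u)) ∧
    (∀ y : Fin n → ℂ, ∃ u : ℝ → Fin n → ℂ,
      IsBalancedSolution a b ν M (fun _ => 0) u ∧ u x0 = y) ∧
    (∀ u v : ℝ → Fin n → ℂ, IsBalancedSolution a b ν M (fun _ => 0) u →
      IsBalancedSolution a b ν M (fun _ => 0) v → u x0 = v x0 →
      Set.EqOn u v (Set.Ioo a b)) := by
  have hA : ∀ c d, a < c → d < b → IntegrableOn (fun t => matOp n (M t)) (Set.Icc c d) ν :=
    fun c d hc hd => integrableOn_matOp fun i j => hM i j c d hc hd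
  have hU : ∀ t ∈ Set.Ioo a b, IsUnit (1 + halfJump ν (fun t => matOp n (M t)) t) ∧
      IsUnit (1 - halfJump ν (fun t => matOp n (M t)) t) := fun t ht => by
    have h1 := isUnit_matOp (hjump t ht).1
    have h2 := isUnit_matOp (hjump t ht).2
    rw [map_add, map_smul, matOp_one] at h1
    rw [map_sub, map_smul, matOp_one] at h2
    exact ⟨h1, h2⟩
  simp only [isBalancedSolution_iff hM]
  refine ⟨isSymSol_zero _ _ _ _, fun u v hu hv => ?_, fun z u hu => ?_,
    exists_isSymSol hν hA hU hx0, fun u v hu hv huv t ht => ?_⟩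
  -- The sum is written as `u - (-v)`, and `-v` is the image of `v` under the scalar `-1`.
  · have hneg := hv.map (-1) fun t x => by simp [Matrix.mulVec_neg]
    have := hu.sub hneg
    convert this using 1
    funext t; simp
  · exact hu.map (z • (1 : (Fin n → ℂ) →L[ℝ] (Fin n → ℂ))) fun t x => by
      simp [Matrix.mulVec_smul]
  · exact sub_eq_zero.1 ((hu.sub hv).eqOn_zero hν hA hU hx0 (sub_eq_zero.2 huv) t ht)
end

section
/- Assume the matrices I + Δ_r(x)/2 and I − Δ_r(x)/2 are invertible for every x ∈ (a,b). Let U : (a,b) → ℂ^{n×n} be a balanced matrix-valued function of locally bounded variation each of whose columns is a balanced solution of u' = ru, and suppose det U(x₁) ≠ 0 for some x₁ ∈ (a,b). Then det U(x) ≠ 0, det U⁻(x) ≠ 0, and det U⁺(x) ≠ 0 for every x ∈ (a,b). -/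
/-!
Pass to vectors: if `det U(x) = 0` (or `det U⁻(x) = 0`, or `det U⁺(x) = 0`), some `c ≠ 0` is killed
by the corresponding matrix, and `v = U c` is a balanced solution of `v' = r v` with `v(x) = 0` (or
`v⁻(x) = 0`, or `v⁺(x) = 0`). The theorem follows once such a `v` is known to vanish identically,
since then `U(x₁) c = 0` with `c ≠ 0`.

*Jumps.* Letting `d ↓ x` in the integral equation gives `v⁺ - v⁻ = Δ_r v` (`RegSol.jump`), so, `v`
being balanced, `v⁻ = (I - Δ_r/2) v` and `v⁺ = (I + Δ_r/2) v`. Invertibility of these two matrices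
makes `v(x) = 0`, `v⁻(x) = 0` and `v⁺(x) = 0` equivalent (`RegSol.eq_zero_of_left`,
`RegSol.eq_zero_of_right`).

*Propagation.* If `v` vanishes at `x₀`, take a one-sided open neighbourhood `J` of `x₀` so small that
`∫_J ‖M‖ dν ≤ 1/2`. The integral equation turns a bound `C` for `‖v‖` on `J` into the bound `C/2`,
hence `v = 0` on `J` (`RegSol.eqOn_zero`). So the interior of the zero set of `v` contains every
zero; a limit of zeros is also a zero, because `v⁻` or `v⁺` vanishes there. The zero set is thus
relatively clopen in the connected interval `(a,b)` (`RegSol.eq_zero`).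
-/

open MeasureTheory Filter Function

/-- The left-limit matrix `U⁻(x)`, formed columnwise. -/
noncomputable def matLeftLim {n : ℕ} (U : ℝ → Matrix (Fin n) (Fin n) ℂ) (x : ℝ) :
    Matrix (Fin n) (Fin n) ℂ :=
  Matrix.of fun i j => leftLim (fun t => U t i j) x

/-- The right-limit matrix `U⁺(x)`, formed columnwise. -/
noncomputable def matRightLim {n : ℕ} (U : ℝ → Matrix (Fin n) (Fin n) ℂ) (x : ℝ) :
    Matrix (Fin n) (Fin n) ℂ :=
  Matrix.of fun i j => rightLim (fun t => U t i j) x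

/-! ### Functions of locally bounded variation -/

lemma LocallyBoundedVariationOn.bdd_Icc {n : ℕ} {u : ℝ → Fin n → ℂ} {a b : ℝ}
    (h : LocallyBoundedVariationOn u (Set.Ioo a b)) {c d : ℝ} (hc : a < c) (hd : d < b) :
    ∃ C, ∀ t ∈ Set.Icc c d, ‖u t‖ ≤ C := by
  rcases le_or_gt c d with hcd | hcd
  · have hsub : Set.Icc c d ⊆ Set.Ioo a b := Set.Icc_subset_Ioo hc hd
    have hb := h c d (hsub ⟨le_rfl, hcd⟩) (hsub ⟨hcd, le_rfl⟩)
    rw [Set.inter_eq_self_of_subset_right hsub] at hb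
    refine ⟨‖u c‖ + (eVariationOn u (Set.Icc c d)).toReal, fun t ht => ?_⟩
    have := hb.dist_le ht ⟨le_rfl, hcd⟩
    rw [dist_eq_norm] at this
    calc ‖u t‖ = ‖u c + (u t - u c)‖ := by congr 1; abel
      _ ≤ _ := (norm_add_le _ _).trans (by gcongr)
  · exact ⟨0, fun t ht => absurd (ht.1.trans ht.2) (not_le.2 hcd)⟩

lemma LocallyBoundedVariationOn.aemeasurable_real {f : ℝ → ℝ} {s : Set ℝ}
    (h : LocallyBoundedVariationOn f s) (hs : MeasurableSet s) (ν : Measure ℝ) :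
    AEMeasurable f (ν.restrict s) := by
  obtain ⟨p, q, hp, hq, rfl⟩ := h.exists_monotoneOn_sub_monotoneOn
  exact (aemeasurable_restrict_of_monotoneOn hs hp).sub (aemeasurable_restrict_of_monotoneOn hs hq)

lemma LocallyBoundedVariationOn.aemeasurable_apply {n : ℕ} {u : ℝ → Fin n → ℂ} {s : Set ℝ}
    (h : LocallyBoundedVariationOn u s) (hs : MeasurableSet s) (ν : Measure ℝ) (i : Fin n) :
    AEMeasurable (fun t => u t i) (ν.restrict s) := by
  have hi : LipschitzWith 1 (fun w : Fin n → ℂ => w i) := LipschitzWith.eval i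
  have hre : LipschitzWith 1 Complex.re := by
    refine LipschitzWith.of_dist_le_mul fun z w => ?_
    simpa [Real.dist_eq, Complex.dist_eq] using Complex.abs_re_le_norm (z - w)
  have him : LipschitzWith 1 Complex.im := by
    refine LipschitzWith.of_dist_le_mul fun z w => ?_
    simpa [Real.dist_eq, Complex.dist_eq] using Complex.abs_im_le_norm (z - w)
  have h1 : AEMeasurable (fun t => (u t i).re) (ν.restrict s) :=
    ((hre.comp hi).comp_locallyBoundedVariationOn h).aemeasurable_real hs ν
  have h2 : AEMeasurable (fun t => (u t i).im) (ν.restrict s) :=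
    ((him.comp hi).comp_locallyBoundedVariationOn h).aemeasurable_real hs ν
  have h3 := (Complex.measurable_ofReal.comp_aemeasurable h1).add
    ((Complex.measurable_ofReal.comp_aemeasurable h2).mul_const Complex.I)
  refine h3.congr (Eventually.of_forall fun t => ?_)
  simp [Complex.re_add_im]

/-! ### Integrals over shrinking intervals -/

/-- The punctured interval `(x,e)` shrinks to the empty set as `e ↓ x`, so no atom at `x`
contributes. -/
lemma tendsto_integral_Ioo_right {E : Type*} [NormedAddCommGroup E] [NormedSpace ℝ E]
    {ν : Measure ℝ} {f : ℝ → E} {x q : ℝ} (hq : x < q) (hf : IntegrableOn f (Set.Icc x q) ν) :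
    Tendsto (fun e => ∫ t in Set.Ioo x e, f t ∂ν) (nhdsWithin x (Set.Ioi x)) (nhds 0) := by
  have key : Tendsto (fun e => ∫ t in Set.Icc x q, (Set.Ioo x e).indicator f t ∂ν)
      (nhdsWithin x (Set.Ioi x)) (nhds (∫ t in Set.Icc x q, (0 : E) ∂ν)) := by
    refine tendsto_integral_filter_of_dominated_convergence (fun t => ‖f t‖) ?_ ?_ hf.norm ?_
    · exact Eventually.of_forall fun e => hf.aestronglyMeasurable.indicator measurableSet_Ioo
    · exact Eventually.of_forall fun e => Eventually.of_forall fun t =>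
        norm_indicator_le_norm_self _ _
    · refine Eventually.of_forall fun t => tendsto_const_nhds.congr' ?_
      rcases le_or_gt t x with ht | ht
      · exact Eventually.of_forall fun e =>
          (Set.indicator_of_notMem (fun h => absurd h.1 (not_lt.2 ht)) _).symm
      · filter_upwards [Ioo_mem_nhdsGT ht] with e he
        exact (Set.indicator_of_notMem (fun h => absurd h.2 (not_lt.2 he.2.le)) _).symm
  rw [integral_zero] at key
  refine key.congr' ?_
  filter_upwards [Ioo_mem_nhdsGT hq] with e he
  rw [setIntegral_indicator measurableSet_Ioo, Set.inter_eq_self_of_subset_right]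
  exact fun t ht => ⟨ht.1.le, (ht.2.trans he.2).le⟩

lemma tendsto_integral_Ioo_left {E : Type*} [NormedAddCommGroup E] [NormedSpace ℝ E]
    {ν : Measure ℝ} {f : ℝ → E} {x p : ℝ} (hp : p < x) (hf : IntegrableOn f (Set.Icc p x) ν) :
    Tendsto (fun e => ∫ t in Set.Ioo e x, f t ∂ν) (nhdsWithin x (Set.Iio x)) (nhds 0) := by
  have key : Tendsto (fun e => ∫ t in Set.Icc p x, (Set.Ioo e x).indicator f t ∂ν)
      (nhdsWithin x (Set.Iio x)) (nhds (∫ t in Set.Icc p x, (0 : E) ∂ν)) := by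
    refine tendsto_integral_filter_of_dominated_convergence (fun t => ‖f t‖) ?_ ?_ hf.norm ?_
    · exact Eventually.of_forall fun e => hf.aestronglyMeasurable.indicator measurableSet_Ioo
    · exact Eventually.of_forall fun e => Eventually.of_forall fun t =>
        norm_indicator_le_norm_self _ _
    · refine Eventually.of_forall fun t => tendsto_const_nhds.congr' ?_
      rcases le_or_gt x t with ht | ht
      · exact Eventually.of_forall fun e =>
          (Set.indicator_of_notMem (fun h => absurd h.2 (not_lt.2 ht)) _).symm
      · filter_upwards [Ioo_mem_nhdsLT ht] with e he
        exact (Set.indicator_of_notMem (fun h => absurd h.1 (not_lt.2 he.1.le)) _).symm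
  rw [integral_zero] at key
  refine key.congr' ?_
  filter_upwards [Ioo_mem_nhdsLT hp] with e he
  rw [setIntegral_indicator measurableSet_Ioo, Set.inter_eq_self_of_subset_right]
  exact fun t ht => ⟨(he.1.trans ht.1).le, ht.2.le⟩

/-! ### Regulated homogeneous solutions -/

/-- A balanced solution `v` of `v' = M v dν` on `(a,b)`, with its left and right limits `vl`, `vr`
carried as explicit data, and with bounded variation weakened to local boundedness and local
integrability of `M v`. In this form closure under linear combinations is immediate. -/
structure RegSol {n : ℕ} (a b : ℝ) (ν : Measure ℝ) (M : ℝ → Matrix (Fin n) (Fin n) ℂ)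
    (v vl vr : ℝ → Fin n → ℂ) : Prop where
  left : ∀ x ∈ Set.Ioo a b, Tendsto v (nhdsWithin x (Set.Iio x)) (nhds (vl x))
  right : ∀ x ∈ Set.Ioo a b, Tendsto v (nhdsWithin x (Set.Ioi x)) (nhds (vr x))
  avg : ∀ x ∈ Set.Ioo a b, v x = (1 / 2 : ℝ) • (vl x + vr x)
  bdd : ∀ c d : ℝ, a < c → d < b → ∃ C, ∀ t ∈ Set.Icc c d, ‖v t‖ ≤ C
  int : ∀ c d : ℝ, a < c → d < b → IntegrableOn (fun t => (M t).mulVec (v t)) (Set.Icc c d) ν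
  eq : ∀ c d : ℝ, a < c → c ≤ d → d < b →
    vl d - vl c = ∫ t in Set.Ico c d, (M t).mulVec (v t) ∂ν

/-- The sum of the absolute values of the entries, which bounds the operator norm of the matrix
with respect to the sup norm. -/
noncomputable def entrySum {n : ℕ} (A : Matrix (Fin n) (Fin n) ℂ) : ℝ := ∑ i, ∑ j, ‖A i j‖

lemma entrySum_nonneg {n : ℕ} (A : Matrix (Fin n) (Fin n) ℂ) : 0 ≤ entrySum A :=
  Finset.sum_nonneg fun _ _ => Finset.sum_nonneg fun _ _ => norm_nonneg _

lemma norm_mulVec_le_entrySum {n : ℕ} (A : Matrix (Fin n) (Fin n) ℂ) (w : Fin n → ℂ) :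
    ‖A.mulVec w‖ ≤ entrySum A * ‖w‖ := by
  refine (pi_norm_le_iff_of_nonneg (mul_nonneg (entrySum_nonneg A) (norm_nonneg w))).2 fun i => ?_
  calc ‖A.mulVec w i‖ = ‖∑ j, A i j * w j‖ := rfl
    _ ≤ ∑ j, ‖A i j‖ * ‖w‖ := by
        refine (norm_sum_le _ _).trans (Finset.sum_le_sum fun j _ => ?_)
        rw [norm_mul]
        gcongr
        exact norm_le_pi_norm w j
    _ = (∑ j, ‖A i j‖) * ‖w‖ := by rw [Finset.sum_mul]
    _ ≤ entrySum A * ‖w‖ := by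
        gcongr
        exact Finset.single_le_sum (f := fun i => ∑ j, ‖A i j‖)
          (fun i _ => Finset.sum_nonneg fun _ _ => norm_nonneg _) (Finset.mem_univ i)

lemma IsBalancedSolution.regSol {n : ℕ} {a b : ℝ} {ν : Measure ℝ}
    {M : ℝ → Matrix (Fin n) (Fin n) ℂ} {u : ℝ → Fin n → ℂ}
    (hM : ∀ (i j : Fin n) (c d : ℝ), a < c → d < b →
      IntegrableOn (fun t => M t i j) (Set.Icc c d) ν)
    (h : IsBalancedSolution a b ν M (fun _ => 0) u) :
    RegSol a b ν M u (leftLim u) (rightLim u) := by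
  obtain ⟨hbv, hbal, heq⟩ := h
  refine ⟨fun x hx => (hbal x hx).1, fun x hx => (hbal x hx).2.1, fun x hx => ?_,
    fun c d hc hd => hbv.bdd_Icc hc hd, fun c d hc hd => ?_, fun c d hc hcd hd => ?_⟩
  · rw [(hbal x hx).2.2]
    ext i
    simp [Complex.real_smul]
    ring
  · obtain ⟨C, hC⟩ := hbv.bdd_Icc hc hd
    refine Integrable.of_eval fun i => ?_
    change Integrable (fun t => ∑ j, M t i j * u t j) (ν.restrict (Set.Icc c d))
    refine integrable_finsetSum _ fun j _ => ?_
    refine (hM i j c d hc hd).mul_bdd (c := C) ?_ ?_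
    · exact ((hbv.aemeasurable_apply measurableSet_Ioo ν j).mono_measure
        (Measure.restrict_mono (Set.Icc_subset_Ioo hc hd) le_rfl)).aestronglyMeasurable
    · refine (ae_restrict_iff' measurableSet_Icc).2 (Eventually.of_forall fun t ht => ?_)
      exact (norm_le_pi_norm (u t) j).trans (hC t ht)
  · rw [heq c d hc hcd hd]
    simp

lemma RegSol.smul {n : ℕ} {a b : ℝ} {ν : Measure ℝ} {M : ℝ → Matrix (Fin n) (Fin n) ℂ}
    {v vl vr : ℝ → Fin n → ℂ} (h : RegSol a b ν M v vl vr) (k : ℂ) :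
    RegSol a b ν M (fun t => k • v t) (fun t => k • vl t) (fun t => k • vr t) := by
  refine ⟨fun x hx => (h.left x hx).const_smul k, fun x hx => (h.right x hx).const_smul k,
    fun x hx => ?_, fun c d hc hd => ?_, fun c d hc hd => ?_, fun c d hc hcd hd => ?_⟩
  · rw [h.avg x hx, smul_comm, smul_add]
  · obtain ⟨C, hC⟩ := h.bdd c d hc hd
    refine ⟨‖k‖ * C, fun t ht => ?_⟩
    rw [norm_smul]
    exact mul_le_mul_of_nonneg_left (hC t ht) (norm_nonneg k)
  · simp only [Matrix.mulVec_smul]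
    exact (h.int c d hc hd).smul k
  · simp only [Matrix.mulVec_smul]
    rw [integral_smul, ← h.eq c d hc hcd hd, smul_sub]

lemma RegSol.add {n : ℕ} {a b : ℝ} {ν : Measure ℝ} {M : ℝ → Matrix (Fin n) (Fin n) ℂ}
    {v vl vr w wl wr : ℝ → Fin n → ℂ} (h : RegSol a b ν M v vl vr) (h' : RegSol a b ν M w wl wr) :
    RegSol a b ν M (fun t => v t + w t) (fun t => vl t + wl t) (fun t => vr t + wr t) := by
  refine ⟨fun x hx => (h.left x hx).add (h'.left x hx),
    fun x hx => (h.right x hx).add (h'.right x hx),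
    fun x hx => ?_, fun c d hc hd => ?_, fun c d hc hd => ?_, fun c d hc hcd hd => ?_⟩
  · rw [h.avg x hx, h'.avg x hx, ← smul_add]
    congr 1
    abel
  · obtain ⟨C, hC⟩ := h.bdd c d hc hd
    obtain ⟨C', hC'⟩ := h'.bdd c d hc hd
    exact ⟨C + C', fun t ht => (norm_add_le _ _).trans (add_le_add (hC t ht) (hC' t ht))⟩
  · simp only [Matrix.mulVec_add]
    exact (h.int c d hc hd).add (h'.int c d hc hd)
  · simp only [Matrix.mulVec_add]
    rw [integral_add ((h.int c d hc hd).mono_set Set.Ico_subset_Icc_self)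
      ((h'.int c d hc hd).mono_set Set.Ico_subset_Icc_self), ← h.eq c d hc hcd hd,
      ← h'.eq c d hc hcd hd]
    abel

lemma RegSol.zero {n : ℕ} {a b : ℝ} {ν : Measure ℝ} {M : ℝ → Matrix (Fin n) (Fin n) ℂ} :
    RegSol a b ν M (fun _ => 0) (fun _ => 0) (fun _ => 0) := by
  refine ⟨fun x hx => tendsto_const_nhds, fun x hx => tendsto_const_nhds,
    fun x hx => ?_, fun c d hc hd => ⟨0, fun t _ => ?_⟩, fun c d hc hd => ?_,
    fun c d hc hcd hd => ?_⟩ <;> simp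

lemma RegSol.sum {n : ℕ} {a b : ℝ} {ν : Measure ℝ} {M : ℝ → Matrix (Fin n) (Fin n) ℂ}
    {ι : Type*} (s : Finset ι) {v vl vr : ι → ℝ → Fin n → ℂ}
    (h : ∀ j, RegSol a b ν M (v j) (vl j) (vr j)) :
    RegSol a b ν M (fun t => ∑ j ∈ s, v j t) (fun t => ∑ j ∈ s, vl j t)
      (fun t => ∑ j ∈ s, vr j t) := by
  classical
  induction s using Finset.induction_on with
  | empty => simpa using RegSol.zero
  | insert i s hi ih =>
    simp only [Finset.sum_insert hi]
    exact (h i).add ih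

/-! ### The jump condition -/

/-- `v⁻` and `v` have the same limit from the right: `v⁻(e)` is a limit of values of `v` at points of
`(x,e)`, and these lie close to `v⁺(x)`. -/
lemma RegSol.tendsto_left_limit {n : ℕ} {a b : ℝ} {ν : Measure ℝ}
    {M : ℝ → Matrix (Fin n) (Fin n) ℂ} {v vl vr : ℝ → Fin n → ℂ} (h : RegSol a b ν M v vl vr)
    {x : ℝ} (hx : x ∈ Set.Ioo a b) :
    Tendsto vl (nhdsWithin x (Set.Ioi x)) (nhds (vr x)) := by
  rw [(Metric.nhds_basis_closedBall).tendsto_right_iff]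
  intro ε hε
  have h1 := (h.right x hx).eventually (Metric.closedBall_mem_nhds (vr x) hε)
  obtain ⟨q, hq, hqs⟩ := (mem_nhdsGT_iff_exists_Ioo_subset).1 h1
  filter_upwards [Ioo_mem_nhdsGT (lt_min (Set.mem_Ioi.1 hq) hx.2)] with e he
  have heq : e < q := he.2.trans_le (min_le_left _ _)
  have heb : e < b := he.2.trans_le (min_le_right _ _)
  refine Metric.isClosed_closedBall.mem_of_tendsto (h.left e ⟨hx.1.trans he.1, heb⟩) ?_
  filter_upwards [Ioo_mem_nhdsLT he.1] with t ht
  exact hqs ⟨ht.1, ht.2.trans heq⟩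

lemma RegSol.jump {n : ℕ} {a b : ℝ} {ν : Measure ℝ}
    {M : ℝ → Matrix (Fin n) (Fin n) ℂ} {v vl vr : ℝ → Fin n → ℂ} (h : RegSol a b ν M v vl vr)
    {x : ℝ} (hx : x ∈ Set.Ioo a b) :
    vr x - vl x = (ν {x}).toReal • (M x).mulVec (v x) := by
  obtain ⟨q, hxq, hqb⟩ := exists_between hx.2
  have h1 : Tendsto (fun e => vl e - vl x) (nhdsWithin x (Set.Ioi x)) (nhds (vr x - vl x)) :=
    (h.tendsto_left_limit hx).sub_const _
  have h2 : Tendsto (fun e => (ν {x}).toReal • (M x).mulVec (v x) +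
      ∫ t in Set.Ioo x e, (M t).mulVec (v t) ∂ν) (nhdsWithin x (Set.Ioi x))
      (nhds ((ν {x}).toReal • (M x).mulVec (v x) + 0)) :=
    (tendsto_integral_Ioo_right hxq (h.int x q hx.1 hqb)).const_add _
  rw [add_zero] at h2
  refine tendsto_nhds_unique (h1.congr' ?_) h2
  filter_upwards [Ioo_mem_nhdsGT hxq] with e he
  have hI := h.int x q hx.1 hqb
  rw [h.eq x e hx.1 he.1.le (he.2.trans hqb), ← Set.Ioo_insert_left he.1, Set.insert_eq,
    setIntegral_union (by simp) measurableSet_Ioo, integral_singleton]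
  · rfl
  · exact hI.mono_set (Set.singleton_subset_iff.2 ⟨le_rfl, hxq.le⟩)
  · exact hI.mono_set fun t ht => ⟨ht.1.le, (ht.2.trans he.2).le⟩

lemma RegSol.left_eq {n : ℕ} {a b : ℝ} {ν : Measure ℝ}
    {M : ℝ → Matrix (Fin n) (Fin n) ℂ} {v vl vr : ℝ → Fin n → ℂ} (h : RegSol a b ν M v vl vr)
    {x : ℝ} (hx : x ∈ Set.Ioo a b) :
    vl x = ((1 : Matrix (Fin n) (Fin n) ℂ) - ((ν {x}).toReal / 2) • M x).mulVec (v x) := by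
  have h1 : vr x = vl x + (ν {x}).toReal • (M x).mulVec (v x) := by rw [← h.jump hx]; abel
  have h2 := h.avg x hx
  rw [Matrix.sub_mulVec, Matrix.one_mulVec, Matrix.smul_mulVec]
  set w := (M x).mulVec (v x)
  rw [h2, h1]
  module

lemma RegSol.right_eq {n : ℕ} {a b : ℝ} {ν : Measure ℝ}
    {M : ℝ → Matrix (Fin n) (Fin n) ℂ} {v vl vr : ℝ → Fin n → ℂ} (h : RegSol a b ν M v vl vr)
    {x : ℝ} (hx : x ∈ Set.Ioo a b) :
    vr x = ((1 : Matrix (Fin n) (Fin n) ℂ) + ((ν {x}).toReal / 2) • M x).mulVec (v x) := by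
  have h1 : vl x = vr x - (ν {x}).toReal • (M x).mulVec (v x) := by rw [← h.jump hx]; abel
  have h2 := h.avg x hx
  rw [Matrix.add_mulVec, Matrix.one_mulVec, Matrix.smul_mulVec]
  set w := (M x).mulVec (v x)
  rw [h2, h1]
  module

lemma RegSol.eq_zero_of_left {n : ℕ} {a b : ℝ} {ν : Measure ℝ}
    {M : ℝ → Matrix (Fin n) (Fin n) ℂ} {v vl vr : ℝ → Fin n → ℂ} (h : RegSol a b ν M v vl vr)
    {x : ℝ} (hx : x ∈ Set.Ioo a b)
    (hu : IsUnit ((1 : Matrix (Fin n) (Fin n) ℂ) - ((ν {x}).toReal / 2) • M x))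
    (h0 : vl x = 0) : v x = 0 := by
  refine Matrix.mulVec_injective_of_isUnit hu ?_
  rw [← h.left_eq hx, h0, Matrix.mulVec_zero]

lemma RegSol.eq_zero_of_right {n : ℕ} {a b : ℝ} {ν : Measure ℝ}
    {M : ℝ → Matrix (Fin n) (Fin n) ℂ} {v vl vr : ℝ → Fin n → ℂ} (h : RegSol a b ν M v vl vr)
    {x : ℝ} (hx : x ∈ Set.Ioo a b)
    (hu : IsUnit ((1 : Matrix (Fin n) (Fin n) ℂ) + ((ν {x}).toReal / 2) • M x))
    (h0 : vr x = 0) : v x = 0 := by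
  refine Matrix.mulVec_injective_of_isUnit hu ?_
  rw [← h.right_eq hx, h0, Matrix.mulVec_zero]

/-! ### Propagation of zeros -/

/-- The contraction step: where the total mass of `M dν` is at most `1/2` and `v⁻` is controlled by
the integral of `M v`, any bound for `v` can be halved, so `v = 0`. -/
lemma RegSol.eqOn_zero {n : ℕ} {a b : ℝ} {ν : Measure ℝ}
    {M : ℝ → Matrix (Fin n) (Fin n) ℂ} {v vl vr : ℝ → Fin n → ℂ} (h : RegSol a b ν M v vl vr)
    {p q : ℝ} (hp : a < p) (hq : q < b)
    (hφ : IntegrableOn (fun t => entrySum (M t)) (Set.Ioo p q) ν)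
    (hsmall : ∫ t in Set.Ioo p q, entrySum (M t) ∂ν ≤ 1 / 2)
    (H : ∀ d ∈ Set.Ioo p q, ‖vl d‖ ≤ ∫ t in Set.Ioo p q, ‖(M t).mulVec (v t)‖ ∂ν) :
    ∀ d ∈ Set.Ioo p q, v d = 0 := by
  have half : ∀ C, 0 ≤ C → (∀ t ∈ Set.Ioo p q, ‖v t‖ ≤ C) → ∀ t ∈ Set.Ioo p q, ‖v t‖ ≤ C / 2 := by
    intro C hC0 hC
    have hl : ∀ d ∈ Set.Ioo p q, ‖vl d‖ ≤ C / 2 := by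
      intro d hd
      calc ‖vl d‖ ≤ ∫ t in Set.Ioo p q, ‖(M t).mulVec (v t)‖ ∂ν := H d hd
        _ ≤ ∫ t in Set.Ioo p q, entrySum (M t) * C ∂ν := by
            refine setIntegral_mono_on
              ((h.int p q hp hq).mono_set Set.Ioo_subset_Icc_self).norm (hφ.mul_const C)
              measurableSet_Ioo fun t ht => ?_
            exact (norm_mulVec_le_entrySum _ _).trans
              (mul_le_mul_of_nonneg_left (hC t ht) (entrySum_nonneg _))
        _ = (∫ t in Set.Ioo p q, entrySum (M t) ∂ν) * C := integral_mul_const _ _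
        _ ≤ 1 / 2 * C := mul_le_mul_of_nonneg_right hsmall hC0
        _ = C / 2 := by ring
    intro d hd
    have hdab : d ∈ Set.Ioo a b := ⟨hp.trans hd.1, hd.2.trans hq⟩
    have hr : ‖vr d‖ ≤ C / 2 := by
      refine le_of_tendsto (h.tendsto_left_limit hdab).norm ?_
      filter_upwards [Ioo_mem_nhdsGT hd.2] with e he
      exact hl e ⟨hd.1.trans he.1, he.2⟩
    rw [h.avg d hdab, norm_smul]
    have := norm_add_le (vl d) (vr d)
    have := hl d hd
    norm_num
    linarith
  obtain ⟨C, hC⟩ := h.bdd p q hp hq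
  intro d hd
  have hC0 : 0 ≤ C := (norm_nonneg _).trans (hC d (Set.Ioo_subset_Icc_self hd))
  have hk : ∀ k : ℕ, ∀ t ∈ Set.Ioo p q, ‖v t‖ ≤ C * (1 / 2) ^ k := by
    intro k
    induction k with
    | zero => simpa using fun t h1 h2 => hC t ⟨le_of_lt h1, le_of_lt h2⟩
    | succ k ih =>
      intro t ht
      have := half _ (by positivity) ih t ht
      rw [pow_succ]
      linarith
  have hlim : Tendsto (fun k : ℕ => C * (1 / 2 : ℝ) ^ k) atTop (nhds (C * 0)) :=
    (tendsto_pow_atTop_nhds_zero_of_lt_one (by norm_num) (by norm_num)).const_mul C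
  rw [mul_zero] at hlim
  exact norm_le_zero_iff.1 (ge_of_tendsto' hlim fun k => hk k d hd)

lemma RegSol.eventually_zero_right {n : ℕ} {a b : ℝ} {ν : Measure ℝ}
    {M : ℝ → Matrix (Fin n) (Fin n) ℂ} {v vl vr : ℝ → Fin n → ℂ} (h : RegSol a b ν M v vl vr)
    (hφ : ∀ c d, a < c → d < b → IntegrableOn (fun t => entrySum (M t)) (Set.Icc c d) ν)
    {x : ℝ} (hx : x ∈ Set.Ioo a b) (h0 : v x = 0) :
    ∀ᶠ t in nhdsWithin x (Set.Ioi x), v t = 0 := by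
  obtain ⟨r, hxr, hrb⟩ := exists_between hx.2
  have h1 := (tendsto_integral_Ioo_right hxr (hφ x r hx.1 hrb)).eventually
    (ge_mem_nhds (show (0 : ℝ) < 1 / 2 by norm_num))
  obtain ⟨q, hq, hxq, hqr⟩ := (h1.and (Ioo_mem_nhdsGT hxr)).exists
  have hqb := hqr.trans hrb
  have hl0 : vl x = 0 := by rw [h.left_eq hx, h0, Matrix.mulVec_zero]
  filter_upwards [Ioo_mem_nhdsGT hxq] with d hd
  refine h.eqOn_zero hx.1 hqb ((hφ x q hx.1 hqb).mono_set Set.Ioo_subset_Icc_self) hq ?_ d hd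
  intro e he
  have hI : IntegrableOn (fun t => ‖(M t).mulVec (v t)‖) (Set.Icc x q) ν :=
    (h.int x q hx.1 hqb).norm
  calc ‖vl e‖ = ‖vl e - vl x‖ := by rw [hl0, sub_zero]
    _ = ‖∫ t in Set.Ico x e, (M t).mulVec (v t) ∂ν‖ := by
        rw [h.eq x e hx.1 he.1.le (he.2.trans hqb)]
    _ ≤ ∫ t in Set.Ico x e, ‖(M t).mulVec (v t)‖ ∂ν := norm_integral_le_integral_norm _
    _ ≤ ∫ t in Set.Ico x q, ‖(M t).mulVec (v t)‖ ∂ν :=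
        setIntegral_mono_set (hI.mono_set Set.Ico_subset_Icc_self)
          (Eventually.of_forall fun t => norm_nonneg _)
          (Set.Ico_subset_Ico_right he.2.le).eventuallyLE
    _ = ∫ t in Set.Ioo x q, ‖(M t).mulVec (v t)‖ ∂ν := by
        -- An atom of `ν` at `x` does not matter, since the integrand vanishes there.
        refine setIntegral_eq_of_subset_of_forall_sdiff_eq_zero measurableSet_Ico
          Set.Ioo_subset_Ico_self fun t ht => ?_
        have : t = x := by
          by_contra hne
          exact ht.2 ⟨lt_of_le_of_ne ht.1.1 (Ne.symm hne), ht.1.2⟩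
        rw [this, h0, Matrix.mulVec_zero, norm_zero]

lemma RegSol.eventually_zero_left {n : ℕ} {a b : ℝ} {ν : Measure ℝ}
    {M : ℝ → Matrix (Fin n) (Fin n) ℂ} {v vl vr : ℝ → Fin n → ℂ} (h : RegSol a b ν M v vl vr)
    (hφ : ∀ c d, a < c → d < b → IntegrableOn (fun t => entrySum (M t)) (Set.Icc c d) ν)
    {x : ℝ} (hx : x ∈ Set.Ioo a b) (h0 : v x = 0) :
    ∀ᶠ t in nhdsWithin x (Set.Iio x), v t = 0 := by
  obtain ⟨r, har, hrx⟩ := exists_between hx.1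
  have h1 := (tendsto_integral_Ioo_left hrx (hφ r x har hx.2)).eventually
    (ge_mem_nhds (show (0 : ℝ) < 1 / 2 by norm_num))
  obtain ⟨p, hp, hrp, hpx⟩ := (h1.and (Ioo_mem_nhdsLT hrx)).exists
  have hap := har.trans hrp
  have hl0 : vl x = 0 := by rw [h.left_eq hx, h0, Matrix.mulVec_zero]
  filter_upwards [Ioo_mem_nhdsLT hpx] with d hd
  refine h.eqOn_zero hap hx.2 ((hφ p x hap hx.2).mono_set Set.Ioo_subset_Icc_self) hp ?_ d hd
  intro e he
  have hI : IntegrableOn (fun t => ‖(M t).mulVec (v t)‖) (Set.Icc p x) ν :=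
    (h.int p x hap hx.2).norm
  calc ‖vl e‖ = ‖vl x - vl e‖ := by rw [hl0, zero_sub, norm_neg]
    _ = ‖∫ t in Set.Ico e x, (M t).mulVec (v t) ∂ν‖ := by
        rw [h.eq e x (hap.trans he.1) he.2.le hx.2]
    _ ≤ ∫ t in Set.Ico e x, ‖(M t).mulVec (v t)‖ ∂ν := norm_integral_le_integral_norm _
    _ ≤ ∫ t in Set.Ioo p x, ‖(M t).mulVec (v t)‖ ∂ν :=
        setIntegral_mono_set (hI.mono_set Set.Ioo_subset_Icc_self)
          (Eventually.of_forall fun t => norm_nonneg _)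
          (LE.le.eventuallyLE fun t ht => ⟨he.1.trans_le ht.1, ht.2⟩)

/-- A zero of `v` propagates to the whole interval, the zero set being relatively open and closed. -/
lemma RegSol.eq_zero {n : ℕ} {a b : ℝ} {ν : Measure ℝ}
    {M : ℝ → Matrix (Fin n) (Fin n) ℂ} {v vl vr : ℝ → Fin n → ℂ} (h : RegSol a b ν M v vl vr)
    (hφ : ∀ c d, a < c → d < b → IntegrableOn (fun t => entrySum (M t)) (Set.Icc c d) ν)
    (hjump : ∀ x ∈ Set.Ioo a b,
      IsUnit ((1 : Matrix (Fin n) (Fin n) ℂ) + ((ν {x}).toReal / 2) • M x) ∧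
      IsUnit ((1 : Matrix (Fin n) (Fin n) ℂ) - ((ν {x}).toReal / 2) • M x))
    {x : ℝ} (hx : x ∈ Set.Ioo a b) (h0 : v x = 0) :
    ∀ y ∈ Set.Ioo a b, v y = 0 := by
  have hopen : IsOpen {y | y ∈ Set.Ioo a b ∧ v y = 0} := by
    rw [isOpen_iff_mem_nhds]
    rintro y ⟨hy, hy0⟩
    refine Filter.inter_mem (Ioo_mem_nhds hy.1 hy.2) ?_
    change ∀ᶠ t in nhds y, v t = 0
    rw [← nhdsLT_sup_nhdsGE, ← Set.Ioi_insert, nhdsWithin_insert, eventually_sup, eventually_sup]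
    exact ⟨h.eventually_zero_left hφ hy hy0, by simpa using hy0, h.eventually_zero_right hφ hy hy0⟩
  have hsub : Set.Ioo a b ⊆ {y | y ∈ Set.Ioo a b ∧ v y = 0} := by
    refine isPreconnected_Ioo.subset_of_closure_inter_subset hopen ⟨x, hx, hx, h0⟩ ?_
    rintro y ⟨hyc, hy⟩
    refine ⟨hy, ?_⟩
    rw [mem_closure_iff_frequently, ← nhdsLT_sup_nhdsGE, ← Set.Ioi_insert, nhdsWithin_insert,
      frequently_sup, frequently_sup] at hyc
    rcases hyc with hyc | hyc | hyc
    · exact h.eq_zero_of_left hy (hjump y hy).2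
        (isClosed_singleton.mem_of_frequently_of_tendsto (hyc.mono fun t ht => ht.2) (h.left y hy))
    · exact (by simpa using hyc : y ∈ Set.Ioo a b ∧ v y = 0).2
    · exact h.eq_zero_of_right hy (hjump y hy).1
        (isClosed_singleton.mem_of_frequently_of_tendsto (hyc.mono fun t ht => ht.2) (h.right y hy))
  exact fun y hy => (hsub hy).2

/-! ### The determinant of a fundamental matrix -/

/-- Linear combinations of the columns of `U`, with one-sided limits taken columnwise. -/
lemma regSol_mulVec {n : ℕ} {a b : ℝ} {ν : Measure ℝ} {M : ℝ → Matrix (Fin n) (Fin n) ℂ}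
    (hM : ∀ (i j : Fin n) (c d : ℝ), a < c → d < b →
      IntegrableOn (fun t => M t i j) (Set.Icc c d) ν)
    {U : ℝ → Matrix (Fin n) (Fin n) ℂ}
    (hcol : ∀ j : Fin n, IsBalancedSolution a b ν M (fun _ => 0) (fun x i => U x i j))
    (k : Fin n → ℂ) :
    ∃ vl vr, RegSol a b ν M (fun x => (U x).mulVec k) vl vr ∧ ∀ x ∈ Set.Ioo a b,
      vl x = (matLeftLim U x).mulVec k ∧ vr x = (matRightLim U x).mulVec k := by
  have hreg := fun j => (hcol j).regSol hM
  have hsum := RegSol.sum Finset.univ fun j => (hreg j).smul (k j)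
  refine ⟨fun x => ∑ j, k j • leftLim (fun x i => U x i j) x,
    fun x => ∑ j, k j • rightLim (fun x i => U x i j) x, ?_, fun x hx => ⟨?_, ?_⟩⟩
  · convert hsum using 2 with x
    ext i
    simp [Matrix.mulVec, dotProduct, mul_comm]
  · ext i
    simp only [Finset.sum_apply, Pi.smul_apply, smul_eq_mul, Matrix.mulVec, dotProduct, matLeftLim,
      Matrix.of_apply]
    refine Finset.sum_congr rfl fun j _ => ?_
    rw [mul_comm]
    congr 1
    exact (leftLim_eq_of_tendsto (tendsto_pi_nhds.1 ((hreg j).left x hx) i)).symm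
  · ext i
    simp only [Finset.sum_apply, Pi.smul_apply, smul_eq_mul, Matrix.mulVec, dotProduct, matRightLim,
      Matrix.of_apply]
    refine Finset.sum_congr rfl fun j _ => ?_
    rw [mul_comm]
    congr 1
    exact (rightLim_eq_of_tendsto (tendsto_pi_nhds.1 ((hreg j).right x hx) i)).symm

/-- **Nonvanishing of the determinant of a fundamental matrix.**  Assume
`I ± Δ_r(x)/2` invertible on `(a,b)`.  If every column of the balanced matrix function
`U` is a balanced solution of `u' = ru` and `det U(x₁) ≠ 0` for some `x₁ ∈ (a,b)`, then
`det U(x) ≠ 0`, `det U⁻(x) ≠ 0` and `det U⁺(x) ≠ 0` for every `x ∈ (a,b)`. -/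
theorem stmt_4 (a b : ℝ) (n : ℕ) (ν : Measure ℝ)
    (hν : ∀ c d : ℝ, a < c → d < b → ν (Set.Icc c d) < ⊤)
    (M : ℝ → Matrix (Fin n) (Fin n) ℂ)
    (hM : ∀ (i j : Fin n) (c d : ℝ), a < c → d < b →
      IntegrableOn (fun t => M t i j) (Set.Icc c d) ν)
    (hjump : ∀ x ∈ Set.Ioo a b,
      IsUnit ((1 : Matrix (Fin n) (Fin n) ℂ) + ((ν {x}).toReal / 2) • M x) ∧
      IsUnit ((1 : Matrix (Fin n) (Fin n) ℂ) - ((ν {x}).toReal / 2) • M x))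
    (U : ℝ → Matrix (Fin n) (Fin n) ℂ)
    (hcol : ∀ j : Fin n,
      IsBalancedSolution a b ν M (fun _ => 0) (fun x i => U x i j))
    (x1 : ℝ) (hx1 : x1 ∈ Set.Ioo a b) (hdet : (U x1).det ≠ 0) :
    ∀ x ∈ Set.Ioo a b,
      (U x).det ≠ 0 ∧ (matLeftLim U x).det ≠ 0 ∧ (matRightLim U x).det ≠ 0 := by
  have hφ : ∀ c d, a < c → d < b → IntegrableOn (fun t => entrySum (M t)) (Set.Icc c d) ν :=
    fun c d hc hd => integrable_finsetSum _ fun i _ => integrable_finsetSum _ fun j _ =>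
      (hM i j c d hc hd).norm
  intro x hx
  have key : ∀ k : Fin n → ℂ, k ≠ 0 → (U x).mulVec k ≠ 0 := by
    intro k hk h0
    obtain ⟨vl, vr, hs, -⟩ := regSol_mulVec hM hcol k
    exact hdet (Matrix.exists_mulVec_eq_zero_iff.1 ⟨k, hk, hs.eq_zero hφ hjump hx h0 x1 hx1⟩)
  refine ⟨fun h => ?_, fun h => ?_, fun h => ?_⟩ <;>
    obtain ⟨k, hk, hk0⟩ := Matrix.exists_mulVec_eq_zero_iff.2 h
  · exact key k hk hk0
  · obtain ⟨vl, vr, hs, hlim⟩ := regSol_mulVec hM hcol k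
    exact key k hk (hs.eq_zero_of_left hx (hjump x hx).2 ((hlim x hx).1.trans hk0))
  · obtain ⟨vl, vr, hs, hlim⟩ := regSol_mulVec hM hcol k
    exact key k hk (hs.eq_zero_of_right hx (hjump x hx).1 ((hlim x hx).2.trans hk0))
end

section
/- Variation of constants: assume the matrices I + Δ_r(x)/2 and I − Δ_r(x)/2 are invertible for every x ∈ (a,b), let U be a fundamental matrix for u' = ru (a balanced matrix function of locally bounded variation whose columns are balanced solutions and whose determinant is nowhere zero), and set H(x) = (I − Δ_r(x)/2)·U⁺(x). Fix x0 ∈ (a,b) and let u be the balanced solution of u' = ru + g dν on (a,b) with u(x0) = 0. Then H(t) is invertible for every t, and for all x ∈ (a,b) with x ≥ x0 one has u⁻(x) = U⁻(x)·( −u0⁻ + ∫_{[x0,x)} H(t)⁻¹·g(t) dν(t) ), where u0⁻ = (1/2)·U⁻(x0)⁻¹·ν({x0})·g(x0). -/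
/-!
Write `D = Δ_r / 2` and `m(t) = ν {t}`. The integral equation forces the jump
`u⁺ - u⁻ = m (M u + g)` (`IsBalancedSolution.jump`), and since `u` is the average of its one-sided
limits, `(I - D) u = u⁻ + (m / 2) g` (`IsBalancedSolution.factor`). Applied to the columns of `U`
this gives `(I - D) U = U⁻` and `(I + D) U = U⁺`, so `U⁻`, `U⁺` and `H` are invertible everywhere.

Put `V(t) = -u0⁻ + ∫_{[x0,t)} H⁻¹ g dν` and `z = u⁻ - U⁻ V`. A product rule, which is Fubini on a
square cut along its diagonal (`product_rule`), yields `(U⁻ V)' = M U V + U⁺ H⁻¹ g`.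
Substituting `U = (I - D)⁻¹ U⁻`, `u = (I - D)⁻¹ (u⁻ + (m / 2) g)` and `U⁺ H⁻¹ = (I - D)⁻¹`, all terms
in `g` cancel and `z' = M (I - D)⁻¹ z` remains (`pointwise_algebra`). The right-hand side involves
only the left-continuous function `z`, so `z(x0) = 0` propagates to the right with no smallness
condition on the atoms of `ν` (`gronwall_zero`). Finally `u(x0) = 0` says
`u⁻(x0) = -(m(x0) / 2) g(x0) = U⁻(x0) (-u0⁻)`, that is `z(x0) = 0`.

The integrals require `(I - D)⁻¹` and `H⁻¹` to be measurable and locally bounded.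
Measurability follows from that of `t ↦ ν {t}`; boundedness follows from `(I - D)⁻¹ = U (U⁻)⁻¹`
because `U⁻¹` has one-sided limits everywhere (`coefficient_regularity`).
-/


open MeasureTheory Filter Function

/-! ### Functions with one-sided limits -/

open Set Topology in
/-- A function with one-sided limits at every point is bounded near every point, hence on compact
intervals. -/
lemma bounded_of_oneSided_limits {f : ℝ → ℂ} {c d : ℝ}
    (h : ∀ x ∈ Icc c d, ∃ l r, Tendsto f (𝓝[<] x) (𝓝 l) ∧ Tendsto f (𝓝[>] x) (𝓝 r)) :
    ∃ C, ∀ y ∈ Icc c d, ‖f y‖ ≤ C := by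
  refine isCompact_Icc.induction_on (p := fun s => ∃ C, ∀ y ∈ s, ‖f y‖ ≤ C)
    ⟨0, by simp⟩ (fun s t hst ⟨C, hC⟩ => ⟨C, fun y hy => hC y (hst hy)⟩) ?_ ?_
  · rintro s t ⟨C, hC⟩ ⟨C', hC'⟩
    exact ⟨max C C', fun y hy => hy.elim (fun hy => (hC y hy).trans (le_max_left _ _))
      fun hy => (hC' y hy).trans (le_max_right _ _)⟩
  · intro x hx
    obtain ⟨l, r, hl, hr⟩ := h x hx
    have h1 : ∀ᶠ y in 𝓝[<] x, ‖f y‖ ≤ ‖l‖ + 1 :=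
      (hl.norm.eventually (gt_mem_nhds (lt_add_one ‖l‖))).mono fun _ h => h.le
    have h2 : ∀ᶠ y in 𝓝[>] x, ‖f y‖ ≤ ‖r‖ + 1 :=
      (hr.norm.eventually (gt_mem_nhds (lt_add_one ‖r‖))).mono fun _ h => h.le
    rw [eventually_nhdsWithin_iff] at h1 h2
    refine ⟨{y | ‖f y‖ ≤ max (‖l‖ + 1) (max (‖r‖ + 1) ‖f x‖)}, mem_nhdsWithin_of_mem_nhds ?_,
      _, fun y hy => hy⟩
    filter_upwards [h1, h2] with y hy1 hy2
    rcases lt_trichotomy y x with hyx | rfl | hyx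
    · exact (hy1 hyx).trans (le_max_left _ _)
    · exact (le_max_right _ _).trans (le_max_right _ _)
    · exact (hy2 hyx).trans ((le_max_left _ _).trans (le_max_right _ _))

lemma aestronglyMeasurable_of_locallyBoundedVariationOn {f : ℝ → ℂ} {s : Set ℝ}
    (hs : MeasurableSet s) (hf : LocallyBoundedVariationOn f s) (μ : Measure ℝ) :
    AEStronglyMeasurable f (μ.restrict s) := by
  have key : ∀ φ : ℝ → ℝ, LocallyBoundedVariationOn φ s → AEMeasurable φ (μ.restrict s) := by
    intro φ hφ
    obtain ⟨p, q, hp, hq, rfl⟩ := hφ.exists_monotoneOn_sub_monotoneOn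
    exact (aemeasurable_restrict_of_monotoneOn hs hp).sub
      (aemeasurable_restrict_of_monotoneOn hs hq)
  have h1 := key _ (Complex.reCLM.lipschitz.comp_locallyBoundedVariationOn hf)
  have h2 := key _ (Complex.imCLM.lipschitz.comp_locallyBoundedVariationOn hf)
  exact (aemeasurable_of_re_im h1 h2).aestronglyMeasurable

/-! ### The product rule -/

open Set in
/-- Fubini on the square, split into `{s < t}` and its complement. Atoms of `μ` charge the diagonal,
which is why one inner integral is over `Iio t` and the other over `Iic t`. -/
lemma integral_mul_integral_eq (μ : Measure ℝ) [IsFiniteMeasure μ] {p q : ℝ → ℂ}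
    (hp : Integrable p μ) (hq : Integrable q μ) :
    Integrable (fun t => p t * ∫ s in Iio t, q s ∂μ) μ ∧
    Integrable (fun t => (∫ s in Iic t, p s ∂μ) * q t) μ ∧
    (∫ t, p t ∂μ) * (∫ t, q t ∂μ) =
      ∫ t, p t * (∫ s in Iio t, q s ∂μ) ∂μ + ∫ t, (∫ s in Iic t, p s ∂μ) * q t ∂μ := by
  set A : Set (ℝ × ℝ) := {z | z.2 < z.1} with hA
  have hAm : MeasurableSet A := measurableSet_lt measurable_snd measurable_fst
  set F : ℝ × ℝ → ℂ := fun z => p z.1 * q z.2 with hF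
  have hFi : Integrable F (μ.prod μ) := hp.mul_prod hq
  have e1 : ∀ x, ∫ y, A.indicator F (x, y) ∂μ = p x * ∫ s in Iio x, q s ∂μ := by
    intro x
    rw [← integral_indicator measurableSet_Iio, ← integral_const_mul]
    refine integral_congr_ae (Eventually.of_forall fun y => ?_)
    by_cases h : y < x <;> simp [hA, hF, indicator, h]
  have e2 : ∀ y, ∫ x, Aᶜ.indicator F (x, y) ∂μ = (∫ s in Iic y, p s ∂μ) * q y := by
    intro y
    rw [← integral_indicator measurableSet_Iic, ← integral_mul_const]
    refine integral_congr_ae (Eventually.of_forall fun x => ?_)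
    by_cases h : x ≤ y
    · simp [hA, hF, indicator, h]
    · simp [hA, indicator, h, not_le.1 h]
  have i1 := (hFi.indicator hAm).integral_prod_left
  have i2 := (hFi.indicator hAm.compl).integral_prod_right
  simp only [e1, e2] at i1 i2
  refine ⟨i1, i2, ?_⟩
  rw [← integral_prod_mul, ← integral_add_compl hAm hFi, ← integral_indicator hAm,
    ← integral_indicator hAm.compl, integral_prod _ (hFi.indicator hAm),
    integral_prod_symm _ (hFi.indicator hAm.compl)]
  simp only [e1, e2]

open Set in
/-- Product rule `(f h)' = f' h + f⁺ h'` for left-continuous primitives `f`, `h` with densities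
`p`, `q`; the function `fp` is the right limit of `f`. -/
lemma product_rule (ν : Measure ℝ) {c d : ℝ} (hcd : c ≤ d) (hν : ν (Ico c d) < ⊤)
    {p q f fp h : ℝ → ℂ} (hp : IntegrableOn p (Ico c d) ν) (hq : IntegrableOn q (Ico c d) ν)
    (hf : ∀ t ∈ Icc c d, f t = f c + ∫ s in Ico c t, p s ∂ν)
    (hfp : ∀ t ∈ Ico c d, fp t = f t + ∫ s in {t}, p s ∂ν)
    (hh : ∀ t ∈ Icc c d, h t = h c + ∫ s in Ico c t, q s ∂ν) :
    IntegrableOn (fun t => p t * h t + fp t * q t) (Ico c d) ν ∧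
    f d * h d - f c * h c = ∫ t in Ico c d, (p t * h t + fp t * q t) ∂ν := by
  have : IsFiniteMeasure (ν.restrict (Ico c d)) := ⟨by simpa using hν⟩
  obtain ⟨i1, i2, e⟩ := integral_mul_integral_eq (ν.restrict (Ico c d)) hp hq
  have k1 : ∀ t ∈ Ico c d,
      ∫ s in Iio t, q s ∂(ν.restrict (Ico c d)) = h t - h c := by
    intro t ht
    rw [Measure.restrict_restrict measurableSet_Iio, hh t (Ico_subset_Icc_self ht)]
    have : Iio t ∩ Ico c d = Ico c t := by
      ext s; simp only [mem_inter_iff, mem_Iio, mem_Ico]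
      constructor
      · rintro ⟨h1, h2, h3⟩; exact ⟨h2, h1⟩
      · rintro ⟨h1, h2⟩; exact ⟨h2, h1, h2.trans ht.2⟩
    rw [this]; ring
  have k2 : ∀ t ∈ Ico c d,
      ∫ s in Iic t, p s ∂(ν.restrict (Ico c d)) = fp t - f c := by
    intro t ht
    have : Iic t ∩ Ico c d = Ico c t ∪ {t} := by
      ext s; simp only [mem_inter_iff, mem_Iic, mem_Ico, mem_union, mem_singleton_iff]
      constructor
      · rintro ⟨h1, h2, h3⟩
        exact h1.lt_or_eq.imp (fun h => ⟨h2, h⟩) id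
      · rintro (⟨h1, h2⟩ | rfl)
        · exact ⟨h2.le, h1, h2.trans ht.2⟩
        · exact ⟨le_rfl, ht⟩
    rw [Measure.restrict_restrict measurableSet_Iic, hfp t ht, hf t (Ico_subset_Icc_self ht), this,
      setIntegral_union (by simp) (measurableSet_singleton t)
        (hp.mono_set (Ico_subset_Ico_right ht.2.le))
        (hp.mono_set (singleton_subset_iff.2 ht))]
    ring
  have a1 : (fun t => p t * ∫ s in Iio t, q s ∂(ν.restrict (Ico c d)))
      =ᵐ[ν.restrict (Ico c d)] fun t => p t * (h t - h c) := by
    filter_upwards [ae_restrict_mem measurableSet_Ico] with t ht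
    rw [k1 t ht]
  have a2 : (fun t => (∫ s in Iic t, p s ∂(ν.restrict (Ico c d))) * q t)
      =ᵐ[ν.restrict (Ico c d)] fun t => (fp t - f c) * q t := by
    filter_upwards [ae_restrict_mem measurableSet_Ico] with t ht
    rw [k2 t ht]
  rw [integral_congr_ae a1, integral_congr_ae a2] at e
  have j1 := i1.congr a1
  have j2 := i2.congr a2
  have hsum : (fun t => p t * h t + fp t * q t) = fun t =>
      (p t * (h t - h c) + p t * h c) + ((fp t - f c) * q t + f c * q t) := by
    funext t; ring
  have j3 := Integrable.mul_const hp (h c)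
  have j4 := Integrable.const_mul hq (f c)
  refine ⟨by rw [hsum]; exact (j1.add j3).add (j2.add j4), ?_⟩
  have e0 := integral_add (j1.add j3) (j2.add j4)
  simp only [Pi.add_apply] at e0
  rw [hsum, e0, integral_add j1 j3, integral_add j2 j4,
    integral_mul_const, integral_const_mul, hf d ⟨hcd, le_rfl⟩, hh d ⟨hcd, le_rfl⟩]
  linear_combination e

/-! ### Uniqueness for the left-limit equation -/

open Set Topology in
/-- Gronwall uniqueness for left-continuous data. The hypothesis `hz` controls `z` at `t` by its
values on the open interval `(s, t)` only, so atoms of `ν` do not obstruct the argument: at the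
supremum `s` of the zero stretch, `z s = 0`, and `∫_{(s, y)} k dν → 0` as `y ↓ s`. -/
lemma gronwall_zero {E : Type*} [NormedAddCommGroup E] {ν : Measure ℝ} {c d : ℝ} (hcd : c ≤ d)
    {k : ℝ → ℝ} (hk : IntegrableOn k (Icc c d) ν) (hk0 : ∀ t, 0 ≤ k t)
    {z : ℝ → E} (hz0 : z c = 0) {C : ℝ} (hC : ∀ t ∈ Icc c d, ‖z t‖ ≤ C)
    (hz : ∀ s t B, 0 ≤ B → c ≤ s → s ≤ t → t ≤ d → z s = 0 → (∀ r ∈ Ioo s t, ‖z r‖ ≤ B) →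
      ‖z t‖ ≤ B * ∫ r in Ioo s t, k r ∂ν) :
    z d = 0 := by
  set S : Set ℝ := {t | t ∈ Icc c d ∧ ∀ r ∈ Icc c t, z r = 0} with hS
  have hcS : c ∈ S := ⟨⟨le_rfl, hcd⟩, fun r hr => by rw [le_antisymm hr.2 hr.1, hz0]⟩
  have hbdd : BddAbove S := ⟨d, fun t ht => ht.1.2⟩
  set s := sSup S with hs
  have hcs : c ≤ s := le_csSup hbdd hcS
  have hsd : s ≤ d := csSup_le ⟨c, hcS⟩ fun t ht => ht.1.2
  have hlt : ∀ r, c ≤ r → r < s → z r = 0 := by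
    intro r hr hrs
    obtain ⟨t, ht, hrt⟩ := exists_lt_of_lt_csSup ⟨c, hcS⟩ hrs
    exact ht.2 r ⟨hr, hrt.le⟩
  have hzs : z s = 0 := by
    have := hz c s 0 le_rfl le_rfl hcs hsd hz0 fun r hr => by rw [hlt r hr.1.le hr.2, norm_zero]
    simpa using this
  rcases hsd.eq_or_lt with h | hsd
  · rw [← h, hzs]
  exfalso
  have hlim : Tendsto (fun n : ℕ => ∫ r in Ioo s (s + (d - s) / (n + 1)), k r ∂ν) atTop (𝓝 0) := by
    have hI : (⋂ n : ℕ, Ioo s (s + (d - s) / ((n : ℝ) + 1))) = ∅ := by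
      refine eq_empty_of_forall_notMem fun r hr => ?_
      simp only [mem_iInter, mem_Ioo] at hr
      have h1 : Tendsto (fun n : ℕ => s + (d - s) / ((n : ℝ) + 1)) atTop (𝓝 (s + 0)) :=
        tendsto_const_nhds.add
          (tendsto_const_nhds.div_atTop (tendsto_atTop_add_const_right _ _ tendsto_natCast_atTop_atTop))
      have := ge_of_tendsto' h1 fun n => (hr n).2.le
      linarith [(hr 0).1]
    have := tendsto_setIntegral_of_antitone (μ := ν) (f := k)
      (s := fun n : ℕ => Ioo s (s + (d - s) / ((n : ℝ) + 1))) (fun _ => measurableSet_Ioo)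
      (fun m n hmn => Ioo_subset_Ioo_right (by
        have : (m : ℝ) ≤ n := by exact_mod_cast hmn
        have : 0 ≤ d - s := by linarith
        gcongr))
      ⟨0, hk.mono_set fun r hr => ⟨hcs.trans hr.1.le, by
        have := hr.2; simp at this; exact this.le⟩⟩
    simpa [hI] using this
  -- On an interval `(s, y]` with `∫ k < 1 / 2`, every bound for `z` can be halved.
  obtain ⟨N, hN⟩ := (hlim.eventually (gt_mem_nhds (show (0 : ℝ) < 1 / 2 by norm_num))).exists
  set y := s + (d - s) / ((N : ℝ) + 1) with hy
  have hsy : s < y := by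
    have : 0 < (d - s) / ((N : ℝ) + 1) := by have := sub_pos.2 hsd; positivity
    linarith
  have hyd : y ≤ d := by
    have : (d - s) / ((N : ℝ) + 1) ≤ d - s :=
      div_le_self (by linarith) (by have : (0:ℝ) ≤ N := by positivity
                                    linarith)
    linarith
  have hiter : ∀ n : ℕ, ∀ t ∈ Ioc s y, ‖z t‖ ≤ C * (1 / 2) ^ n := by
    intro n
    induction n with
    | zero => intro t ht; simpa using hC t ⟨hcs.trans ht.1.le, ht.2.trans hyd⟩
    | succ n ih =>
      intro t ht
      have hC0 : 0 ≤ C := (norm_nonneg _).trans (hC c ⟨le_rfl, hcd⟩)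
      have h1 := hz s t (C * (1 / 2) ^ n) (by positivity) hcs ht.1.le (ht.2.trans hyd) hzs
        fun r hr => ih r ⟨hr.1, hr.2.le.trans ht.2⟩
      have h2 : ∫ r in Ioo s t, k r ∂ν ≤ ∫ r in Ioo s y, k r ∂ν :=
        setIntegral_mono_set
          (hk.mono_set fun r hr => ⟨hcs.trans hr.1.le, hr.2.le.trans hyd⟩)
          (Eventually.of_forall hk0)
          (Ioo_subset_Ioo_right ht.2).eventuallyLE
      calc ‖z t‖ ≤ C * (1 / 2) ^ n * ∫ r in Ioo s t, k r ∂ν := h1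
        _ ≤ C * (1 / 2) ^ n * (1 / 2) := by gcongr; linarith
        _ = _ := by ring
  have hzero : ∀ t ∈ Ioc s y, z t = 0 := by
    intro t ht
    have h1 : Tendsto (fun n : ℕ => C * (1 / 2 : ℝ) ^ n) atTop (𝓝 (C * 0)) :=
      tendsto_const_nhds.mul (tendsto_pow_atTop_nhds_zero_of_lt_one (by norm_num) (by norm_num))
    have := ge_of_tendsto' h1 fun n => hiter n t ht
    simpa using this
  have : y ∈ S := by
    refine ⟨⟨hcs.trans hsy.le, hyd⟩, fun r hr => ?_⟩
    rcases lt_trichotomy r s with h | rfl | h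
    · exact hlt r hr.1 h
    · exact hzs
    · exact hzero r ⟨h, hr.2⟩
  exact absurd (le_csSup hbdd this) (not_le.2 hsy)

open Set Topology in
lemma eq_zero_of_linear_equation {n : ℕ} {ν : Measure ℝ} {c d : ℝ} (hcd : c ≤ d)
    {K : ℝ → Matrix (Fin n) (Fin n) ℂ} (hK : ∀ i j, IntegrableOn (fun t => K t i j) (Icc c d) ν)
    {z : ℝ → Fin n → ℂ} (hz0 : z c = 0) (hb : ∀ i, ∃ C, ∀ t ∈ Icc c d, ‖z t i‖ ≤ C)
    (hz : ∀ s t, c ≤ s → s ≤ t → t ≤ d → ∀ i,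
      z t i - z s i = ∫ r in Ico s t, (K r).mulVec (z r) i ∂ν) :
    z d = 0 := by
  choose C hC using hb
  have hC0 : ∀ i, 0 ≤ C i := fun i => (norm_nonneg _).trans (hC i c ⟨le_rfl, hcd⟩)
  refine gronwall_zero (ν := ν) hcd (k := fun t => ∑ i, ∑ j, ‖K t i j‖)
    (integrable_finsetSum _ fun i _ => integrable_finsetSum _ fun j _ => (hK i j).norm)
    (fun t => by positivity) hz0 (C := ∑ i, C i) (fun t ht => ?_) ?_
  · refine (pi_norm_le_iff_of_nonneg (Finset.sum_nonneg fun i _ => hC0 i)).2 fun i => ?_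
    exact (hC i t ht).trans (Finset.single_le_sum (fun i _ => hC0 i) (Finset.mem_univ i))
  intro s t B hB hcs hst htd hzs hzB
  refine (pi_norm_le_iff_of_nonneg
    (mul_nonneg hB (integral_nonneg fun r => by positivity))).2 fun i => ?_
  have h1 := hz s t hcs hst htd i
  rw [hzs, Pi.zero_apply, sub_zero,
    setIntegral_eq_of_subset_of_forall_sdiff_eq_zero measurableSet_Ico Ioo_subset_Ico_self] at h1
  · rw [h1, ← integral_const_mul]
    have hi : IntegrableOn (fun t => ∑ i, ∑ j, ‖K t i j‖) (Ioo s t) ν :=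
      integrable_finsetSum _ fun i _ => integrable_finsetSum _ fun j _ =>
        ((hK i j).mono_set fun r hr => ⟨hcs.trans hr.1.le, hr.2.le.trans htd⟩).norm
    refine norm_integral_le_of_norm_le (Integrable.const_mul hi B) ?_
    filter_upwards [ae_restrict_mem measurableSet_Ioo] with r hr
    calc ‖(K r).mulVec (z r) i‖ ≤ ∑ j, ‖K r i j‖ * B := by
          simp only [Matrix.mulVec, dotProduct]
          refine norm_sum_le_of_le _ fun j _ => ?_
          rw [norm_mul]
          gcongr
          exact (norm_le_pi_norm _ j).trans (hzB r hr)
      _ = B * ∑ j, ‖K r i j‖ := by rw [← Finset.sum_mul, mul_comm]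
      _ ≤ B * ∑ i, ∑ j, ‖K r i j‖ := by
          exact mul_le_mul_of_nonneg_left (Finset.single_le_sum (f := fun i => ∑ j, ‖K r i j‖)
            (fun i _ => by positivity) (Finset.mem_univ i)) hB
  · intro r hr
    -- The half-open interval adds only the point `s`, where `z` vanishes.
    have : r = s := le_antisymm (not_lt.1 fun h => hr.2 ⟨h, hr.1.2⟩) hr.1.1
    simp [this, hzs]

open Set in
lemma integrableOn_mulVec {n : ℕ} {ν : Measure ℝ} {s : Set ℝ}
    {M : ℝ → Matrix (Fin n) (Fin n) ℂ} {v : ℝ → Fin n → ℂ} (hs : MeasurableSet s)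
    (hM : ∀ i j, IntegrableOn (fun t => M t i j) s ν)
    (hv : ∀ j, AEStronglyMeasurable (fun t => v t j) (ν.restrict s))
    (hb : ∀ j, ∃ C, ∀ t ∈ s, ‖v t j‖ ≤ C) :
    ∀ i, IntegrableOn (fun t => (M t).mulVec (v t) i) s ν := by
  intro i
  simp only [Matrix.mulVec, dotProduct]
  refine integrable_finsetSum _ fun j _ => ?_
  obtain ⟨C, hC⟩ := hb j
  refine Integrable.mul_bdd (c := C) (hM i j) (hv j) ?_
  filter_upwards [ae_restrict_mem hs] with t ht using hC t ht

/-! ### Balanced solutions -/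

open Set Topology in
lemma tendsto_leftLim_nhdsGT {E : Type*} [TopologicalSpace E] [T3Space E] {f : ℝ → E} {x : ℝ} {r : E}
    (h : Tendsto f (𝓝[>] x) (𝓝 r)) : Tendsto (leftLim f) (𝓝[>] x) (𝓝 r) := by
  apply (closed_nhds_basis r).tendsto_right_iff.2
  rintro s ⟨s_mem, s_closed⟩
  obtain ⟨u, xu, hu⟩ : ∃ u, x < u ∧ Ioo x u ⊆ {y | f y ∈ s} := by
    have := (closed_nhds_basis r).tendsto_right_iff.1 h s ⟨s_mem, s_closed⟩
    simpa using mem_nhdsGT_iff_exists_Ioo_subset.1 this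
  filter_upwards [Ioo_mem_nhdsGT xu] with y hy
  by_cases! hl : ¬ ∃ l, Tendsto f (𝓝[<] y) (𝓝 l)
  · rw [leftLim_eq_of_not_tendsto _ hl]; exact hu hy
  apply s_closed.mem_of_tendsto (tendsto_leftLim_of_tendsto hl)
  filter_upwards [Ioo_mem_nhdsLT hy.1] with t ht using hu ⟨ht.1, ht.2.trans hy.2⟩

section Solution

variable {n : ℕ} {a b : ℝ} {ν : Measure ℝ} {M : ℝ → Matrix (Fin n) (Fin n) ℂ}
  {g u : ℝ → Fin n → ℂ}

open Set Topology

lemma IsBalancedSolution.tendsto_left (hu : IsBalancedSolution a b ν M g u) {x : ℝ}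
    (hx : x ∈ Ioo a b) (i : Fin n) :
    Tendsto (fun t => u t i) (𝓝[<] x) (𝓝 (leftLim u x i)) :=
  (tendsto_pi_nhds.1 (hu.2.1 x hx).1) i

lemma IsBalancedSolution.tendsto_right (hu : IsBalancedSolution a b ν M g u) {x : ℝ}
    (hx : x ∈ Ioo a b) (i : Fin n) :
    Tendsto (fun t => u t i) (𝓝[>] x) (𝓝 (rightLim u x i)) :=
  (tendsto_pi_nhds.1 (hu.2.1 x hx).2.1) i

lemma IsBalancedSolution.bounded (hu : IsBalancedSolution a b ν M g u) {c d : ℝ}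
    (hc : a < c) (hd : d < b) (i : Fin n) : ∃ C, ∀ t ∈ Icc c d, ‖u t i‖ ≤ C :=
  bounded_of_oneSided_limits fun x hx =>
    have hx' : x ∈ Ioo a b := ⟨hc.trans_le hx.1, hx.2.trans_lt hd⟩
    ⟨_, _, hu.tendsto_left hx' i, hu.tendsto_right hx' i⟩

/-- Local bounds pass to one-sided limits; `l t` is meant to be `𝓝[<] t` or `𝓝[>] t`. -/
lemma bounded_of_tendsto {f F : ℝ → ℂ} (l : ℝ → Filter ℝ) [∀ t, NeBot (l t)]
    (hl : ∀ t, l t ≤ 𝓝 t) (hf : ∀ t ∈ Ioo a b, Tendsto f (l t) (𝓝 (F t)))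
    (hb : ∀ c d : ℝ, a < c → d < b → ∃ C, ∀ t ∈ Icc c d, ‖f t‖ ≤ C) {c d : ℝ}
    (hc : a < c) (hd : d < b) : ∃ C, ∀ t ∈ Icc c d, ‖F t‖ ≤ C := by
  obtain ⟨c', hac, hcc⟩ := exists_between hc
  obtain ⟨d', hdd, hdb⟩ := exists_between hd
  obtain ⟨C, hC⟩ := hb c' d' hac hdb
  refine ⟨C, fun t ht => ?_⟩
  refine le_of_tendsto (hf t ⟨hc.trans_le ht.1, ht.2.trans_lt hd⟩).norm ?_
  filter_upwards [hl t (Icc_mem_nhds (hcc.trans_le ht.1) (ht.2.trans_lt hdd))] with y hy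
  exact hC y hy

lemma IsBalancedSolution.leftLim_apply (hu : IsBalancedSolution a b ν M g u) {x : ℝ}
    (hx : x ∈ Ioo a b) (i : Fin n) : leftLim (fun t => u t i) x = leftLim u x i :=
  leftLim_eq_of_tendsto (hu.tendsto_left hx i)

lemma IsBalancedSolution.rightLim_apply (hu : IsBalancedSolution a b ν M g u) {x : ℝ}
    (hx : x ∈ Ioo a b) (i : Fin n) : rightLim (fun t => u t i) x = rightLim u x i :=
  rightLim_eq_of_tendsto (hu.tendsto_right hx i)

lemma IsBalancedSolution.aestronglyMeasurable (hu : IsBalancedSolution a b ν M g u) {c d : ℝ}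
    (hc : a < c) (hd : d < b) (i : Fin n) :
    AEStronglyMeasurable (fun t => u t i) (ν.restrict (Icc c d)) := by
  have h1 : LocallyBoundedVariationOn (fun t => u t i) (Ioo a b) :=
    (LipschitzWith.eval i).comp_locallyBoundedVariationOn hu.1
  exact (aestronglyMeasurable_of_locallyBoundedVariationOn measurableSet_Ioo h1 ν).mono_measure
    (Measure.restrict_mono (Icc_subset_Ioo hc hd) le_rfl)

lemma IsBalancedSolution.integrableOn (hu : IsBalancedSolution a b ν M g u)
    (hM : ∀ (i j : Fin n) (c d : ℝ), a < c → d < b →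
      IntegrableOn (fun t => M t i j) (Icc c d) ν)
    (hg : ∀ c d : ℝ, a < c → d < b → IntegrableOn g (Icc c d) ν) {c d : ℝ}
    (hc : a < c) (hd : d < b) :
    IntegrableOn (fun t => (M t).mulVec (u t) + g t) (Icc c d) ν :=
  (Integrable.of_eval (integrableOn_mulVec measurableSet_Icc (fun i j => hM i j c d hc hd)
    (fun j => hu.aestronglyMeasurable hc hd j) (fun j => hu.bounded hc hd j))).add (hg c d hc hd)

/-- The integral equation determines the jump of a solution. -/
lemma IsBalancedSolution.jump (hu : IsBalancedSolution a b ν M g u)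
    (hM : ∀ (i j : Fin n) (c d : ℝ), a < c → d < b →
      IntegrableOn (fun t => M t i j) (Icc c d) ν)
    (hg : ∀ c d : ℝ, a < c → d < b → IntegrableOn g (Icc c d) ν) {x : ℝ}
    (hx : x ∈ Ioo a b) :
    rightLim u x - leftLim u x = (ν {x}).toReal • ((M x).mulVec (u x) + g x) := by
  obtain ⟨d, hxd, hdb⟩ := exists_between hx.2
  have hy0 : Tendsto (fun n : ℕ => x + (d - x) / ((n : ℝ) + 1)) atTop (𝓝 x) := by
    simpa using tendsto_const_nhds.add ((tendsto_const_nhds (x := d - x)).div_atTop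
      (tendsto_atTop_add_const_right atTop (1 : ℝ) tendsto_natCast_atTop_atTop))
  have hyx : ∀ n : ℕ, x < x + (d - x) / ((n : ℝ) + 1) := fun n => by
    have : 0 < (d - x) / ((n : ℝ) + 1) := by have := sub_pos.2 hxd; positivity
    linarith
  have hyd : ∀ n : ℕ, x + (d - x) / ((n : ℝ) + 1) ≤ d := fun n => by
    have : (d - x) / ((n : ℝ) + 1) ≤ d - x :=
      div_le_self (by linarith) (by have : (0:ℝ) ≤ n := by positivity
                                    linarith)
    linarith
  have hy : Tendsto (fun n : ℕ => x + (d - x) / ((n : ℝ) + 1)) atTop (𝓝[>] x) :=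
    tendsto_nhdsWithin_iff.2 ⟨hy0, Eventually.of_forall hyx⟩
  have h1 := (tendsto_leftLim_nhdsGT (hu.2.1 x hx).2.1).comp hy
  have h2 := h1.sub_const (leftLim u x)
  have hI : (⋂ n : ℕ, Ico x (x + (d - x) / ((n : ℝ) + 1))) = {x} := by
    ext r
    simp only [mem_iInter, mem_Ico, mem_singleton_iff]
    constructor
    · intro hr
      exact le_antisymm (ge_of_tendsto' hy0 fun n => (hr n).2.le) (hr 0).1
    · rintro rfl n
      exact ⟨le_rfl, hyx n⟩
  have h3 := tendsto_setIntegral_of_antitone (μ := ν)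
      (f := fun t => (M t).mulVec (u t) + g t)
      (s := fun n : ℕ => Ico x (x + (d - x) / ((n : ℝ) + 1))) (fun _ => measurableSet_Ico)
      (fun m n hmn => Ico_subset_Ico_right (by
        have : (m : ℝ) ≤ n := by exact_mod_cast hmn
        have : 0 ≤ d - x := by linarith
        gcongr))
      ⟨0, (hu.integrableOn hM hg hx.1 hdb).mono_set fun r hr =>
        ⟨hr.1, hr.2.le.trans (hyd 0)⟩⟩
  rw [hI, integral_singleton] at h3
  refine tendsto_nhds_unique h2 (h3.congr fun m => ?_)
  exact (hu.2.2 x _ hx.1 (hyx m).le ((hyd m).trans_lt hdb)).symm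

/-- Averaging the one-sided limits and inserting the jump expresses `u⁻` and `u⁺` through `u`. -/
lemma IsBalancedSolution.factor (hu : IsBalancedSolution a b ν M g u)
    (hM : ∀ (i j : Fin n) (c d : ℝ), a < c → d < b →
      IntegrableOn (fun t => M t i j) (Icc c d) ν)
    (hg : ∀ c d : ℝ, a < c → d < b → IntegrableOn g (Icc c d) ν) {x : ℝ}
    (hx : x ∈ Ioo a b) :
    (1 - ((ν {x}).toReal / 2) • M x).mulVec (u x) =
        leftLim u x + ((ν {x}).toReal / 2) • g x ∧
    (1 + ((ν {x}).toReal / 2) • M x).mulVec (u x) =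
        rightLim u x - ((ν {x}).toReal / 2) • g x := by
  have h1 := hu.jump hM hg hx
  have h2 := (hu.2.1 x hx).2.2
  rw [Matrix.sub_mulVec, Matrix.add_mulVec, Matrix.one_mulVec, Matrix.smul_mulVec]
  constructor <;> ext i <;> have h1i := congrFun h1 i <;> have h2i := congrFun h2 i <;>
    simp only [Pi.sub_apply, Pi.add_apply, Pi.smul_apply, Pi.div_apply, Pi.ofNat_apply,
      Complex.real_smul] at h1i h2i ⊢ <;> push_cast
  · linear_combination h2i + h1i / 2
  · linear_combination h2i - h1i / 2

end Solution

/-! ### Matrix-valued functions -/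

open Set Topology in
lemma tendsto_matrix_inv {n : ℕ} {A : ℝ → Matrix (Fin n) (Fin n) ℂ} {l : Filter ℝ}
    {A0 : Matrix (Fin n) (Fin n) ℂ} (h : ∀ i j, Tendsto (fun t => A t i j) l (𝓝 (A0 i j)))
    (h0 : IsUnit A0) (i j : Fin n) :
    Tendsto (fun t => (A t)⁻¹ i j) l (𝓝 (A0⁻¹ i j)) := by
  have hA : Tendsto A l (𝓝 A0) := tendsto_pi_nhds.2 fun i => tendsto_pi_nhds.2 fun j => h i j
  have hdet : A0.det ≠ 0 := ((Matrix.isUnit_iff_isUnit_det _).1 h0).ne_zero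
  have h1 : Tendsto (fun t => (A t).det) l (𝓝 A0.det) :=
    ((continuous_id.matrix_det).tendsto A0).comp hA
  have h2 : Tendsto (fun t => (A t).adjugate i j) l (𝓝 (A0.adjugate i j)) :=
    (((continuous_id.matrix_adjugate).matrix_elem i j).tendsto A0).comp hA
  simp only [Matrix.inv_def, Ring.inverse_eq_inv', Matrix.smul_apply, smul_eq_mul]
  exact (h1.inv₀ hdet).mul h2

lemma aestronglyMeasurable_matrix_inv {n : ℕ} {μ : Measure ℝ}
    {A : ℝ → Matrix (Fin n) (Fin n) ℂ} (h : ∀ i j, AEStronglyMeasurable (fun t => A t i j) μ)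
    (i j : Fin n) : AEStronglyMeasurable (fun t => (A t)⁻¹ i j) μ := by
  have hA : AEStronglyMeasurable (fun t => (fun i j => A t i j : Fin n → Fin n → ℂ)) μ :=
    (aemeasurable_pi_iff.2 fun i => aemeasurable_pi_iff.2 fun j =>
      (h i j).aemeasurable).aestronglyMeasurable
  have h1 : AEStronglyMeasurable (fun t => (A t).det) μ :=
    ((continuous_id.matrix_det : Continuous
      fun B : Matrix (Fin n) (Fin n) ℂ => B.det)).comp_aestronglyMeasurable hA
  have h2 : AEStronglyMeasurable (fun t => (A t).adjugate i j) μ :=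
    ((continuous_id.matrix_adjugate.matrix_elem i j : Continuous
      fun B : Matrix (Fin n) (Fin n) ℂ => B.adjugate i j)).comp_aestronglyMeasurable hA
  simp only [Matrix.inv_def, Ring.inverse_eq_inv', Matrix.smul_apply, smul_eq_mul]
  exact h1.aemeasurable.inv.aestronglyMeasurable.mul h2

lemma aestronglyMeasurable_matrix_mul {n : ℕ} {μ : Measure ℝ}
    {A B : ℝ → Matrix (Fin n) (Fin n) ℂ} (hA : ∀ i j, AEStronglyMeasurable (fun t => A t i j) μ)
    (hB : ∀ i j, AEStronglyMeasurable (fun t => B t i j) μ)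
    (i j : Fin n) : AEStronglyMeasurable (fun t => (A t * B t) i j) μ := by
  simp only [Matrix.mul_apply]
  exact Finset.aestronglyMeasurable_fun_sum _ fun k _ => (hA i k).mul (hB k j)

lemma bounded_sum_mul {n : ℕ} {s : Set ℝ} {p q : ℝ → Fin n → ℂ}
    (hp : ∀ k, ∃ C, ∀ t ∈ s, ‖p t k‖ ≤ C) (hq : ∀ k, ∃ C, ∀ t ∈ s, ‖q t k‖ ≤ C) :
    ∃ C, ∀ t ∈ s, ‖∑ k, p t k * q t k‖ ≤ C := by
  choose C hC using hp
  choose D hD using hq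
  refine ⟨∑ k, C k * D k, fun t ht => norm_sum_le_of_le _ fun k _ => ?_⟩
  rw [norm_mul]
  exact mul_le_mul (hC k t ht) (hD k t ht) (norm_nonneg _) ((norm_nonneg _).trans (hC k t ht))

open Set in
/-- The atom function `t ↦ ν {t}` is a section of the diagonal in `ν ⊗ ν`, hence measurable. -/
lemma aestronglyMeasurable_atom {ν : Measure ℝ} {s : Set ℝ} (hs : MeasurableSet s)
    (hν : ν s < ⊤) : AEStronglyMeasurable (fun t => (ν {t}).toReal) (ν.restrict s) := by
  have : IsFiniteMeasure (ν.restrict s) := ⟨by simpa using hν⟩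
  have h := measurable_measure_prodMk_left (ν := ν.restrict s)
    (measurableSet_eq_fun (measurable_fst (α := ℝ) (β := ℝ)) measurable_snd)
  refine AEStronglyMeasurable.congr h.ennreal_toReal.aestronglyMeasurable ?_
  filter_upwards [ae_restrict_mem hs] with t ht
  have e : Prod.mk t ⁻¹' {x : ℝ × ℝ | x.1 = x.2} = {t} := by
    ext x; simp [eq_comm]
  rw [e, Measure.restrict_apply (measurableSet_singleton t),
    inter_eq_left.2 (singleton_subset_iff.2 ht)]

/-- The density of `u⁻ - U⁻ V` is `M (I - D)⁻¹ (u⁻ - U⁻ V)`: the terms in `g` cancel because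
`(I - D)⁻¹ = I + (m / 2) M (I - D)⁻¹`. Here `m` is the mass of the atom and `um`, `Um`, `Up` are the
one-sided limits `u⁻`, `U⁻`, `U⁺`. -/
lemma pointwise_algebra {n : ℕ} {M U Um Up D : Matrix (Fin n) (Fin n) ℂ} {m : ℝ}
    {u um g V : Fin n → ℂ} (hD : D = (m / 2) • M) (hE : IsUnit (1 - D)) (hUp : IsUnit Up)
    (hU : (1 - D) * U = Um) (hu : (1 - D).mulVec u = um + (m / 2) • g) :
    M.mulVec u + g - ((M * U).mulVec V + Up.mulVec (((1 - D) * Up)⁻¹.mulVec g)) =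
      (M * (1 - D)⁻¹).mulVec (um - Um.mulVec V) := by
  have hE' := (Matrix.isUnit_iff_isUnit_det _).1 hE
  have hUp' := (Matrix.isUnit_iff_isUnit_det _).1 hUp
  have e1 : (1 - D)⁻¹ * (1 - D) = 1 := Matrix.nonsing_inv_mul _ hE'
  have e1' : (1 - D) * (1 - D)⁻¹ = 1 := Matrix.mul_nonsing_inv _ hE'
  set E := (1 - D)⁻¹ with hEdef
  have e2 : U = E * Um := by rw [← hU, ← Matrix.mul_assoc, e1, Matrix.one_mul]
  have e3 : u = E.mulVec um + E.mulVec ((m / 2) • g) := by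
    rw [← Matrix.mulVec_add, ← hu, Matrix.mulVec_mulVec, e1, Matrix.one_mulVec]
  have e4 : Up.mulVec (((1 - D) * Up)⁻¹.mulVec g) = E.mulVec g := by
    rw [Matrix.mul_inv_rev, Matrix.mulVec_mulVec, ← Matrix.mul_assoc,
      Matrix.mul_nonsing_inv _ hUp', Matrix.one_mul]
  have e5 : E = 1 + (m / 2) • (M * E) := by
    rw [← Matrix.smul_mul, ← hD, ← e1', Matrix.sub_mul, Matrix.one_mul]
    abel
  have e6 : E.mulVec g = g + (M * E).mulVec ((m / 2) • g) := by
    conv_lhs => rw [e5]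
    rw [Matrix.add_mulVec, Matrix.one_mulVec, Matrix.smul_mulVec, Matrix.mulVec_smul]
  rw [e4, e2, e3, e6, Matrix.mulVec_add, Matrix.mulVec_mulVec, Matrix.mulVec_mulVec,
    Matrix.mulVec_sub, Matrix.mulVec_mulVec, Matrix.mul_assoc]
  abel

/-! ### The fundamental matrix -/

section Fundamental

variable {n : ℕ} {a b : ℝ} {ν : Measure ℝ} {M U : ℝ → Matrix (Fin n) (Fin n) ℂ}

open Set Topology

lemma fundamental_tendsto
    (hcol : ∀ j : Fin n, IsBalancedSolution a b ν M (fun _ => 0) (fun x i => U x i j)) {x : ℝ}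
    (hx : x ∈ Ioo a b) (i j : Fin n) :
    Tendsto (fun t => U t i j) (𝓝[<] x) (𝓝 (matLeftLim U x i j)) ∧
    Tendsto (fun t => U t i j) (𝓝[>] x) (𝓝 (matRightLim U x i j)) := by
  have h1 := (hcol j).tendsto_left hx i
  have h2 := (hcol j).tendsto_right hx i
  rw [← (hcol j).leftLim_apply hx] at h1
  rw [← (hcol j).rightLim_apply hx] at h2
  exact ⟨h1, h2⟩

lemma fundamental_factor
    (hM : ∀ (i j : Fin n) (c d : ℝ), a < c → d < b →
      IntegrableOn (fun t => M t i j) (Icc c d) ν)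
    (hcol : ∀ j : Fin n, IsBalancedSolution a b ν M (fun _ => 0) (fun x i => U x i j)) {x : ℝ}
    (hx : x ∈ Ioo a b) :
    (1 - ((ν {x}).toReal / 2) • M x) * U x = matLeftLim U x ∧
    (1 + ((ν {x}).toReal / 2) • M x) * U x = matRightLim U x := by
  constructor <;> ext i j <;>
    have h := (hcol j).factor hM (fun c d _ _ => integrableOn_zero) hx
  · refine (congrFun h.1 i).trans ?_
    simp [matLeftLim, (hcol j).leftLim_apply hx]
  · refine (congrFun h.2 i).trans ?_
    simp [matRightLim, (hcol j).rightLim_apply hx]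

lemma fundamental_isUnit
    (hM : ∀ (i j : Fin n) (c d : ℝ), a < c → d < b →
      IntegrableOn (fun t => M t i j) (Icc c d) ν)
    (hjump : ∀ x ∈ Set.Ioo a b,
      IsUnit ((1 : Matrix (Fin n) (Fin n) ℂ) + ((ν {x}).toReal / 2) • M x) ∧
      IsUnit ((1 : Matrix (Fin n) (Fin n) ℂ) - ((ν {x}).toReal / 2) • M x))
    (hcol : ∀ j : Fin n, IsBalancedSolution a b ν M (fun _ => 0) (fun x i => U x i j))
    (hUdet : ∀ x ∈ Ioo a b, (U x).det ≠ 0) {x : ℝ} (hx : x ∈ Ioo a b) :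
    IsUnit (U x) ∧ IsUnit (matLeftLim U x) ∧ IsUnit (matRightLim U x) := by
  have h0 : IsUnit (U x) := (Matrix.isUnit_iff_isUnit_det _).2 (hUdet x hx).isUnit
  obtain ⟨h1, h2⟩ := fundamental_factor hM hcol hx
  exact ⟨h0, h1 ▸ (hjump x hx).2.mul h0, h2 ▸ (hjump x hx).1.mul h0⟩

/-- `U⁻¹` has one-sided limits `(U⁻)⁻¹` and `(U⁺)⁻¹` everywhere, so it is locally bounded, and the
bounds pass to the limits. -/
lemma fundamental_inv_bounded
    (hM : ∀ (i j : Fin n) (c d : ℝ), a < c → d < b →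
      IntegrableOn (fun t => M t i j) (Icc c d) ν)
    (hjump : ∀ x ∈ Set.Ioo a b,
      IsUnit ((1 : Matrix (Fin n) (Fin n) ℂ) + ((ν {x}).toReal / 2) • M x) ∧
      IsUnit ((1 : Matrix (Fin n) (Fin n) ℂ) - ((ν {x}).toReal / 2) • M x))
    (hcol : ∀ j : Fin n, IsBalancedSolution a b ν M (fun _ => 0) (fun x i => U x i j))
    (hUdet : ∀ x ∈ Ioo a b, (U x).det ≠ 0) {c d : ℝ} (hc : a < c) (hd : d < b) (i j : Fin n) :
    (∃ C, ∀ t ∈ Icc c d, ‖(matLeftLim U t)⁻¹ i j‖ ≤ C) ∧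
    (∃ C, ∀ t ∈ Icc c d, ‖(matRightLim U t)⁻¹ i j‖ ≤ C) := by
  have hl : ∀ t ∈ Ioo a b,
      Tendsto (fun t => (U t)⁻¹ i j) (𝓝[<] t) (𝓝 ((matLeftLim U t)⁻¹ i j)) := fun t ht =>
    tendsto_matrix_inv (fun i j => (fundamental_tendsto hcol ht i j).1)
      (fundamental_isUnit hM hjump hcol hUdet ht).2.1 i j
  have hr : ∀ t ∈ Ioo a b,
      Tendsto (fun t => (U t)⁻¹ i j) (𝓝[>] t) (𝓝 ((matRightLim U t)⁻¹ i j)) := fun t ht =>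
    tendsto_matrix_inv (fun i j => (fundamental_tendsto hcol ht i j).2)
      (fundamental_isUnit hM hjump hcol hUdet ht).2.2 i j
  have hb : ∀ c d : ℝ, a < c → d < b → ∃ C, ∀ t ∈ Icc c d, ‖(U t)⁻¹ i j‖ ≤ C := by
    intro c d hc hd
    exact bounded_of_oneSided_limits fun x hx =>
      ⟨_, _, hl x (Icc_subset_Ioo hc hd hx), hr x (Icc_subset_Ioo hc hd hx)⟩
  exact ⟨bounded_of_tendsto (fun t => 𝓝[<] t) (fun t => nhdsWithin_le_nhds) hl hb hc hd,
    bounded_of_tendsto (fun t => 𝓝[>] t) (fun t => nhdsWithin_le_nhds) hr hb hc hd⟩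

end Fundamental

/-! ### Variation of constants -/

section Core

variable {n : ℕ} {a b : ℝ} {ν : Measure ℝ} {M U : ℝ → Matrix (Fin n) (Fin n) ℂ}

open Set Topology

/-- With `D = Δ_r / 2`, the entries of `H⁻¹ = ((I - D) U⁺)⁻¹` and of `(I - D)⁻¹` are measurable and
bounded on compact intervals. Boundedness comes from `(I - D)⁻¹ = U (U⁻)⁻¹`. -/
lemma coefficient_regularity
    (hν : ∀ c d : ℝ, a < c → d < b → ν (Icc c d) < ⊤)
    (hM : ∀ (i j : Fin n) (c d : ℝ), a < c → d < b →
      IntegrableOn (fun t => M t i j) (Icc c d) ν)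
    (hjump : ∀ x ∈ Ioo a b,
      IsUnit ((1 : Matrix (Fin n) (Fin n) ℂ) + ((ν {x}).toReal / 2) • M x) ∧
      IsUnit ((1 : Matrix (Fin n) (Fin n) ℂ) - ((ν {x}).toReal / 2) • M x))
    (hcol : ∀ j : Fin n, IsBalancedSolution a b ν M (fun _ => 0) (fun x i => U x i j))
    (hUdet : ∀ x ∈ Ioo a b, (U x).det ≠ 0) {c d : ℝ} (hc : a < c) (hd : d < b) (i j : Fin n) :
    (AEStronglyMeasurable (fun t => (1 - ((ν {t}).toReal / 2) • M t)⁻¹ i j)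
        (ν.restrict (Icc c d)) ∧
      ∃ C, ∀ t ∈ Icc c d, ‖(1 - ((ν {t}).toReal / 2) • M t)⁻¹ i j‖ ≤ C) ∧
    (AEStronglyMeasurable
        (fun t => ((1 - ((ν {t}).toReal / 2) • M t) * matRightLim U t)⁻¹ i j)
        (ν.restrict (Icc c d)) ∧
      ∃ C, ∀ t ∈ Icc c d,
        ‖((1 - ((ν {t}).toReal / 2) • M t) * matRightLim U t)⁻¹ i j‖ ≤ C) := by
  have hD : ∀ i j, AEStronglyMeasurable (fun t => (((ν {t}).toReal / 2) • M t) i j)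
      (ν.restrict (Icc c d)) := fun i j =>
    ((aestronglyMeasurable_atom measurableSet_Icc (hν c d hc hd)).div₀
      aestronglyMeasurable_const).smul (hM i j c d hc hd).aestronglyMeasurable
  have hm : ∀ i j, AEStronglyMeasurable (fun t => (1 - ((ν {t}).toReal / 2) • M t) i j)
      (ν.restrict (Icc c d)) := fun i j => aestronglyMeasurable_const.sub (hD i j)
  have hp : ∀ i j, AEStronglyMeasurable (fun t => (1 + ((ν {t}).toReal / 2) • M t) i j)
      (ν.restrict (Icc c d)) := fun i j => aestronglyMeasurable_const.add (hD i j)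
  have hUp : ∀ i j, AEStronglyMeasurable (fun t => matRightLim U t i j)
      (ν.restrict (Icc c d)) := fun i j => by
    refine (aestronglyMeasurable_matrix_mul hp
      (fun i j => (hcol j).aestronglyMeasurable hc hd i) i j).congr ?_
    filter_upwards [ae_restrict_mem measurableSet_Icc] with t ht
    rw [(fundamental_factor hM hcol (Icc_subset_Ioo hc hd ht)).2]
  have hE : ∀ t ∈ Icc c d,
      (1 - ((ν {t}).toReal / 2) • M t)⁻¹ = U t * (matLeftLim U t)⁻¹ := fun t ht => by
    have ht' := Icc_subset_Ioo hc hd ht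
    have h0 := (Matrix.isUnit_iff_isUnit_det _).1
      (fundamental_isUnit hM hjump hcol hUdet ht').1
    rw [← (fundamental_factor hM hcol ht').1, Matrix.mul_inv_rev, ← Matrix.mul_assoc,
      Matrix.mul_nonsing_inv _ h0, Matrix.one_mul]
  have hEb : ∀ i j, ∃ C, ∀ t ∈ Icc c d, ‖(1 - ((ν {t}).toReal / 2) • M t)⁻¹ i j‖ ≤ C := by
    intro i j
    obtain ⟨C, hC⟩ := bounded_sum_mul (fun k => (hcol k).bounded hc hd i)
      (fun k => (fundamental_inv_bounded hM hjump hcol hUdet hc hd k j).1)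
    refine ⟨C, fun t ht => ?_⟩
    rw [hE t ht, Matrix.mul_apply]
    exact hC t ht
  refine ⟨⟨aestronglyMeasurable_matrix_inv hm i j, hEb i j⟩,
    aestronglyMeasurable_matrix_inv (fun i j => aestronglyMeasurable_matrix_mul hm hUp i j) i j, ?_⟩
  obtain ⟨C, hC⟩ := bounded_sum_mul
    (fun k => (fundamental_inv_bounded hM hjump hcol hUdet hc hd i k).2) (fun k => hEb k j)
  refine ⟨C, fun t ht => ?_⟩
  rw [Matrix.mul_inv_rev, Matrix.mul_apply]
  exact hC t ht

/-- The product rule applied to `U⁻ V`, where `V' = q dν`. -/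
lemma fundamental_product
    (hν : ∀ c d : ℝ, a < c → d < b → ν (Icc c d) < ⊤)
    (hM : ∀ (i j : Fin n) (c d : ℝ), a < c → d < b →
      IntegrableOn (fun t => M t i j) (Icc c d) ν)
    (hcol : ∀ j : Fin n, IsBalancedSolution a b ν M (fun _ => 0) (fun x i => U x i j))
    {s t : ℝ} (hs : a < s) (hst : s ≤ t) (ht : t < b) {q V : ℝ → Fin n → ℂ}
    (hq : ∀ j, IntegrableOn (fun r => q r j) (Icc s t) ν)
    (hV : ∀ r ∈ Icc s t, ∀ j, V r j = V s j + ∫ y in Ico s r, q y j ∂ν) (i : Fin n) :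
    IntegrableOn (fun r => ((M r * U r).mulVec (V r) + (matRightLim U r).mulVec (q r)) i)
      (Ico s t) ν ∧
    (matLeftLim U t).mulVec (V t) i - (matLeftLim U s).mulVec (V s) i =
      ∫ r in Ico s t, ((M r * U r).mulVec (V r) + (matRightLim U r).mulVec (q r)) i ∂ν := by
  have h0 : ∀ c d : ℝ, a < c → d < b → IntegrableOn (fun _ : ℝ => (0 : Fin n → ℂ)) (Icc c d) ν :=
    fun c d _ _ => integrableOn_zero
  have hp : ∀ j c d, a < c → d < b →
      IntegrableOn (fun r => (M r * U r) i j) (Icc c d) ν := by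
    intro j c d hc hd
    have h := ((hcol j).integrableOn hM h0 hc hd).eval i
    simp only [add_zero] at h
    exact h
  have key : ∀ j, _ := fun j => product_rule ν hst
    ((measure_mono Ico_subset_Icc_self).trans_lt (hν s t hs ht))
    (p := fun r => (M r * U r) i j) (q := fun r => q r j) (f := fun r => matLeftLim U r i j)
    (fp := fun r => matRightLim U r i j) (h := fun r => V r j)
    ((hp j s t hs ht).mono_set Ico_subset_Icc_self) ((hq j).mono_set Ico_subset_Icc_self)
    (by
      intro r hr
      have hrb := hr.2.trans_lt ht
      have h1 := congrFun ((hcol j).2.2 s r hs hr.1 hrb) i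
      rw [eval_integral fun i => (((hcol j).integrableOn hM h0 hs hrb).mono_set
        Ico_subset_Icc_self).eval i] at h1
      simp only [add_zero, Pi.sub_apply, ← (hcol j).leftLim_apply (x := r)
        ⟨hs.trans_le hr.1, hrb⟩ i, ← (hcol j).leftLim_apply (x := s)
        ⟨hs, hst.trans_lt ht⟩ i] at h1
      exact sub_eq_iff_eq_add'.1 h1)
    (by
      intro r hr
      have hr' : r ∈ Ioo a b := ⟨hs.trans_le hr.1, hr.2.trans ht⟩
      have h1 := congrFun ((hcol j).jump hM h0 hr') i
      simp only [add_zero, Pi.sub_apply, ← (hcol j).leftLim_apply hr' i,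
        ← (hcol j).rightLim_apply hr' i] at h1
      rw [integral_singleton]
      exact sub_eq_iff_eq_add'.1 h1)
    (fun r hr => hV r hr j)
  have e : ∀ r, ((M r * U r).mulVec (V r) + (matRightLim U r).mulVec (q r)) i =
      ∑ j, ((M r * U r) i j * V r j + matRightLim U r i j * q r j) := fun r => by
    rw [Finset.sum_add_distrib]; rfl
  simp only [e]
  refine ⟨integrable_finsetSum _ fun j _ => (key j).1, ?_⟩
  rw [integral_finsetSum _ fun j _ => (key j).1]
  simp only [Matrix.mulVec, dotProduct, ← Finset.sum_sub_distrib]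
  exact Finset.sum_congr rfl fun j _ => (key j).2

/-- Variation of constants with an arbitrary initial value: `v0` is the coordinate vector of
`u⁻(x0)` in the basis `U⁻(x0)`. -/
lemma variation_of_constants
    (hν : ∀ c d : ℝ, a < c → d < b → ν (Icc c d) < ⊤)
    (hM : ∀ (i j : Fin n) (c d : ℝ), a < c → d < b →
      IntegrableOn (fun t => M t i j) (Icc c d) ν)
    {g : ℝ → Fin n → ℂ} (hg : ∀ c d : ℝ, a < c → d < b → IntegrableOn g (Icc c d) ν)
    (hjump : ∀ x ∈ Ioo a b,
      IsUnit ((1 : Matrix (Fin n) (Fin n) ℂ) + ((ν {x}).toReal / 2) • M x) ∧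
      IsUnit ((1 : Matrix (Fin n) (Fin n) ℂ) - ((ν {x}).toReal / 2) • M x))
    (hcol : ∀ j : Fin n, IsBalancedSolution a b ν M (fun _ => 0) (fun x i => U x i j))
    (hUdet : ∀ x ∈ Ioo a b, (U x).det ≠ 0) {x0 x : ℝ} (hx0 : a < x0) (hx0x : x0 ≤ x) (hx : x < b)
    {u : ℝ → Fin n → ℂ} (hu : IsBalancedSolution a b ν M g u) {v0 : Fin n → ℂ}
    (hv0 : leftLim u x0 = (matLeftLim U x0).mulVec v0) :
    leftLim u x = (matLeftLim U x).mulVec (v0 + ∫ t in Ico x0 x,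
      ((1 - ((ν {t}).toReal / 2) • M t) * matRightLim U t)⁻¹.mulVec (g t) ∂ν) := by
  have reg := fun i j => coefficient_regularity hν hM hjump hcol hUdet hx0 hx i j
  set q : ℝ → Fin n → ℂ := fun t =>
    ((1 - ((ν {t}).toReal / 2) • M t) * matRightLim U t)⁻¹.mulVec (g t) with hq
  have hqi : ∀ j, IntegrableOn (fun t => q t j) (Icc x0 x) ν := by
    intro j
    simp only [hq, Matrix.mulVec, dotProduct]
    refine integrable_finsetSum _ fun k _ => ?_
    obtain ⟨C, hC⟩ := (reg j k).2.2
    refine Integrable.bdd_mul (c := C) ((hg x0 x hx0 hx).eval k) (reg j k).2.1 ?_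
    filter_upwards [ae_restrict_mem measurableSet_Icc] with t ht using hC t ht
  set V : ℝ → Fin n → ℂ := fun t => v0 + ∫ r in Ico x0 t, q r ∂ν with hVdef
  have hVj : ∀ t ∈ Icc x0 x, ∀ j, V t j = v0 j + ∫ r in Ico x0 t, q r j ∂ν := by
    intro t ht j
    simp only [hVdef, Pi.add_apply]
    rw [eval_integral fun j => (hqi j).mono_set fun r hr => ⟨hr.1, hr.2.le.trans ht.2⟩]
  have hVst : ∀ s t, x0 ≤ s → t ≤ x → ∀ r ∈ Icc s t, ∀ j,
      V r j = V s j + ∫ y in Ico s r, q y j ∂ν := by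
    intro s t hs ht r hr j
    have hrx := hr.2.trans ht
    rw [hVj r ⟨hs.trans hr.1, hrx⟩, hVj s ⟨hs, hr.1.trans hrx⟩, add_assoc,
      ← setIntegral_union (Ico_disjoint_Ico_same) measurableSet_Ico
        ((hqi j).mono_set fun y hy => ⟨hy.1, hy.2.le.trans (hr.1.trans hrx)⟩)
        ((hqi j).mono_set fun y hy => ⟨hs.trans hy.1, hy.2.le.trans hrx⟩),
      Ico_union_Ico_eq_Ico hs hr.1]
  set z : ℝ → Fin n → ℂ := fun t => leftLim u t - (matLeftLim U t).mulVec (V t) with hz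
  suffices h : z x = 0 from sub_eq_zero.1 h
  refine eq_zero_of_linear_equation (ν := ν) (c := x0)
    (K := fun t => M t * (1 - ((ν {t}).toReal / 2) • M t)⁻¹) hx0x ?_ ?_ ?_ ?_
  · intro i j
    exact integrableOn_mulVec (v := fun t k => (1 - ((ν {t}).toReal / 2) • M t)⁻¹ k j)
      measurableSet_Icc (fun i j => hM i j x0 x hx0 hx) (fun k => (reg k j).1.1)
      (fun k => (reg k j).1.2) i
  · simp [hz, hVdef, hv0]
  · intro i
    obtain ⟨C1, hC1⟩ := bounded_of_tendsto (fun t => 𝓝[<] t) (fun t => nhdsWithin_le_nhds)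
      (fun t ht => hu.tendsto_left ht i) (fun c d hc hd => hu.bounded hc hd i) hx0 hx
    obtain ⟨C2, hC2⟩ := bounded_sum_mul (s := Icc x0 x) (p := fun t j => matLeftLim U t i j) (q := V)
      (fun j => bounded_of_tendsto (fun t => 𝓝[<] t) (fun t => nhdsWithin_le_nhds)
        (fun t ht => (fundamental_tendsto hcol ht i j).1)
        (fun c d hc hd => (hcol j).bounded hc hd i) hx0 hx)
      (fun j => ⟨‖v0 j‖ + ∫ r in Icc x0 x, ‖q r j‖ ∂ν, fun t ht => by
        rw [hVj t ht]
        refine (norm_add_le _ _).trans (add_le_add_right ?_ _)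
        refine (norm_integral_le_integral_norm _).trans ?_
        exact setIntegral_mono_set (hqi j).norm (Eventually.of_forall fun _ => norm_nonneg _)
          (LE.le.eventuallyLE fun r hr => ⟨hr.1, hr.2.le.trans ht.2⟩)⟩)
    exact ⟨C1 + C2, fun t ht => (norm_sub_le _ _).trans (add_le_add (hC1 t ht) (hC2 t ht))⟩
  · intro s t hs hst ht i
    have has := hx0.trans_le hs
    have htb := ht.trans_lt hx
    obtain ⟨i1, e1⟩ := fundamental_product hν hM hcol has hst htb
      (fun j => (hqi j).mono_set (Icc_subset_Icc hs ht)) (hVst s t hs ht) i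
    have i2 := fun i => ((hu.integrableOn hM hg has htb).mono_set Ico_subset_Icc_self).eval i
    have e2 := congrFun (hu.2.2 s t has hst htb) i
    rw [eval_integral i2, Pi.sub_apply] at e2
    have e3 : z t i - z s i = ∫ r in Ico s t, (((M r).mulVec (u r) + g r) i -
        ((M r * U r).mulVec (V r) + (matRightLim U r).mulVec (q r)) i) ∂ν := by
      rw [integral_sub (i2 i) i1, ← e1, ← e2]
      simp only [hz, Pi.sub_apply]
      ring
    rw [e3]
    refine setIntegral_congr_fun measurableSet_Ico fun r hr => ?_
    have hr' : r ∈ Ioo a b := ⟨has.trans_le hr.1, hr.2.trans htb⟩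
    exact congrFun (pointwise_algebra rfl (hjump r hr').2
      (fundamental_isUnit hM hjump hcol hUdet hr').2.2
      (fundamental_factor hM hcol hr').1 (hu.factor hM hg hr').1) i

end Core

/-- **Variation of constants.**  Assume `I ± Δ_r(x)/2` invertible on `(a,b)`, let `U` be a
fundamental matrix for `u' = ru` (balanced, columns balanced solutions, determinant nowhere
zero) and set `H(x) = (I − Δ_r(x)/2)·U⁺(x)`.  If `u` is the balanced solution of
`u' = ru + g dν` with `u(x0) = 0`, then each `H(t)` is invertible and for `x ≥ x0` one has
`u⁻(x) = U⁻(x)·(−u0⁻ + ∫_{[x0,x)} H(t)⁻¹ g(t) dν(t))` with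
`u0⁻ = (1/2)·U⁻(x0)⁻¹·ν({x0})·g(x0)`. -/
theorem stmt_5 (a b : ℝ) (n : ℕ) (ν : Measure ℝ)
    (hν : ∀ c d : ℝ, a < c → d < b → ν (Set.Icc c d) < ⊤)
    (M : ℝ → Matrix (Fin n) (Fin n) ℂ)
    (hM : ∀ (i j : Fin n) (c d : ℝ), a < c → d < b →
      IntegrableOn (fun t => M t i j) (Set.Icc c d) ν)
    (g : ℝ → Fin n → ℂ)
    (hg : ∀ c d : ℝ, a < c → d < b → IntegrableOn g (Set.Icc c d) ν)
    (hjump : ∀ x ∈ Set.Ioo a b,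
      IsUnit ((1 : Matrix (Fin n) (Fin n) ℂ) + ((ν {x}).toReal / 2) • M x) ∧
      IsUnit ((1 : Matrix (Fin n) (Fin n) ℂ) - ((ν {x}).toReal / 2) • M x))
    (U : ℝ → Matrix (Fin n) (Fin n) ℂ)
    (hcol : ∀ j : Fin n,
      IsBalancedSolution a b ν M (fun _ => 0) (fun x i => U x i j))
    (hUdet : ∀ x ∈ Set.Ioo a b, (U x).det ≠ 0)
    (H : ℝ → Matrix (Fin n) (Fin n) ℂ)
    (hH : ∀ x, H x =
      ((1 : Matrix (Fin n) (Fin n) ℂ) - ((ν {x}).toReal / 2) • M x) * matRightLim U x)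
    (x0 : ℝ) (hx0 : x0 ∈ Set.Ioo a b)
    (u : ℝ → Fin n → ℂ) (hu : IsBalancedSolution a b ν M g u) (hu0 : u x0 = 0)
    (u0m : Fin n → ℂ)
    (hu0m : u0m = (2⁻¹ : ℂ) • (matLeftLim U x0)⁻¹.mulVec ((ν {x0}).toReal • g x0)) :
    (∀ t ∈ Set.Ioo a b, IsUnit (H t)) ∧
    ∀ x ∈ Set.Ioo a b, x0 ≤ x →
      leftLim u x = (matLeftLim U x).mulVec
        (-u0m + ∫ t in Set.Ico x0 x, (H t)⁻¹.mulVec (g t) ∂ν) := by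
  have hfund := fun t ht => fundamental_isUnit (x := t) hM hjump hcol hUdet ht
  refine ⟨fun t ht => ?_, fun x hx hxx => ?_⟩
  · rw [hH]
    exact (hjump t ht).2.mul (hfund t ht).2.2
  · have hdet := (Matrix.isUnit_iff_isUnit_det _).1 (hfund x0 hx0).2.1
    simp only [hH]
    refine variation_of_constants hν hM hg hjump hcol hUdet hx0.1 hxx hx.2 hu ?_
    -- With `u x0 = 0` this reads `0 = u⁻(x0) + (ν {x0} / 2) g(x0)`.
    have h := (hu.factor hM hg hx0).1
    rw [hu0, Matrix.mulVec_zero] at h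
    rw [hu0m, Matrix.mulVec_neg, Matrix.mulVec_smul, Matrix.mulVec_mulVec,
      Matrix.mul_nonsing_inv _ hdet, Matrix.one_mulVec, eq_neg_of_add_eq_zero_left h.symm]
    congr 1
    ext i
    simp only [Pi.smul_apply, Complex.real_smul, smul_eq_mul]
    push_cast
    ring
end
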